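/- arXiv:2509.00302 — 2 statements merged into one kernel-verified Lean document; each statement's English description precedes it below -/
import Mathlib

section
/- Let s be a positive integer, q = 2^{2s}, and let h ≥ 3 be a positive divisor of q + 2^{s+1} + 1. Then for all integers t, m with 1 ≤ t < m ≤ (q + 2^{s+1} + 1 − h)/(2h) − 1, there exists an optimal (2h−2, 3)-LRC over F_q with parameters [2hm, (2h−2)t + 1, 2h(m−t)]_q, and there exists an optimal (2, 2h−1)-LRC over F_q with parameters [2hm, 2t + 1, 2h(m−t)]_q. -/
/-- The Hamming weight of a vector: the number of nonzero coordinates. -/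
def hammingWt {F : Type*} [Zero F] [DecidableEq F] {n : ℕ} (v : Fin n → F) : ℕ :=
  (Finset.univ.filter (fun i => v i ≠ 0)).card

/-- The minimum distance of the linear code `C` is at least `d`. -/
def MinDistGe {F : Type*} [Field F] [DecidableEq F] {n : ℕ}
    (C : Submodule F (Fin n → F)) (d : ℕ) : Prop :=
  ∀ c ∈ C, c ≠ 0 → d ≤ hammingWt c

/-- The minimum distance of the linear code `C` is exactly `d`. -/
def MinDistEq {F : Type*} [Field F] [DecidableEq F] {n : ℕ}
    (C : Submodule F (Fin n → F)) (d : ℕ) : Prop :=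
  MinDistGe C d ∧ ∃ c ∈ C, c ≠ 0 ∧ hammingWt c = d

/-- `C` is an `(r, δ)`-locally repairable code: every coordinate `i` has a repair
group `R` containing `i`, of size at most `r + δ - 1`, such that the punctured code
`C|_R` has minimum distance at least `δ` (i.e. every codeword whose restriction to
`R` is nonzero has at least `δ` nonzero coordinates inside `R`). -/
def IsLRC {F : Type*} [Field F] [DecidableEq F] {n : ℕ}
    (C : Submodule F (Fin n → F)) (r δ : ℕ) : Prop :=
  ∀ i : Fin n, ∃ R : Finset (Fin n), i ∈ R ∧ R.card ≤ r + δ - 1 ∧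
    ∀ c ∈ C, (∃ j ∈ R, c j ≠ 0) → δ ≤ (R.filter (fun j => c j ≠ 0)).card

/-- The parameters `[n, k, d]` attain the Singleton-type bound for `(r, δ)`-LRCs:
`d = n - k + 1 - (⌈k/r⌉ - 1)(δ - 1)`  (here `⌈k/r⌉ = (k + r - 1)/r`). -/
def SingletonOptimal (n k d r δ : ℕ) : Prop :=
  (d : ℤ) = (n : ℤ) - (k : ℤ) + 1 - ((((k + r - 1) / r : ℕ) : ℤ) - 1) * ((δ : ℤ) - 1)

/-- There exists an optimal `(r, δ)`-LRC over `F` with parameters `[n, k, d]`. -/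
def ExistsOptimalLRC (F : Type*) [Field F] [DecidableEq F] (n k d r δ : ℕ) : Prop :=
  ∃ C : Submodule F (Fin n → F),
    Module.finrank F C = k ∧ MinDistEq C d ∧ IsLRC C r δ ∧ SingletonOptimal n k d r δ

/-!
For a suitable `c`, the curve `y² + y = x³ + c` over `F` has `q + 2 ^ (s + 1) + 1` points: the count
is `q + 1 + χ(c) ∑ χ(x³)` for the quadratic additive character `χ`, and the character sum has square
`4q`. This number is odd, and the group of points has a subgroup `H` of order `h`. The even
`H`-invariant function `ξ(P) = ∑ a ∈ H, x(P + a)` has degree `2h`, and its fibres outside `H` are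
the sets `±P + H`, of size `2h`.

Fix `Q ∉ H` and let `V` be the space of functions in `L(2h · ∞)` vanishing on a subset `B` of
`±Q + H`. Write `ξ - ξ(Q) = w / v` with polynomials `w` and `v` in `x`; then `w ∈ V`. The codewords
are the values on `m` fibres of `∑ i < t, (w / v)ⁱ gᵢ / v + c` with `gᵢ ∈ V`. On one fibre such a
function agrees up to nonzero factors with an element of `V`, which by Abel's theorem has fewer than
`r = 2h - |B|` zeros there provided that no `r` points of `±P + H` sum with `B` to zero. The
codewords supported on `m - t` fibres, where `c + ∑ cᵢ (w / v)ⁱ⁺¹` vanishes on the other `t`, show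
that the distance is `2h(m - t)`. The two families come from `B = {Q, Q + a}` with `0 ≠ a ∈ H` and
from the complement of this pair in `±Q + H`; in both cases the sum condition holds because doubling
is injective modulo `H`.
-/

namespace EllipticLRC

open WeierstrassCurve WeierstrassCurve.Affine Polynomial

/-! ### Codes from functions on a union of fibres -/

section EvaluationCode

variable {F R : Type*} [Field F] [CommRing R] [Algebra F R] {b m r t : ℕ} {V : Submodule F R}

theorem eq_zero_of_sum_pow_smul_eq_zero {M : Type*} [AddCommGroup M] [Module F M] {n : ℕ}
    {κ : Fin n → F} (hκ : Function.Injective κ) {x : Fin n → M}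
    (h : ∀ j, ∑ i : Fin n, κ j ^ (i : ℕ) • x i = 0) : x = 0 := by
  funext i
  rw [Pi.zero_apply, ← Module.forall_dual_apply_eq_zero_iff F]
  intro ℓ
  refine congrFun (Matrix.eq_zero_of_forall_index_sum_pow_mul_eq_zero (v := ℓ ∘ x) hκ fun j ↦ ?_) i
  simpa only [Function.comp_apply, map_sum, map_smul, smul_eq_mul, map_zero] using
    congrArg ℓ (h j)

/-- The function `∑ i < t, wⁱ vᵗ⁻¹⁻ⁱ gᵢ + c vᵗ` attached to the message `(g, c)`. It is the global
section `∑ i < t, (w / v)ⁱ gᵢ / v + c` with its denominator `vᵗ` cleared. -/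
noncomputable def encode (w : V) (v : R) (t : ℕ) : ((Fin t → V) × F) →ₗ[F] R where
  toFun x := ∑ i : Fin t, (w : R) ^ (i : ℕ) * v ^ (t - 1 - i) * (x.1 i : R) + x.2 • v ^ t
  map_add' x y := by
    simp only [Prod.fst_add, Prod.snd_add, Pi.add_apply, Submodule.coe_add, mul_add, add_smul,
      Finset.sum_add_distrib]
    abel
  map_smul' c x := by
    simp only [Prod.smul_fst, Prod.smul_snd, Pi.smul_apply, Submodule.coe_smul, smul_add,
      RingHom.id_apply, Finset.smul_sum, mul_smul_comm, smul_assoc]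

/-- The element of `V` which has the same zeros as the function attached to a message on the fibre
`w = κ v`. -/
def localFun (w : V) (κ : F) (x : (Fin t → V) × F) : V :=
  x.2 • w + ∑ i : Fin t, κ ^ ((i : ℕ) + 1) • x.1 i

theorem mul_eval_encode (φ : R →ₐ[F] F) {w : V} {v : R} {κ : F} (hwv : φ w = κ * φ v)
    (ht : 1 ≤ t) (x : (Fin t → V) × F) :
    κ * φ (encode w v t x) = φ v ^ (t - 1) * φ (localFun w κ x) := by
  have hconst : φ v ^ t = φ v ^ (t - 1) * φ v := by rw [← pow_succ, Nat.sub_add_cancel ht]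
  have hpow (i : Fin t) : φ v ^ (t - 1) = φ v ^ (i : ℕ) * φ v ^ (t - 1 - i) := by
    rw [← pow_add, Nat.add_sub_cancel' (by omega)]
  simp only [encode, localFun, LinearMap.coe_mk, AddHom.coe_mk, Submodule.coe_add,
    Submodule.coe_smul, Submodule.coe_sum, map_add, map_sum, map_mul, map_pow, map_smul, hwv,
    smul_eq_mul, mul_add, Finset.mul_sum]
  rw [add_comm, hconst]
  congr 1
  · ring
  · refine Finset.sum_congr rfl fun i _ ↦ ?_
    rw [hpow i]
    ring

theorem eval_encode_eq_zero_iff (φ : R →ₐ[F] F) {w : V} {v : R} {κ : F} (hwv : φ w = κ * φ v)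
    (hκ : κ ≠ 0) (hv : φ v ≠ 0) (ht : 1 ≤ t) (x : (Fin t → V) × F) :
    φ (encode w v t x) = 0 ↔ φ (localFun w κ x) = 0 := by
  have := mul_eval_encode φ hwv ht x
  rw [← mul_right_inj' hκ, mul_zero, this, mul_eq_zero, or_iff_right (pow_ne_zero _ hv)]

theorem eq_zero_of_localFun_eq_zero {w : V} (hw : w ≠ 0) {κ : Fin m → F}
    (hκ : Function.Injective κ) (htm : t < m) {x : (Fin t → V) × F}
    (h : ∀ j, localFun w (κ j) x = 0) : x = 0 := by
  have hcoeff : (Fin.cons (x.2 • w) x.1 : Fin (t + 1) → V) = 0 := by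
    refine eq_zero_of_sum_pow_smul_eq_zero (hκ.comp (Fin.castLE_injective htm)) fun j ↦ ?_
    simpa [Fin.sum_univ_succ, localFun] using h (Fin.castLE htm j)
  refine Prod.ext (funext fun i ↦ congrFun hcoeff i.succ) ?_
  exact (smul_eq_zero.1 (congrFun hcoeff 0)).resolve_right hw

theorem exists_localFun_eq_eval_smul (w : V) {p : F[X]} (hp : p.natDegree ≤ t) :
    ∃ x : (Fin t → V) × F, ∀ κ, localFun w κ x = p.eval κ • w := by
  refine ⟨(fun i ↦ p.coeff (i + 1) • w, p.coeff 0), fun κ ↦ ?_⟩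
  rw [eval_eq_sum_range' (Nat.lt_succ_of_le hp), Finset.sum_range_succ', localFun, add_smul,
    Finset.sum_smul, Finset.sum_range, add_comm, pow_zero, mul_one]
  simp only [smul_smul, mul_comm]

/-- The vector of values of a function at the points of a `b × m` grid. -/
noncomputable def evalGrid (φ : Fin b × Fin m → R →ₐ[F] F) : R →ₗ[F] (Fin (b * m) → F) :=
  LinearMap.pi fun k ↦ (φ (finProdFinEquiv.symm k)).toLinearMap

theorem evalGrid_apply (φ : Fin b × Fin m → R →ₐ[F] F) (f : R) (x : Fin b × Fin m) :
    evalGrid φ f (finProdFinEquiv x) = φ x f := by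
  simp only [evalGrid, LinearMap.pi_apply, Equiv.symm_apply_apply, AlgHom.toLinearMap_apply]

variable [DecidableEq F]

theorem hammingWt_evalGrid (φ : Fin b × Fin m → R →ₐ[F] F) (f : R) :
    hammingWt (evalGrid φ f) = (Finset.univ.filter fun x ↦ φ x f ≠ 0).card := by
  rw [hammingWt, ← Finset.card_map finProdFinEquiv.toEmbedding]
  congr 1
  ext k
  obtain ⟨x, rfl⟩ := finProdFinEquiv.surjective k
  simp [evalGrid_apply]

theorem card_sub_le_card_filter_ne_zero {ι : Type*} [Fintype ι] (f : ι → F) {n : ℕ}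
    (h : (Finset.univ.filter fun i ↦ f i = 0).card ≤ n) :
    Fintype.card ι - n ≤ (Finset.univ.filter fun i ↦ f i ≠ 0).card := by
  have := Finset.card_filter_add_card_filter_not (s := Finset.univ) fun i ↦ f i = 0
  rw [Finset.card_univ] at this
  simp only [ne_eq]
  omega

theorem isLRC_of_columns {C : Submodule F (Fin (b * m) → F)} {δ : ℕ} (hb : b ≤ r + δ - 1)
    (hC : ∀ c ∈ C, ∀ j, (∃ i, c (finProdFinEquiv (i, j)) ≠ 0) →
      δ ≤ (Finset.univ.filter fun i ↦ c (finProdFinEquiv (i, j)) ≠ 0).card) : IsLRC C r δ := by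
  intro k
  obtain ⟨⟨i, j⟩, rfl⟩ := finProdFinEquiv.surjective k
  let column : Fin b ↪ Fin (b * m) :=
    (Function.Embedding.sectL (Fin b) j).trans finProdFinEquiv.toEmbedding
  refine ⟨Finset.univ.map column, Finset.mem_map_of_mem column (Finset.mem_univ i), ?_, ?_⟩
  · rwa [Finset.card_map, Finset.card_univ, Fintype.card_fin]
  · rintro c hc ⟨k, hk, hne⟩
    obtain ⟨i', -, rfl⟩ := Finset.mem_map.1 hk
    rw [Finset.filter_map, Finset.card_map]
    exact hC c hc j ⟨i', hne⟩

theorem singletonOptimal_grid (hr : 1 ≤ r) (hrb : r ≤ b) (htm : t ≤ m) :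
    SingletonOptimal (b * m) (r * t + 1) (b * (m - t)) r (b - r + 1) := by
  have hceil : (r * t + 1 + r - 1) / r = t + 1 := by
    rw [show r * t + 1 + r - 1 = r * (t + 1) by rw [mul_add]; omega, Nat.mul_div_cancel_left _ hr]
  rw [SingletonOptimal, hceil]
  push_cast [htm, hrb]
  ring

variable {φ : Fin b × Fin m → R →ₐ[F] F} {w : V} {v : R} {κ : Fin m → F}

theorem evalGrid_comp_encode_injective (hb : 1 ≤ b) (hκ : Function.Injective κ)
    (hκ₀ : ∀ j, κ j ≠ 0) (hwv : ∀ y, φ y w = κ y.2 * φ y v) (hv : ∀ y, φ y v ≠ 0)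
    (ht : 1 ≤ t) (htm : t < m)
    (hloc : ∀ j, ∀ G ∈ V, G ≠ 0 → (Finset.univ.filter fun i ↦ φ (i, j) G = 0).card < b) :
    Function.Injective (evalGrid φ ∘ₗ encode w v t) := by
  have hw : w ≠ 0 := by
    rintro rfl
    have := hwv (⟨0, hb⟩, ⟨0, by omega⟩)
    rw [Submodule.coe_zero, map_zero] at this
    exact mul_ne_zero (hκ₀ _) (hv _) this.symm
  rw [injective_iff_map_eq_zero]
  refine fun x hx ↦ eq_zero_of_localFun_eq_zero hw hκ htm fun j ↦ ?_
  by_contra hne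
  refine (hloc j _ (localFun w (κ j) x).2 (by simpa using hne)).ne ?_
  rw [Finset.filter_true_of_mem fun i _ ↦ ?_, Finset.card_univ, Fintype.card_fin]
  rw [← eval_encode_eq_zero_iff (φ (i, j)) (hwv _) (hκ₀ j) (hv _) ht, ← evalGrid_apply φ]
  exact congrFun hx _

theorem exists_hammingWt_evalGrid_encode_eq (hκ : Function.Injective κ) (hκ₀ : ∀ j, κ j ≠ 0)
    (hwv : ∀ y, φ y w = κ y.2 * φ y v) (hv : ∀ y, φ y v ≠ 0) (ht : 1 ≤ t) (htm : t ≤ m) :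
    ∃ x, hammingWt (evalGrid φ (encode w v t x)) = b * (m - t) := by
  set J : Finset (Fin m) := Finset.univ.map (Fin.castLEEmb htm)
  have hJ : J.card = t := by rw [Finset.card_map, Finset.card_univ, Fintype.card_fin]
  set p : F[X] := ∏ j ∈ J, (X - C (κ j))
  have hroot (j : Fin m) : p.eval (κ j) = 0 ↔ j ∈ J := by
    simp only [p, eval_prod, eval_sub, eval_X, eval_C, Finset.prod_eq_zero_iff, sub_eq_zero,
      hκ.eq_iff, exists_eq_right']
  obtain ⟨x, hx⟩ := exists_localFun_eq_eval_smul (t := t) w (p := p)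
    (by rw [natDegree_finsetProd_X_sub_C_eq_card, hJ])
  have hzero (y : Fin b × Fin m) : φ y (encode w v t x) = 0 ↔ y.2 ∈ J := by
    rw [eval_encode_eq_zero_iff (φ y) (hwv y) (hκ₀ _) (hv y) ht, hx, Submodule.coe_smul, map_smul,
      smul_eq_mul, hwv, mul_eq_zero,
      or_iff_left (mul_ne_zero (hκ₀ _) (hv y)), hroot]
  have hsupport : (Finset.univ.filter fun y ↦ φ y (encode w v t x) ≠ 0) =
      (Finset.univ : Finset (Fin b)) ×ˢ Jᶜ := by
    ext y
    simp [hzero]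
  refine ⟨x, ?_⟩
  rw [hammingWt_evalGrid, hsupport, Finset.card_product, Finset.card_compl, hJ, Finset.card_univ,
    Fintype.card_fin, Fintype.card_fin]

theorem minDistEq_range_evalGrid_comp_encode (hb : 1 ≤ b) (hκ : Function.Injective κ)
    (hκ₀ : ∀ j, κ j ≠ 0) (hwv : ∀ y, φ y w = κ y.2 * φ y v) (hv : ∀ y, φ y v ≠ 0)
    (ht : 1 ≤ t) (htm : t < m)
    (hglob : ∀ x, encode w v t x ≠ 0 →
      (Finset.univ.filter fun y ↦ φ y (encode w v t x) = 0).card ≤ b * t) :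
    MinDistEq (LinearMap.range (evalGrid φ ∘ₗ encode w v t)) (b * (m - t)) := by
  constructor
  · rintro _ ⟨x, rfl⟩ hx
    rw [LinearMap.comp_apply] at hx ⊢
    have hx' : encode w v t x ≠ 0 := fun h ↦ hx (by rw [h, map_zero])
    have := card_sub_le_card_filter_ne_zero (fun y ↦ φ y (encode w v t x)) (hglob x hx')
    rwa [Fintype.card_prod, Fintype.card_fin, Fintype.card_fin, ← Nat.mul_sub,
      ← hammingWt_evalGrid] at this
  · obtain ⟨x, hx⟩ := exists_hammingWt_evalGrid_encode_eq (t := t) hκ hκ₀ hwv hv ht htm.le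
    refine ⟨_, ⟨x, rfl⟩, fun h₀ ↦ ?_, hx⟩
    rw [LinearMap.comp_apply] at h₀
    have : b * (m - t) = 0 := by rw [← hx, h₀]; simp [hammingWt]
    exact (Nat.mul_pos hb (Nat.sub_pos_of_lt htm)).ne' this

theorem isLRC_range_evalGrid_comp_encode (hrb : r ≤ b) (hκ₀ : ∀ j, κ j ≠ 0)
    (hwv : ∀ y, φ y w = κ y.2 * φ y v) (hv : ∀ y, φ y v ≠ 0) (ht : 1 ≤ t)
    (hloc : ∀ j, ∀ G ∈ V, G ≠ 0 → (Finset.univ.filter fun i ↦ φ (i, j) G = 0).card < r) :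
    IsLRC (LinearMap.range (evalGrid φ ∘ₗ encode w v t)) r (b - r + 1) := by
  refine isLRC_of_columns (by omega) ?_
  rintro _ ⟨x, rfl⟩ j ⟨i₀, hi₀⟩
  have hzero (i : Fin b) := eval_encode_eq_zero_iff (φ (i, j)) (hwv _) (hκ₀ j) (hv _) ht x
  simp only [LinearMap.comp_apply, evalGrid_apply, ne_eq, hzero] at hi₀ ⊢
  have hlt := hloc j _ (localFun w (κ j) x).2 fun h ↦ hi₀ (by rw [h, map_zero])
  have := card_sub_le_card_filter_ne_zero (fun i ↦ φ (i, j) (localFun w (κ j) x : R))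
    (Nat.le_sub_one_of_lt hlt)
  rw [Fintype.card_fin] at this
  simp only [ne_eq] at this
  omega

theorem existsOptimalLRC_of_evalGrid [Module.Finite F V] (hV : Module.finrank F V = r)
    (hr : 1 ≤ r) (hrb : r ≤ b) (hκ : Function.Injective κ) (hκ₀ : ∀ j, κ j ≠ 0)
    (hwv : ∀ y, φ y w = κ y.2 * φ y v) (hv : ∀ y, φ y v ≠ 0) (ht : 1 ≤ t) (htm : t < m)
    (hloc : ∀ j, ∀ G ∈ V, G ≠ 0 → (Finset.univ.filter fun i ↦ φ (i, j) G = 0).card < r)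
    (hglob : ∀ x, encode w v t x ≠ 0 →
      (Finset.univ.filter fun y ↦ φ y (encode w v t x) = 0).card ≤ b * t) :
    ExistsOptimalLRC F (b * m) (r * t + 1) (b * (m - t)) r (b - r + 1) := by
  have hb : 1 ≤ b := hr.trans hrb
  have hinj := evalGrid_comp_encode_injective hb hκ hκ₀ hwv hv ht htm
    fun j G hG hG₀ ↦ (hloc j G hG hG₀).trans_le hrb
  refine ⟨LinearMap.range (evalGrid φ ∘ₗ encode w v t), ?_,
    minDistEq_range_evalGrid_comp_encode hb hκ hκ₀ hwv hv ht htm hglob,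
    isLRC_range_evalGrid_comp_encode hrb hκ₀ hwv hv ht hloc, singletonOptimal_grid hr hrb htm.le⟩
  rw [LinearMap.finrank_range_of_inj hinj, Module.finrank_prod, Module.finrank_pi_fintype,
    Finset.sum_const, Finset.card_univ, Fintype.card_fin, hV, Module.finrank_self, smul_eq_mul,
    mul_comm]

end EvaluationCode

/-! ### Signed cosets in groups of odd order -/

section SignedCoset

variable {G : Type*} [AddCommGroup G]

theorem card_preimage_quotientMk (H : AddSubgroup G) (t : Set (G ⧸ H)) :
    Nat.card ((QuotientAddGroup.mk : G → G ⧸ H) ⁻¹' t) = Nat.card H * Nat.card t := by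
  rw [← Nat.card_prod, Nat.card_congr (QuotientAddGroup.preimageMkEquivAddSubgroupProdSet H t)]

theorem exists_addSubgroup_natCard_eq_of_dvd [Finite G] {n : ℕ} (hn : n ∣ Nat.card G) :
    ∃ H : AddSubgroup G, Nat.card H = n := by
  induction n using Nat.recOnMul generalizing G with
  | zero => exact absurd (zero_dvd_iff.1 hn) Nat.card_pos.ne'
  | one => exact ⟨⊥, AddSubgroup.card_bot⟩
  | prime p hp =>
    have := Fact.mk hp
    obtain ⟨g, hg⟩ := exists_prime_addOrderOf_dvd_card' p hn
    exact ⟨.zmultiples g, by rw [Nat.card_zmultiples, hg]⟩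
  | mul a b iha ihb =>
    obtain ⟨K, rfl⟩ := iha (dvd_of_mul_right_dvd hn)
    have hindex : Nat.card (G ⧸ K) * Nat.card K = Nat.card G :=
      K.card_eq_card_quotient_mul_card_addSubgroup.symm
    obtain ⟨L, rfl⟩ := ihb (G := G ⧸ K)
      (Nat.dvd_of_mul_dvd_mul_left Nat.card_pos (by rwa [mul_comm _ (Nat.card (G ⧸ K)), hindex]))
    exact ⟨L.comap (QuotientAddGroup.mk' K), card_preimage_quotientMk K L⟩

theorem add_self_injective_of_odd_card (hG : Odd (Nat.card G)) :
    Function.Injective fun x : G ↦ x + x := by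
  simpa only [two_nsmul] using
    (Nat.Coprime.nsmul_right_bijective hG.coprime_two_right).injective

theorem neg_ne_self_of_odd_card (hG : Odd (Nat.card G)) {x : G} (hx : x ≠ 0) : -x ≠ x := by
  refine fun h ↦ hx (add_self_injective_of_odd_card hG ?_)
  simp only [add_zero]
  nth_rw 1 [← h]
  exact neg_add_cancel x

variable (H : AddSubgroup G)

theorem odd_card_quotient (hG : Odd (Nat.card G)) : Odd (Nat.card (G ⧸ H)) :=
  hG.of_dvd_nat (AddSubgroup.card_quotient_dvd_card H)

variable [Fintype G]

open Classical in
/-- The set `(P + H) ∪ (-P + H)`. -/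
noncomputable def signedCoset (P : G) : Finset G :=
  {R | (R : G ⧸ H) = P ∨ (R : G ⧸ H) = -P}

variable {H} {P Q R : G}

theorem mem_signedCoset : R ∈ signedCoset H P ↔ (R : G ⧸ H) = P ∨ (R : G ⧸ H) = -P := by
  simp only [signedCoset, Finset.mem_filter, Finset.mem_univ, true_and]

theorem self_mem_signedCoset : P ∈ signedCoset H P := mem_signedCoset.2 (.inl rfl)

theorem add_mem_signedCoset {a : G} (ha : a ∈ H) : P + a ∈ signedCoset H P :=
  mem_signedCoset.2 (.inl (QuotientAddGroup.mk_add_of_mem P ha))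

theorem notMem_of_mem_signedCoset (hP : P ∉ H) (hR : R ∈ signedCoset H P) : R ∉ H := by
  rw [← QuotientAddGroup.eq_zero_iff] at hP ⊢
  rcases mem_signedCoset.1 hR with h | h <;> rw [h]
  exacts [hP, neg_ne_zero.2 hP]

theorem disjoint_signedCoset (hPQ : P ∉ signedCoset H Q) :
    Disjoint (signedCoset H P) (signedCoset H Q) := by
  rw [Finset.disjoint_left]
  intro R hP hQ
  refine hPQ (mem_signedCoset.2 ?_)
  rcases mem_signedCoset.1 hP with hP | hP <;> rcases mem_signedCoset.1 hQ with hQ | hQ <;>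
    rw [hP] at hQ
  exacts [.inl hQ, .inr hQ, .inr (neg_eq_iff_eq_neg.1 hQ), .inl (neg_injective hQ)]

theorem card_signedCoset (hG : Odd (Nat.card G)) (hP : P ∉ H) :
    (signedCoset H P).card = 2 * Nat.card H := by
  have hne : (P : G ⧸ H) ≠ -P :=
    (neg_ne_self_of_odd_card (odd_card_quotient H hG)
      (mt (QuotientAddGroup.eq_zero_iff P).1 hP)).symm
  have hset : (signedCoset H P : Set G) = QuotientAddGroup.mk ⁻¹' {(P : G ⧸ H), -(P : G ⧸ H)} := by
    ext R
    simp only [Finset.mem_coe, mem_signedCoset, Set.mem_preimage, Set.mem_insert_iff,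
      Set.mem_singleton_iff]
  rw [← Set.ncard_coe_finset, hset, ← Nat.card_coe_set_eq, card_preimage_quotientMk,
    Nat.card_coe_set_eq, Set.ncard_pair hne, mul_comm]

theorem sum_signedCoset (hG : Odd (Nat.card G)) : ∑ R ∈ signedCoset H P, R = 0 := by
  refine Finset.sum_involution (fun R _ ↦ -R) (fun R _ ↦ add_neg_cancel R)
    (fun R _ hR ↦ neg_ne_self_of_odd_card hG hR) (fun R hR ↦ ?_) fun R _ ↦ neg_neg R
  rw [mem_signedCoset] at hR ⊢
  rw [QuotientAddGroup.mk_neg, neg_inj, neg_eq_iff_eq_neg]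
  exact hR.symm

theorem add_ne_add_of_mem_signedCoset (hG : Odd (Nat.card G)) (hQ : Q ∉ H)
    (hPQ : P ∉ signedCoset H Q) {a A A' : G} (ha : a ∈ H) (hA : A ∈ signedCoset H P)
    (hA' : A' ∈ signedCoset H P) : A + A' ≠ Q + (Q + a) := by
  intro h
  have hdouble := add_self_injective_of_odd_card (odd_card_quotient H hG)
  have hQ₀ : (Q : G ⧸ H) ≠ 0 := mt (QuotientAddGroup.eq_zero_iff Q).1 hQ
  have hmod : (A : G ⧸ H) + A' = Q + Q := by
    rw [← QuotientAddGroup.mk_add, h, QuotientAddGroup.mk_add, QuotientAddGroup.mk_add_of_mem Q ha]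
  rw [mem_signedCoset, not_or] at hPQ
  rcases mem_signedCoset.1 hA with hA | hA <;> rcases mem_signedCoset.1 hA' with hA' | hA' <;>
    rw [hA, hA'] at hmod
  · exact hPQ.1 (hdouble hmod)
  · exact hQ₀ (hdouble (by simpa using hmod.symm))
  · exact hQ₀ (hdouble (by simpa using hmod.symm))
  · exact hPQ.2 (neg_eq_iff_eq_neg.1 (hdouble hmod))

theorem sum_sdiff_pair [DecidableEq G] (hG : Odd (Nat.card G)) {A A' : G} (hAA' : A ≠ A')
    (hA : A ∈ signedCoset H P) (hA' : A' ∈ signedCoset H P) :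
    ∑ R ∈ signedCoset H P \ {A, A'}, R = -(A + A') := by
  have hsub : {A, A'} ⊆ signedCoset H P :=
    Finset.insert_subset hA (Finset.singleton_subset_iff.2 hA')
  rw [eq_neg_iff_add_eq_zero, ← Finset.sum_pair (f := fun R ↦ R) hAA', Finset.sum_sdiff hsub,
    sum_signedCoset hG]

theorem sum_add_sum_pair_ne_zero [DecidableEq G] (hG : Odd (Nat.card G)) (hP : P ∉ H) (hQ : Q ∉ H)
    (hPQ : P ∉ signedCoset H Q) {a : G} (ha : a ∈ H) (ha₀ : a ≠ 0) {Z : Finset G}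
    (hZ : Z ⊆ signedCoset H P) (hcard : Z.card = 2 * Nat.card H - 2) :
    ∑ R ∈ Z, R + ∑ R ∈ {Q, Q + a}, R ≠ 0 := by
  have hcompl : (signedCoset H P \ Z).card = 2 := by
    rw [Finset.card_sdiff_of_subset hZ, card_signedCoset hG hP, hcard]
    have : 0 < Nat.card H := Nat.card_pos
    omega
  obtain ⟨A, A', hAA', hpair⟩ := Finset.card_eq_two.1 hcompl
  have hmem (R : G) (hR : R ∈ ({A, A'} : Finset G)) : R ∈ signedCoset H P :=
    (Finset.mem_sdiff.1 (hpair ▸ hR)).1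
  have hA := hmem A (by simp)
  have hA' := hmem A' (by simp)
  rw [← Finset.sdiff_sdiff_eq_self hZ, hpair, sum_sdiff_pair hG hAA' hA hA',
    Finset.sum_pair (by simpa using ha₀), ne_eq, neg_add_eq_zero]
  exact add_ne_add_of_mem_signedCoset hG hQ hPQ ha hA hA'

theorem sum_pair_add_sum_sdiff_ne_zero [DecidableEq G] (hG : Odd (Nat.card G)) (hQ : Q ∉ H)
    (hPQ : P ∉ signedCoset H Q) {a : G} (ha : a ∈ H) (ha₀ : a ≠ 0) {Z : Finset G}
    (hZ : Z ⊆ signedCoset H P) (hcard : Z.card = 2) :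
    ∑ R ∈ Z, R + ∑ R ∈ signedCoset H Q \ {Q, Q + a}, R ≠ 0 := by
  obtain ⟨A, A', hAA', rfl⟩ := Finset.card_eq_two.1 hcard
  rw [sum_sdiff_pair hG (by simpa using ha₀) self_mem_signedCoset (add_mem_signedCoset ha),
    Finset.sum_pair hAA', ne_eq, add_neg_eq_zero]
  exact add_ne_add_of_mem_signedCoset hG hQ hPQ ha (hZ (by simp)) (hZ (by simp))

end SignedCoset

/-! ### Functions on the affine points of a Weierstrass curve -/

section AffinePoint

variable {F : Type*} [Field F] {W : Affine F}

/-- The `x`-coordinate of a point, with value `0` at infinity. -/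
def xCoord : W.Point → F
  | .zero => 0
  | .some x _ _ => x

/-- The `y`-coordinate of a point, with value `0` at infinity. -/
def yCoord : W.Point → F
  | .zero => 0
  | .some _ y _ => y

/-- The points other than the point at infinity. -/
abbrev AffinePoint (W : Affine F) : Type _ := {P : W.Point // P ≠ 0}

theorem nonsingular_coord {P : W.Point} (hP : P ≠ 0) : W.Nonsingular (xCoord P) (yCoord P) := by
  obtain _ | ⟨x, y, h⟩ := P
  exacts [absurd rfl hP, h]

theorem eq_some_coord {P : W.Point} (hP : P ≠ 0) : P = .some _ _ (nonsingular_coord hP) := by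
  obtain _ | ⟨x, y, h⟩ := P
  exacts [absurd rfl hP, rfl]

theorem AffinePoint.ext_coord {P Q : AffinePoint W} (hx : xCoord P.1 = xCoord Q.1)
    (hy : yCoord P.1 = yCoord Q.1) : P = Q := by
  apply Subtype.ext
  rw [eq_some_coord P.2, eq_some_coord Q.2]
  simp only [hx, hy]

/-- The evaluation of regular functions at an affine point. -/
noncomputable def evalAt (P : AffinePoint W) : W.CoordinateRing →ₐ[F] F :=
  (CoordinateRing.quotientXYIdealEquiv (nonsingular_coord P.2).1).toAlgHom.comp
    (Ideal.Quotient.mkₐ F (CoordinateRing.XYIdeal W (xCoord P.1) (C (yCoord P.1))))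

theorem ker_evalAt (P : AffinePoint W) :
    RingHom.ker (evalAt P) = CoordinateRing.XYIdeal W (xCoord P.1) (C (yCoord P.1)) := by
  ext f
  simp [evalAt, Ideal.Quotient.eq_zero_iff_mem]

theorem evalAt_mk_C (P : AffinePoint W) (p : F[X]) :
    evalAt P (CoordinateRing.mk W (C p)) = p.eval (xCoord P.1) := by
  have hX : evalAt P (CoordinateRing.mk W (C (X - C (xCoord P.1)))) = 0 := by
    rw [← RingHom.mem_ker, ker_evalAt]
    exact Ideal.subset_span (Set.mem_insert _ _)
  obtain ⟨q, hq⟩ := X_sub_C_dvd_sub_C_eval (a := xCoord P.1) (p := p)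
  have hp : evalAt P (CoordinateRing.mk W (C (p - C (p.eval (xCoord P.1))))) = 0 := by
    rw [hq, C_mul, map_mul, map_mul, hX, zero_mul]
  rw [C_sub, map_sub, map_sub, sub_eq_zero] at hp
  exact hp.trans ((evalAt P).commutes _)

theorem evalAt_mk_X (P : AffinePoint W) : evalAt P (CoordinateRing.mk W X) = yCoord P.1 := by
  have hY : evalAt P (CoordinateRing.YClass W (C (yCoord P.1))) = 0 := by
    rw [← RingHom.mem_ker, ker_evalAt]
    exact Ideal.subset_span (Set.mem_insert_of_mem _ rfl)
  rw [CoordinateRing.YClass, map_sub, map_sub, evalAt_mk_C, eval_C] at hY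
  exact sub_eq_zero.1 hY

theorem evalAt_smul (P : AffinePoint W) (p : F[X]) (f : W.CoordinateRing) :
    evalAt P (p • f) = p.eval (xCoord P.1) * evalAt P f := by
  rw [CoordinateRing.smul, map_mul, evalAt_mk_C]

theorem ker_evalAt_injective :
    Function.Injective fun P : AffinePoint W ↦ RingHom.ker (evalAt P) := by
  intro P Q h
  have key (f : W.CoordinateRing) (hf : evalAt P f = 0) : evalAt Q f = 0 := by
    rwa [← RingHom.mem_ker, show RingHom.ker (evalAt Q) = _ from h.symm]
  have hx := key (CoordinateRing.mk W (C (X - C (xCoord P.1)))) (by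
    rw [evalAt_mk_C, eval_sub, eval_X, eval_C, sub_self])
  have hy := key (CoordinateRing.mk W (X - C (C (yCoord P.1)))) (by
    rw [map_sub, map_sub, evalAt_mk_X, evalAt_mk_C, eval_C, sub_self])
  rw [evalAt_mk_C, eval_sub, eval_X, eval_C, sub_eq_zero] at hx
  rw [map_sub, map_sub, evalAt_mk_X, evalAt_mk_C, eval_C, sub_eq_zero] at hy
  exact AffinePoint.ext_coord hx.symm hy.symm

theorem isCoprime_ker_evalAt {P Q : AffinePoint W} (h : P ≠ Q) :
    IsCoprime (RingHom.ker (evalAt P)) (RingHom.ker (evalAt Q)) := by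
  have hmax (R : AffinePoint W) : (RingHom.ker (evalAt R)).IsMaximal :=
    RingHom.ker_isMaximal_of_surjective _ fun c ↦ ⟨algebraMap F _ c, (evalAt R).commutes c⟩
  rw [Ideal.isCoprime_iff_sup_eq]
  exact (hmax P).coprime_of_ne (hmax Q) (ker_evalAt_injective.ne h)

/-- The evaluation of regular functions at a finite set of affine points. -/
noncomputable def evalOn (S : Finset (AffinePoint W)) : W.CoordinateRing →ₐ[F] (S → F) :=
  AlgHom.pi fun P ↦ evalAt P.1

theorem mem_ker_evalOn {S : Finset (AffinePoint W)} {f : W.CoordinateRing} :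
    f ∈ RingHom.ker (evalOn S) ↔ ∀ P ∈ S, evalAt P f = 0 := by
  simp only [RingHom.mem_ker, funext_iff, Subtype.forall, evalOn, AlgHom.pi_apply, Pi.zero_apply]

theorem ker_evalOn (S : Finset (AffinePoint W)) :
    RingHom.ker (evalOn S) = ∏ P ∈ S, CoordinateRing.XYIdeal W (xCoord P.1) (C (yCoord P.1)) := by
  simp_rw [← ker_evalAt]
  rw [Ideal.prod_eq_iInf_of_pairwise_isCoprime fun P _ Q _ h ↦ isCoprime_ker_evalAt h]
  ext f
  rw [mem_ker_evalOn]
  simp only [Submodule.mem_iInf, RingHom.mem_ker]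

theorem evalOn_surjective (S : Finset (AffinePoint W)) : Function.Surjective (evalOn S) := by
  intro g
  obtain ⟨f, hf⟩ := Ideal.pi_quotient_surjective (I := fun P : S ↦ RingHom.ker (evalAt P.1))
    (fun P Q hPQ ↦ isCoprime_ker_evalAt (Subtype.coe_injective.ne hPQ))
    fun P ↦ Ideal.Quotient.mk _ (algebraMap F _ (g P))
  refine ⟨f, funext fun P ↦ ?_⟩
  have := hf P
  rw [Ideal.Quotient.eq, RingHom.mem_ker, map_sub, AlgHom.commutes] at this
  exact sub_eq_zero.1 this

theorem finrank_quotient_ker_evalOn (S : Finset (AffinePoint W)) :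
    Module.finrank F (W.CoordinateRing ⧸ RingHom.ker (evalOn S)) = S.card := by
  rw [(Ideal.quotientKerAlgEquivOfSurjective (evalOn_surjective S)).toLinearEquiv.finrank_eq,
    Module.finrank_fintype_fun_eq_card, Fintype.card_coe]

theorem finite_quotient_span_singleton {f : W.CoordinateRing} (hf : f ≠ 0) :
    Module.Finite F (W.CoordinateRing ⧸ Ideal.span {f}) := by
  classical
  exact Module.Finite.equiv (Ideal.quotientEquivDirectSum F (CoordinateRing.basis W)
    (Ideal.span_singleton_eq_bot.not.2 hf)).symm

end AffinePoint

section IdealQuotient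

variable {F R : Type*} [Field F] [CommRing R] [Algebra F R] {I J : Ideal R}
  [Module.Finite F (R ⧸ I)]

theorem finrank_quotient_le_of_le (hIJ : I ≤ J) :
    Module.finrank F (R ⧸ J) ≤ Module.finrank F (R ⧸ I) :=
  LinearMap.finrank_le_finrank_of_surjective (f := (Ideal.Quotient.factorₐ F hIJ).toLinearMap)
    (Ideal.Quotient.factor_surjective hIJ)

theorem eq_of_le_of_finrank_quotient_le (hIJ : I ≤ J)
    (h : Module.finrank F (R ⧸ I) ≤ Module.finrank F (R ⧸ J)) : I = J := by
  have hsurj : Function.Surjective (Ideal.Quotient.factorₐ F hIJ).toLinearMap :=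
    Ideal.Quotient.factor_surjective hIJ
  have : Module.Finite F (R ⧸ J) := .of_surjective _ hsurj
  have hinj := (LinearMap.injective_iff_surjective_of_finrank_eq_finrank
    (h.antisymm (finrank_quotient_le_of_le hIJ))).2 hsurj
  refine hIJ.antisymm fun x hx ↦ Ideal.Quotient.eq_zero_iff_mem.1 (hinj ?_)
  rw [map_zero]
  exact Ideal.Quotient.eq_zero_iff_mem.2 hx

end IdealQuotient

section Zeros

variable {F : Type*} [Field F] {W : Affine F} {f : W.CoordinateRing}

/-- The set of affine points at which a regular function vanishes. -/
def zeroLocus (f : W.CoordinateRing) : Set W.Point :=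
  {P | ∃ hP : P ≠ 0, evalAt ⟨P, hP⟩ f = 0}

theorem span_singleton_le_ker_evalOn {S : Finset W.Point} [DecidablePred fun P : W.Point ↦ P ≠ 0]
    (hS : ↑S ⊆ zeroLocus f) : Ideal.span {f} ≤ RingHom.ker (evalOn (S.subtype (· ≠ 0))) := by
  rw [Ideal.span_singleton_le_iff_mem, mem_ker_evalOn]
  exact fun P hP ↦ (hS (Finset.mem_subtype.1 hP)).2

theorem card_subtype_ne_zero {S : Finset W.Point} [DecidablePred fun P : W.Point ↦ P ≠ 0]
    (hS : ↑S ⊆ zeroLocus f) : (S.subtype (· ≠ 0)).card = S.card := by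
  rw [Finset.card_subtype, Finset.filter_true_of_mem fun P hP ↦ (hS hP).1]

theorem card_le_natDegree_norm (hf : f ≠ 0) {S : Finset W.Point} (hS : ↑S ⊆ zeroLocus f) :
    S.card ≤ (Algebra.norm F[X] f).natDegree := by
  classical
  have := finite_quotient_span_singleton hf
  rw [← finrank_quotient_span_eq_natDegree_norm (CoordinateRing.basis W) hf,
    ← card_subtype_ne_zero hS, ← finrank_quotient_ker_evalOn]
  exact finrank_quotient_le_of_le (span_singleton_le_ker_evalOn hS)

theorem toClass_eq_classGroupMk [DecidableEq F] (P : AffinePoint W) :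
    Point.toClass P.1 = Additive.ofMul
      (ClassGroup.mk W.FunctionField (CoordinateRing.XYIdeal' (nonsingular_coord P.2))) := by
  conv_lhs => rw [eq_some_coord P.2]
  rfl

/-- Abel's theorem: a function with as many distinct zeros as the degree of its norm has divisor
`∑ (P) - n (∞)`, so its zeros sum to zero. -/
theorem sum_eq_zero_of_natDegree_norm_le_card [DecidableEq F] (hf : f ≠ 0) {S : Finset W.Point}
    (hS : ↑S ⊆ zeroLocus f) (hcard : (Algebra.norm F[X] f).natDegree ≤ S.card) :
    ∑ P ∈ S, P = 0 := by
  have := finite_quotient_span_singleton hf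
  have hspan : ∏ P ∈ S.subtype (· ≠ 0), CoordinateRing.XYIdeal W (xCoord P.1) (C (yCoord P.1)) =
      Ideal.span {f} := by
    rw [← ker_evalOn]
    refine (eq_of_le_of_finrank_quotient_le (F := F) (span_singleton_le_ker_evalOn hS) ?_).symm
    rwa [finrank_quotient_ker_evalOn, card_subtype_ne_zero hS,
      finrank_quotient_span_eq_natDegree_norm (CoordinateRing.basis W) hf]
  have hprincipal := (ClassGroup.mk_eq_one_of_coe_ideal
    (I := ∏ P ∈ S.subtype (· ≠ 0), CoordinateRing.XYIdeal' (nonsingular_coord P.2)) (by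
      rw [Units.coe_prod]
      exact (map_prod (FractionalIdeal.coeIdealHom _ W.FunctionField) _ _).symm)).2 ⟨f, hf, hspan⟩
  rw [← Finset.sum_subtype_of_mem (fun P ↦ P) fun P hP ↦ (hS hP).1, ← Point.toClass_eq_zero,
    map_sum]
  simp_rw [toClass_eq_classGroupMk]
  rw [← ofMul_prod, ← map_prod, hprincipal, ofMul_one]

end Zeros

/-! ### Riemann–Roch spaces at infinity -/

section RiemannRoch

variable {F : Type*} [Field F] (W : Affine F)

/-- The function `p(x) + q(x) y` attached to a pair of polynomials. -/
noncomputable def ofCoeffs : (F[X] × F[X]) →ₗ[F] W.CoordinateRing :=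
  ((LinearMap.toSpanSingleton F[X] W.CoordinateRing 1).coprod
    (LinearMap.toSpanSingleton F[X] W.CoordinateRing (CoordinateRing.mk W X))).restrictScalars F

variable {W}

theorem ofCoeffs_injective : Function.Injective (ofCoeffs W) := by
  rw [injective_iff_map_eq_zero]
  rintro ⟨p, q⟩ h
  obtain ⟨rfl, rfl⟩ := CoordinateRing.smul_basis_eq_zero h
  rfl

variable (W) in
/-- The Riemann–Roch space `L(2n · ∞)`: since `x` and `y` have poles of order `2` and `3` at
infinity, it consists of the functions `p(x) + q(x) y` with `deg p ≤ n` and `deg q ≤ n - 2`. -/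
noncomputable def rrSpace (n : ℕ) : Submodule F W.CoordinateRing :=
  LinearMap.range
    (ofCoeffs W ∘ₗ (degreeLT F (n + 1)).subtype.prodMap (degreeLT F (n - 1)).subtype)

theorem mem_rrSpace {n : ℕ} {f : W.CoordinateRing} :
    f ∈ rrSpace W n ↔
      ∃ p ∈ degreeLT F (n + 1), ∃ q ∈ degreeLT F (n - 1),
        p • 1 + q • CoordinateRing.mk W X = f := by
  constructor
  · rintro ⟨⟨p, q⟩, rfl⟩
    exact ⟨p, p.2, q, q.2, rfl⟩
  · rintro ⟨p, hp, q, hq, rfl⟩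
    exact ⟨(⟨p, hp⟩, ⟨q, hq⟩), rfl⟩

theorem finrank_degreeLT (n : ℕ) : Module.finrank F (degreeLT F n) = n := by
  rw [(degreeLTEquiv F n).finrank_eq, Module.finrank_fintype_fun_eq_card, Fintype.card_fin]

instance finite_degreeLT (n : ℕ) : Module.Finite F (degreeLT F n) :=
  .equiv (degreeLTEquiv F n).symm

instance finite_rrSpace (n : ℕ) : Module.Finite F (rrSpace W n) :=
  Module.Finite.range _

theorem finrank_rrSpace {n : ℕ} (hn : 1 ≤ n) : Module.finrank F (rrSpace W n) = 2 * n := by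
  have hinj := ofCoeffs_injective (W := W).comp
    ((degreeLT F (n + 1)).subtype_injective.prodMap (degreeLT F (n - 1)).subtype_injective)
  rw [rrSpace, LinearMap.finrank_range_of_inj hinj, Module.finrank_prod, finrank_degreeLT,
    finrank_degreeLT]
  omega

theorem natDegree_norm_le_of_mem_rrSpace {n : ℕ} {f : W.CoordinateRing} (hf : f ∈ rrSpace W n) :
    (Algebra.norm F[X] f).natDegree ≤ 2 * n := by
  obtain ⟨p, hp, q, hq, rfl⟩ := mem_rrSpace.1 hf
  rw [natDegree_le_iff_degree_le, CoordinateRing.degree_norm_smul_basis]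
  rw [mem_degreeLT] at hp hq
  refine max_le ?_ ?_
  · obtain rfl | h := eq_or_ne p 0
    · simp
    rw [degree_eq_natDegree h] at hp
    rw [degree_eq_natDegree h, two_nsmul]
    norm_cast at hp ⊢
    omega
  · obtain rfl | h := eq_or_ne q 0
    · simp
    rw [degree_eq_natDegree h] at hq
    rw [degree_eq_natDegree h, two_nsmul]
    norm_cast at hq ⊢
    omega

theorem mul_mem_degreeLT {m n : ℕ} {p q : F[X]} (hp : p.natDegree ≤ m) (hq : q ∈ degreeLT F n) :
    p * q ∈ degreeLT F (n + m) := by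
  obtain rfl | hq₀ := eq_or_ne q 0
  · simp
  rw [mem_degreeLT, ← natDegree_lt_iff_degree_lt hq₀] at hq
  exact mem_degreeLT.2 (degree_le_natDegree.trans_lt
    (Nat.cast_lt.2 (natDegree_mul_le.trans_lt (by omega))))

theorem smul_mem_rrSpace {n k : ℕ} (hn : 1 ≤ n) {f : W.CoordinateRing} (hf : f ∈ rrSpace W n)
    {p : F[X]} (hp : p.natDegree ≤ k) : p • f ∈ rrSpace W (n + k) := by
  obtain ⟨a, ha, b, hb, rfl⟩ := mem_rrSpace.1 hf
  refine mem_rrSpace.2 ⟨p * a, ?_, p * b, ?_, by rw [smul_add, mul_smul, mul_smul]⟩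
  · rw [Nat.add_right_comm]
    exact mul_mem_degreeLT hp ha
  · exact degreeLT_mono (by omega) (mul_mem_degreeLT hp hb)

theorem smul_one_mem_rrSpace {n : ℕ} {p : F[X]} (hp : p.natDegree ≤ n) :
    p • (1 : W.CoordinateRing) ∈ rrSpace W n :=
  mem_rrSpace.2 ⟨p, mem_degreeLT.2 (degree_le_natDegree.trans_lt
    (Nat.cast_lt.2 (Nat.lt_succ_of_le hp))), 0, zero_mem _, by rw [zero_smul, add_zero]⟩

theorem encode_mem_rrSpace {n t : ℕ} (hn : 1 ≤ n) (ht : 1 ≤ t) {V : Submodule F W.CoordinateRing}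
    (hV : V ≤ rrSpace W n) {w : V} {p q : F[X]} (hw : (w : W.CoordinateRing) = p • 1)
    (hp : p.natDegree ≤ n) (hq : q.natDegree ≤ n) (x : (Fin t → V) × F) :
    encode w (q • 1) t x ∈ rrSpace W (n * t) := by
  refine add_mem (sum_mem fun i _ ↦ ?_) (Submodule.smul_mem _ _ ?_)
  · rw [hw, _root_.smul_pow, _root_.smul_pow, one_pow, one_pow, smul_mul_smul_comm, one_mul,
      smul_mul_assoc, one_mul]
    have hdeg : (p ^ (i : ℕ) * q ^ (t - 1 - i)).natDegree ≤ n * (t - 1) := by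
      have := natDegree_mul_le_of_le (natDegree_pow_le_of_le i hp)
        (natDegree_pow_le_of_le (t - 1 - i) hq)
      rw [← add_mul, Nat.add_sub_cancel' (by omega)] at this
      exact this.trans_eq (mul_comm _ _)
    convert smul_mem_rrSpace hn (hV (x.1 i).2) hdeg using 2
    rw [← mul_one_add, Nat.add_sub_cancel' ht]
  · rw [_root_.smul_pow, one_pow, mul_comm n]
    exact smul_one_mem_rrSpace (natDegree_pow_le_of_le t hq)

variable (W) in
open Classical in
/-- The subspace of `L(2n · ∞)` of functions which vanish at the affine points of `B`. -/
noncomputable def vanishingSpace (n : ℕ) (B : Finset W.Point) : Submodule F W.CoordinateRing :=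
  rrSpace W n ⊓ LinearMap.ker (evalOn (B.subtype (· ≠ 0))).toLinearMap

variable {n : ℕ} {B : Finset W.Point}

theorem vanishingSpace_le : vanishingSpace W n B ≤ rrSpace W n := inf_le_left

instance finite_vanishingSpace : Module.Finite F (vanishingSpace W n B) :=
  Submodule.finiteDimensional_of_le vanishingSpace_le

theorem subset_zeroLocus_of_mem_vanishingSpace (hB : 0 ∉ B) {f : W.CoordinateRing}
    (hf : f ∈ vanishingSpace W n B) : ↑B ⊆ zeroLocus f := by
  classical
  intro P hP
  have hP₀ : P ≠ 0 := fun h ↦ hB (h ▸ hP)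
  exact ⟨hP₀, mem_ker_evalOn.1 hf.2 ⟨P, hP₀⟩ (Finset.mem_subtype.2 hP)⟩

theorem smul_one_mem_vanishingSpace {p : F[X]} (hp : p.natDegree ≤ n)
    (hB : ∀ P ∈ B, p.eval (xCoord P) = 0) : p • 1 ∈ vanishingSpace W n B := by
  classical
  refine ⟨smul_one_mem_rrSpace hp, mem_ker_evalOn.2 fun P hP ↦ ?_⟩
  rw [evalAt_smul, hB P (Finset.mem_subtype.1 hP), zero_mul]

theorem two_mul_le_finrank_vanishingSpace_add_card (hn : 1 ≤ n) :
    2 * n ≤ Module.finrank F (vanishingSpace W n B) + B.card := by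
  classical
  let restriction := (evalOn (B.subtype (· ≠ 0))).toLinearMap.domRestrict (rrSpace W n)
  have hker : (LinearMap.ker restriction).map (rrSpace W n).subtype ≤ vanishingSpace W n B := by
    rintro _ ⟨f, hf, rfl⟩
    exact ⟨f.2, hf⟩
  have hkernel := Submodule.finrank_mono hker
  rw [Submodule.finrank_map_subtype_eq] at hkernel
  have hrange : Module.finrank F (LinearMap.range restriction) ≤ B.card := by
    refine (Submodule.finrank_le _).trans ?_
    rw [Module.finrank_fintype_fun_eq_card, Fintype.card_coe, Finset.card_subtype]
    exact Finset.card_filter_le _ _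
  have := restriction.finrank_range_add_finrank_ker
  rw [finrank_rrSpace hn] at this
  omega

variable [DecidableEq F] {r : ℕ}

/-- By Abel's theorem, a function of `L(2n · ∞)` which vanishes on `B` cannot have `2n - |B|` other
zeros, unless these and `B` sum to zero. -/
theorem card_lt_of_subset_zeroLocus (hB : 0 ∉ B) (hcard : r + B.card = 2 * n) {f : W.CoordinateRing}
    (hf : f ∈ vanishingSpace W n B) (hf₀ : f ≠ 0) {Z : Finset W.Point} (hZ : ↑Z ⊆ zeroLocus f)
    (hdisj : Disjoint Z B) (hsum : ∀ Z' ⊆ Z, Z'.card = r → ∑ P ∈ Z', P + ∑ P ∈ B, P ≠ 0) :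
    Z.card < r := by
  by_contra! hr
  obtain ⟨Z', hZ', hcardZ'⟩ := Finset.exists_subset_card_eq hr
  have hdisj' := Finset.disjoint_of_subset_left hZ' hdisj
  apply hsum Z' hZ' hcardZ'
  rw [← Finset.sum_disjUnion hdisj']
  refine sum_eq_zero_of_natDegree_norm_le_card hf₀ ?_ ?_
  · rw [Finset.coe_disjUnion]
    exact Set.union_subset ((Finset.coe_subset.2 hZ').trans hZ)
      (subset_zeroLocus_of_mem_vanishingSpace hB hf)
  · rw [Finset.card_disjUnion, hcardZ', hcard]
    exact natDegree_norm_le_of_mem_rrSpace (vanishingSpace_le hf)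

theorem finrank_vanishingSpace (hn : 1 ≤ n) (hB : 0 ∉ B) {Z : Finset W.Point} (hZ : 0 ∉ Z)
    (hcard : Z.card + B.card = 2 * n) (hdisj : Disjoint Z B)
    (hsum : ∑ P ∈ Z, P + ∑ P ∈ B, P ≠ 0) :
    Module.finrank F (vanishingSpace W n B) = Z.card := by
  refine le_antisymm ?_ ?_
  · have hinj : Function.Injective
        ((evalOn (Z.subtype (· ≠ 0))).toLinearMap.domRestrict (vanishingSpace W n B)) := by
      rw [injective_iff_map_eq_zero]
      intro f hf
      by_contra hf₀
      have hzero : ↑Z ⊆ zeroLocus (f : W.CoordinateRing) := fun P hP ↦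
        have hP₀ : P ≠ 0 := fun h ↦ hZ (h ▸ hP)
        ⟨hP₀, mem_ker_evalOn.1 hf ⟨P, hP₀⟩ (Finset.mem_subtype.2 hP)⟩
      refine (card_lt_of_subset_zeroLocus hB hcard f.2 (by simpa using hf₀) hzero hdisj ?_).false
      rintro Z' hZ' hcardZ'
      rwa [Finset.eq_of_subset_of_card_le hZ' hcardZ'.ge]
    have := LinearMap.finrank_le_finrank_of_injective hinj
    rw [Module.finrank_fintype_fun_eq_card, Fintype.card_coe, Finset.card_subtype] at this
    exact this.trans (Finset.card_filter_le _ _)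
  · have := two_mul_le_finrank_vanishingSpace_add_card (W := W) (B := B) hn
    omega

end RiemannRoch

/-! ### Vélu's invariant function -/

section Coordinates

variable {F : Type*} [Field F] {W : Affine F} {P Q : W.Point}

theorem xCoord_neg (P : W.Point) : xCoord (-P) = xCoord P := by
  cases P <;> rfl

theorem xCoord_eq_xCoord_iff (hP : P ≠ 0) (hQ : Q ≠ 0) :
    xCoord P = xCoord Q ↔ P = Q ∨ P = -Q := by
  rw [eq_some_coord hP, eq_some_coord hQ]
  exact Point.X_eq_iff

theorem equation_coord (hP : P ≠ 0) :
    yCoord P ^ 2 + W.a₁ * xCoord P * yCoord P + W.a₃ * yCoord P =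
      xCoord P ^ 3 + W.a₂ * xCoord P ^ 2 + W.a₄ * xCoord P + W.a₆ :=
  (W.equation_iff _ _).1 (nonsingular_coord hP).1

theorem yCoord_neg (hP : P ≠ 0) : yCoord (-P) = -yCoord P - W.a₁ * xCoord P - W.a₃ := by
  nth_rw 1 [eq_some_coord hP]
  rfl

/-- The part of the numerator of `x(P + Q)` free of `y(P)`, as a polynomial in `x(P)`. -/
noncomputable def addXNumerator (Q : W.Point) : F[X] :=
  C (xCoord Q) * X ^ 2 +
    C (xCoord Q ^ 2 + 2 * W.a₂ * xCoord Q + W.a₄ - W.a₁ * yCoord Q) * X +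
    C (W.a₄ * xCoord Q + 2 * W.a₆ - W.a₃ * yCoord Q)

theorem natDegree_addXNumerator_le (Q : W.Point) : (addXNumerator Q).natDegree ≤ 2 :=
  natDegree_quadratic_le

theorem xCoord_add [DecidableEq F] (hP : P ≠ 0) (hQ : Q ≠ 0) (hx : xCoord P ≠ xCoord Q) :
    xCoord (P + Q) = ((addXNumerator Q).eval (xCoord P) -
      (yCoord Q - yCoord (-Q)) * yCoord P) / (xCoord P - xCoord Q) ^ 2 := by
  have hadd : xCoord (P + Q) =
      W.addX (xCoord P) (xCoord Q) (W.slope (xCoord P) (xCoord Q) (yCoord P) (yCoord Q)) := by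
    conv_lhs => rw [eq_some_coord hP, eq_some_coord hQ, Point.add_of_X_ne hx]
    rfl
  have hx' : xCoord P - xCoord Q ≠ 0 := sub_ne_zero.2 hx
  rw [hadd, addX, slope_of_X_ne hx, yCoord_neg hQ, addXNumerator]
  simp only [eval_add, eval_mul, eval_C, eval_pow, eval_X]
  field_simp
  linear_combination equation_coord hP + equation_coord hQ

end Coordinates

section Velu

variable {F : Type*} [Field F] [DecidableEq F] {W : Affine F}
  {H : AddSubgroup W.Point} {P R : W.Point}

theorem ne_zero_of_notMem (hP : P ∉ H) : P ≠ 0 :=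
  fun h ↦ hP (h ▸ H.zero_mem)

theorem xCoord_ne_of_notMem (hP : P ∉ H) {a : H} (ha : a ≠ 0) : xCoord P ≠ xCoord a.1 := by
  rw [ne_eq, xCoord_eq_xCoord_iff (ne_zero_of_notMem hP) (by simpa using ha)]
  rintro (h | h)
  exacts [hP (h ▸ a.2), hP (h ▸ H.neg_mem a.2)]

theorem xCoord_add_injective (hG : Odd (Nat.card W.Point)) (hP : P ∉ H) :
    Function.Injective fun a : H ↦ xCoord (P + a.1) := by
  intro a b hab
  have hne (c : H) : P + c.1 ≠ 0 := ne_zero_of_notMem ((H.add_mem_cancel_right c.2).not.2 hP)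
  rcases (xCoord_eq_xCoord_iff (hne a) (hne b)).1 hab with h | h
  · exact Subtype.ext (add_left_cancel h)
  · refine absurd ((QuotientAddGroup.eq_zero_iff P).1 ?_) hP
    by_contra h₀
    refine neg_ne_self_of_odd_card (odd_card_quotient H hG) h₀ (Eq.symm ?_)
    nth_rw 1 [← QuotientAddGroup.mk_add_of_mem P a.2]
    rw [h, QuotientAddGroup.mk_neg, QuotientAddGroup.mk_add_of_mem P b.2]

variable [Fintype H]

variable (H) in
/-- The sum of the `x`-coordinates over `P + H`. Up to an additive constant it is Vélu's formula for
the `x`-coordinate on the quotient curve `W / H`. -/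
def veluX (P : W.Point) : F :=
  ∑ a : H, xCoord (P + a.1)

variable (H) in
/-- The denominator of `veluX H` as a rational function of the `x`-coordinate. -/
noncomputable def veluDen : F[X] :=
  ∏ a ∈ Finset.univ.erase (0 : H), (X - C (xCoord a.1))

variable (H) in
/-- The numerator of `veluX H` as a rational function of the `x`-coordinate. -/
noncomputable def veluNum : F[X] :=
  X * veluDen H + ∑ a ∈ Finset.univ.erase (0 : H),
    addXNumerator a.1 * (veluDen H /ₘ (X - C (xCoord a.1)) ^ 2)

variable (H) in
/-- The polynomial whose roots are the `x`-coordinates of the fibre of `veluX H` over `ξ`. -/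
noncomputable def veluPencil (ξ : F) : F[X] :=
  veluNum H - C ξ * veluDen H

theorem veluX_add {a : W.Point} (ha : a ∈ H) (P : W.Point) : veluX H (P + a) = veluX H P := by
  simp only [veluX, add_assoc]
  exact Equiv.sum_comp (Equiv.addLeft (⟨a, ha⟩ : H)) fun b : H ↦ xCoord (P + b.1)

theorem veluX_neg (P : W.Point) : veluX H (-P) = veluX H P := by
  rw [veluX, ← Equiv.sum_comp (Equiv.neg H)]
  simp only [veluX, Equiv.neg_apply, NegMemClass.coe_neg, ← neg_add, xCoord_neg]

theorem veluX_eq (hP : P ∉ H) :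
    veluX H P = xCoord P + ∑ a ∈ Finset.univ.erase (0 : H),
      (addXNumerator a.1).eval (xCoord P) / (xCoord P - xCoord a.1) ^ 2 := by
  have hcancel : ∑ a ∈ Finset.univ.erase (0 : H),
      (yCoord a.1 - yCoord (-a.1)) * yCoord P / (xCoord P - xCoord a.1) ^ 2 = 0 := by
    simp only [sub_mul, sub_div, Finset.sum_sub_distrib]
    rw [sub_eq_zero]
    refine Finset.sum_equiv (Equiv.neg H) (fun a ↦ ?_) fun a _ ↦ ?_
    · simp only [Finset.mem_erase, Finset.mem_univ, and_true, Equiv.neg_apply, ne_eq, neg_eq_zero]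
    · simp only [Equiv.neg_apply, NegMemClass.coe_neg, neg_neg, xCoord_neg]
  rw [veluX, ← Finset.add_sum_erase _ _ (Finset.mem_univ (0 : H)), ZeroMemClass.coe_zero, add_zero]
  congr 1
  rw [← sub_zero (Finset.sum _ fun a : H ↦ _ / _), ← hcancel, ← Finset.sum_sub_distrib]
  refine Finset.sum_congr rfl fun a ha ↦ ?_
  have ha₀ : a ≠ 0 := Finset.ne_of_mem_erase ha
  rw [xCoord_add (ne_zero_of_notMem hP) (by simpa using ha₀) (xCoord_ne_of_notMem hP ha₀), sub_div]

theorem monic_veluDen : (veluDen H).Monic :=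
  monic_prod_of_monic _ _ fun _ _ ↦ monic_X_sub_C _

theorem natDegree_veluDen_add_one : (veluDen H).natDegree + 1 = Nat.card H := by
  rw [veluDen, natDegree_prod_of_monic _ _ fun _ _ ↦ monic_X_sub_C _]
  simp only [natDegree_X_sub_C, Finset.sum_const, smul_eq_mul, mul_one]
  rw [Finset.card_erase_add_one (Finset.mem_univ _), Finset.card_univ, Nat.card_eq_fintype_card]

theorem eval_veluDen_ne_zero (hP : P ∉ H) : (veluDen H).eval (xCoord P) ≠ 0 := by
  rw [veluDen, eval_prod, Finset.prod_ne_zero_iff]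
  intro a ha
  rw [eval_sub, eval_X, eval_C, sub_ne_zero]
  exact xCoord_ne_of_notMem hP (Finset.ne_of_mem_erase ha)

theorem sq_mul_veluDen_divByMonic (hH : Odd (Nat.card H)) {a : H} (ha : a ≠ 0) :
    (X - C (xCoord a.1)) ^ 2 * (veluDen H /ₘ (X - C (xCoord a.1)) ^ 2) = veluDen H := by
  have hdvd : (X - C (xCoord a.1)) ^ 2 ∣ veluDen H := by
    have hsub : {a, -a} ⊆ Finset.univ.erase (0 : H) := by
      simp only [Finset.insert_subset_iff, Finset.singleton_subset_iff, Finset.mem_erase,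
        Finset.mem_univ, ne_eq, neg_eq_zero, ha, not_false_eq_true, and_self]
    refine (dvd_of_eq ?_).trans
      (Finset.prod_dvd_prod_of_subset _ _ (fun b ↦ X - C (xCoord b.1)) hsub)
    rw [Finset.prod_pair (neg_ne_self_of_odd_card hH ha).symm, NegMemClass.coe_neg, xCoord_neg, sq]
  rw [← zero_add (_ * _), ← (modByMonic_eq_zero_iff_dvd ((monic_X_sub_C _).pow 2)).2 hdvd,
    modByMonic_add_div]

theorem eval_veluNum (hH : Odd (Nat.card H)) (hP : P ∉ H) :
    (veluNum H).eval (xCoord P) = veluX H P * (veluDen H).eval (xCoord P) := by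
  rw [veluX_eq hP, veluNum, eval_add, eval_mul, eval_X, eval_finsetSum, add_mul, Finset.sum_mul]
  congr 1
  refine Finset.sum_congr rfl fun a ha ↦ ?_
  have ha₀ := Finset.ne_of_mem_erase ha
  have hx := sub_ne_zero.2 (xCoord_ne_of_notMem hP ha₀)
  nth_rw 2 [← sq_mul_veluDen_divByMonic hH ha₀]
  simp only [eval_mul, eval_pow, eval_sub, eval_X, eval_C]
  field_simp

theorem eval_veluPencil (hH : Odd (Nat.card H)) (hP : P ∉ H) (ξ : F) :
    (veluPencil H ξ).eval (xCoord P) = (veluX H P - ξ) * (veluDen H).eval (xCoord P) := by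
  rw [veluPencil, eval_sub, eval_mul, eval_C, eval_veluNum hH hP, sub_mul]

theorem natDegree_addXNumerator_mul_le (hH : Odd (Nat.card H)) {a : H} (ha : a ≠ 0) :
    (addXNumerator a.1 * (veluDen H /ₘ (X - C (xCoord a.1)) ^ 2)).natDegree ≤
      (veluDen H).natDegree := by
  have hmonic := (monic_X_sub_C (xCoord a.1)).pow 2
  nth_rw 2 [← sq_mul_veluDen_divByMonic hH ha]
  have hne := (sq_mul_veluDen_divByMonic hH ha).trans_ne monic_veluDen.ne_zero
  rw [hmonic.natDegree_mul' (right_ne_zero_of_mul hne), (monic_X_sub_C _).natDegree_pow,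
    natDegree_X_sub_C]
  exact natDegree_mul_le_of_le (natDegree_addXNumerator_le _) le_rfl

theorem natDegree_veluPencil (hH : Odd (Nat.card H)) (ξ : F) :
    (veluPencil H ξ).natDegree = Nat.card H := by
  have hlead : (X * veluDen H).natDegree = Nat.card H := by
    rw [natDegree_X_mul monic_veluDen.ne_zero, natDegree_veluDen_add_one]
  rw [veluPencil, veluNum, add_sub_assoc, natDegree_add_eq_left_of_natDegree_lt, hlead]
  rw [hlead, ← natDegree_veluDen_add_one, Nat.lt_succ_iff]
  exact (natDegree_sub_le_of_le (natDegree_sum_le_of_forall_le _ _ fun a ha ↦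
    natDegree_addXNumerator_mul_le hH (Finset.ne_of_mem_erase ha))
    (natDegree_C_mul_le ξ _)).trans_eq (max_self _)

theorem xCoord_mem_roots_veluPencil (hH : Odd (Nat.card H)) (hP : P ∉ H) :
    xCoord P ∈ (veluPencil H (veluX H P)).roots := by
  refine (mem_roots fun h ↦ ?_).2 (by rw [IsRoot, eval_veluPencil hH hP, sub_self, zero_mul])
  have := natDegree_veluPencil hH (veluX H P)
  rw [h, natDegree_zero] at this
  exact Nat.card_pos.ne this

theorem veluX_eq_veluX_iff [Fintype W.Point] (hG : Odd (Nat.card W.Point)) (hP : P ∉ H)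
    (hR : R ∉ H) : veluX H R = veluX H P ↔ R ∈ signedCoset H P := by
  have hH : Odd (Nat.card H) := hG.of_dvd_nat (AddSubgroup.card_addSubgroup_dvd_card H)
  have hPa (a : H) : P + a.1 ∉ H := (H.add_mem_cancel_right a.2).not.2 hP
  constructor
  · contrapose!
    intro hRP h
    have hx : xCoord R ∉ Finset.univ.image fun a : H ↦ xCoord (P + a.1) := by
      simp only [Finset.mem_image, Finset.mem_univ, true_and, not_exists]
      intro a ha
      refine hRP (mem_signedCoset.2 ?_)
      rw [← QuotientAddGroup.mk_add_of_mem P a.2, ← QuotientAddGroup.mk_neg]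
      rcases (xCoord_eq_xCoord_iff (ne_zero_of_notMem hR) (ne_zero_of_notMem (hPa a))).1 ha.symm
        with h | h
      exacts [.inl (congrArg _ h), .inr (congrArg _ h)]
    have hroots : (insert (xCoord R) (Finset.univ.image fun a : H ↦ xCoord (P + a.1))).val ⊆
        (veluPencil H (veluX H P)).roots := by
      intro x hx
      rcases Finset.mem_insert.1 hx with rfl | hx
      · exact h ▸ xCoord_mem_roots_veluPencil hH hR
      · obtain ⟨a, -, rfl⟩ := Finset.mem_image.1 hx
        exact veluX_add a.2 P ▸ xCoord_mem_roots_veluPencil hH (hPa a)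
    have hdeg := card_le_degree_of_subset_roots hroots
    rw [Finset.card_insert_of_notMem hx, Finset.card_image_of_injective _
      (xCoord_add_injective hG hP), Finset.card_univ, natDegree_veluPencil hH,
      Nat.card_eq_fintype_card] at hdeg
    exact Nat.not_succ_le_self _ hdeg
  · have key {Q : W.Point} (h : (R : W.Point ⧸ H) = Q) : veluX H R = veluX H Q := by
      rw [← veluX_add (QuotientAddGroup.eq.1 h.symm) Q, add_neg_cancel_left]
    intro hmem
    rcases mem_signedCoset.1 hmem with h | h
    exacts [key h, (key h).trans (veluX_neg P)]

end Velu

/-! ### Codes from an elliptic curve with an odd number of points -/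

section Fibers

variable {F : Type*} [Field F] [DecidableEq F] {W : Affine F}
  {H : AddSubgroup W.Point} [Fintype H] {Q : W.Point} {m : ℕ}

theorem card_image_veluX [Fintype W.Point] [DecidablePred (· ∈ H)] (hG : Odd (Nat.card W.Point)) :
    ((Finset.univ.filter (· ∉ H)).image (veluX H)).card * (2 * Nat.card H) + Nat.card H =
      Nat.card W.Point := by
  have hfiber : ∀ ξ ∈ (Finset.univ.filter (· ∉ H)).image (veluX H),
      ((Finset.univ.filter (· ∉ H)).filter fun R ↦ veluX H R = ξ).card = 2 * Nat.card H := by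
    intro ξ hξ
    obtain ⟨P, hP, rfl⟩ := Finset.mem_image.1 hξ
    replace hP : P ∉ H := (Finset.mem_filter.1 hP).2
    rw [← card_signedCoset hG hP]
    congr 1
    ext R
    simp only [Finset.mem_filter, Finset.mem_univ, true_and]
    exact ⟨fun h ↦ (veluX_eq_veluX_iff hG hP h.1).1 h.2, fun h ↦
      have hR := notMem_of_mem_signedCoset hP h
      ⟨hR, (veluX_eq_veluX_iff hG hP hR).2 h⟩⟩
  rw [← smul_eq_mul, ← Finset.sum_const, ← Finset.sum_congr rfl hfiber,
    ← Finset.card_eq_sum_card_image, ← SetLike.coe_sort_coe, Nat.card_eq_card_toFinset,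
    Nat.card_eq_fintype_card, ← Finset.card_univ,
    ← Finset.card_filter_add_card_filter_not (s := Finset.univ) (· ∈ H), add_comm]
  congr 2
  ext R
  simp

theorem exists_embedding_fibers [Finite W.Point] (hG : Odd (Nat.card W.Point)) (hQ : Q ∉ H)
    (hm : 2 * Nat.card H * (m + 1) + Nat.card H ≤ Nat.card W.Point) :
    ∃ (ξ : Fin m ↪ F) (p : Fin (2 * Nat.card H) × Fin m ↪ W.Point),
      (∀ j, ξ j ≠ veluX H Q) ∧ ∀ y, p y ∉ H ∧ veluX H (p y) = ξ y.2 := by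
  classical
  have := Fintype.ofFinite W.Point
  set S := (Finset.univ.filter (· ∉ H)).image (veluX H)
  have hS : m ≤ (S.erase (veluX H Q)).card := by
    rw [Finset.card_erase_of_mem (Finset.mem_image_of_mem _ (by simpa using hQ))]
    rw [← card_image_veluX (H := H) hG, mul_comm, Nat.add_le_add_iff_right] at hm
    exact Nat.le_sub_one_of_lt (Nat.le_of_mul_le_mul_right hm (Nat.mul_pos two_pos Nat.card_pos))
  obtain ⟨ξ⟩ := Function.Embedding.nonempty_of_card_le (α := Fin m) (β := S.erase (veluX H Q))
    (by rwa [Fintype.card_fin, Fintype.card_coe])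
  have hξ (j : Fin m) : ∃ P, P ∉ H ∧ veluX H P = ξ j := by
    have := Finset.mem_of_mem_erase (ξ j).2
    simpa only [S, Finset.mem_image, Finset.mem_filter, Finset.mem_univ, true_and] using this
  choose P hP hPξ using hξ
  let e (j : Fin m) := (signedCoset H (P j)).equivFinOfCardEq (card_signedCoset hG (hP j))
  have hmem (y : Fin (2 * Nat.card H) × Fin m) :
      ((e y.2).symm y.1 : W.Point) ∉ H ∧ veluX H ((e y.2).symm y.1) = ξ y.2 := by
    have hR := notMem_of_mem_signedCoset (hP y.2) ((e y.2).symm y.1).2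
    refine ⟨hR, ?_⟩
    rw [(veluX_eq_veluX_iff hG (hP y.2) hR).2 ((e y.2).symm y.1).2, hPξ]
  refine ⟨ξ.trans (.subtype _), ⟨fun y ↦ (e y.2).symm y.1, ?_⟩,
    fun j ↦ Finset.ne_of_mem_erase (ξ j).2, hmem⟩
  rintro ⟨i, j⟩ ⟨i', j'⟩ h
  obtain rfl : j = j' := ξ.injective (Subtype.ext (by
    rw [← (hmem (i, j)).2, ← (hmem (i', j')).2]
    exact congrArg _ h))
  exact Prod.ext ((e j).symm.injective (Subtype.ext h)) rfl

end Fibers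

section FiberCode

variable {F : Type*} [Field F] {W : Affine F}

theorem map_filter_evalAt_subset_zeroLocus {ι : Type*} [Fintype ι] [DecidableEq F]
    {p : ι ↪ W.Point} (hp : ∀ i, p i ≠ 0) (f : W.CoordinateRing) :
    ↑((Finset.univ.filter fun i ↦ evalAt ⟨p i, hp i⟩ f = 0).map p) ⊆ zeroLocus f := by
  intro P hP
  obtain ⟨i, hi, rfl⟩ := Finset.mem_map.1 hP
  exact ⟨hp i, (Finset.mem_filter.1 hi).2⟩

variable [DecidableEq F] [Fintype W.Point] {H : AddSubgroup W.Point} {P Q : W.Point}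
  {B : Finset W.Point} {r t m : ℕ}

theorem zero_notMem_of_subset_signedCoset (hP : P ∉ H) (hB : B ⊆ signedCoset H P) : 0 ∉ B :=
  fun h ↦ notMem_of_mem_signedCoset hP (hB h) H.zero_mem

theorem finrank_vanishingSpace_of_subset_signedCoset (hG : Odd (Nat.card W.Point)) (hP : P ∉ H)
    (hQ : Q ∉ H) (hPQ : P ∉ signedCoset H Q) (hB : B ⊆ signedCoset H Q)
    (hcard : r + B.card = 2 * Nat.card H)
    (hsum : ∀ Z ⊆ signedCoset H P, Z.card = r → ∑ R ∈ Z, R + ∑ R ∈ B, R ≠ 0) :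
    Module.finrank F (vanishingSpace W (Nat.card H) B) = r := by
  obtain ⟨Z, hZ, rfl⟩ := Finset.exists_subset_card_eq (s := signedCoset H P) (n := r)
    (by rw [card_signedCoset hG hP]; omega)
  exact finrank_vanishingSpace Nat.card_pos (zero_notMem_of_subset_signedCoset hQ hB)
    (zero_notMem_of_subset_signedCoset hP hZ) hcard
    ((disjoint_signedCoset hPQ).mono hZ hB) (hsum Z hZ rfl)

theorem card_filter_evalAt_lt (hQ : Q ∉ H) (hPQ : P ∉ signedCoset H Q) (hB : B ⊆ signedCoset H Q)
    (hcard : r + B.card = 2 * Nat.card H)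
    (hsum : ∀ Z ⊆ signedCoset H P, Z.card = r → ∑ R ∈ Z, R + ∑ R ∈ B, R ≠ 0)
    {ι : Type*} [Fintype ι] {p : ι ↪ W.Point} (hp₀ : ∀ i, p i ≠ 0)
    (hp : ∀ i, p i ∈ signedCoset H P) {f : W.CoordinateRing}
    (hf : f ∈ vanishingSpace W (Nat.card H) B) (hf₀ : f ≠ 0) :
    (Finset.univ.filter fun i ↦ evalAt ⟨p i, hp₀ i⟩ f = 0).card < r := by
  rw [← Finset.card_map p]
  set Z := (Finset.univ.filter fun i ↦ evalAt ⟨p i, hp₀ i⟩ f = 0).map p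
  have hZ : Z ⊆ signedCoset H P := by
    intro R hR
    obtain ⟨i, -, rfl⟩ := Finset.mem_map.1 hR
    exact hp i
  exact card_lt_of_subset_zeroLocus (zero_notMem_of_subset_signedCoset hQ hB) hcard hf hf₀
    (map_filter_evalAt_subset_zeroLocus hp₀ f) ((disjoint_signedCoset hPQ).mono hZ hB)
    fun Z' hZ' ↦ hsum Z' (hZ'.trans hZ)

theorem veluPencil_smul_one_mem_vanishingSpace [Fintype H] (hG : Odd (Nat.card W.Point))
    (hQ : Q ∉ H) (hB : B ⊆ signedCoset H Q) :
    veluPencil H (veluX H Q) • 1 ∈ vanishingSpace W (Nat.card H) B := by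
  have hH : Odd (Nat.card H) := hG.of_dvd_nat (AddSubgroup.card_addSubgroup_dvd_card H)
  refine smul_one_mem_vanishingSpace (natDegree_veluPencil hH _).le fun R hR ↦ ?_
  have hRH := notMem_of_mem_signedCoset hQ (hB hR)
  rw [eval_veluPencil hH hRH, (veluX_eq_veluX_iff hG hQ hRH).2 (hB hR), sub_self, zero_mul]

theorem existsOptimalLRC_of_sum_ne_zero (hG : Odd (Nat.card W.Point)) (hQ : Q ∉ H)
    (hB : B ⊆ signedCoset H Q) (hr : 1 ≤ r) (hcard : r + B.card = 2 * Nat.card H)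
    (hsum : ∀ P ∉ H, P ∉ signedCoset H Q → ∀ Z ⊆ signedCoset H P, Z.card = r →
      ∑ R ∈ Z, R + ∑ R ∈ B, R ≠ 0)
    (ht : 1 ≤ t) (htm : t < m)
    (hm : 2 * Nat.card H * (m + 1) + Nat.card H ≤ Nat.card W.Point) :
    ExistsOptimalLRC F (2 * Nat.card H * m) (r * t + 1) (2 * Nat.card H * (m - t)) r
      (2 * Nat.card H - r + 1) := by
  have := Fintype.ofFinite H
  have hH : Odd (Nat.card H) := hG.of_dvd_nat (AddSubgroup.card_addSubgroup_dvd_card H)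
  obtain ⟨ξ, p, hξ, hp⟩ := exists_embedding_fibers hG hQ hm
  have hp₀ (y) : p y ≠ 0 := ne_zero_of_notMem (hp y).1
  have hpQ (y) : p y ∉ signedCoset H Q := by
    rw [← veluX_eq_veluX_iff hG hQ (hp y).1, (hp y).2]
    exact hξ y.2
  let i₀ : Fin (2 * Nat.card H) := ⟨0, Nat.mul_pos two_pos Nat.card_pos⟩
  have hrank : Module.finrank F (vanishingSpace W (Nat.card H) B) = r :=
    let y₀ := (i₀, ⟨0, by omega⟩)
    finrank_vanishingSpace_of_subset_signedCoset hG (hp y₀).1 hQ (hpQ y₀) hB hcard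
      (hsum _ (hp y₀).1 (hpQ y₀))
  have hw := veluPencil_smul_one_mem_vanishingSpace hG hQ hB
  refine existsOptimalLRC_of_evalGrid (φ := fun y ↦ evalAt ⟨p y, hp₀ y⟩)
    (w := (⟨_, hw⟩ : vanishingSpace W (Nat.card H) B)) (v := veluDen H • 1)
    (κ := fun j ↦ ξ j - veluX H Q) hrank hr (by omega)
    (fun i j h ↦ ξ.injective (sub_left_injective h))
    (fun j ↦ sub_ne_zero.2 (hξ j)) (fun y ↦ ?_) (fun y ↦ ?_) ht htm (fun j f hf hf₀ ↦ ?_)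
    fun x hx ↦ ?_
  · rw [evalAt_smul, evalAt_smul, eval_veluPencil hH (hp y).1, (hp y).2, mul_assoc]
  · rw [evalAt_smul, map_one, mul_one]
    exact eval_veluDen_ne_zero (hp y).1
  · have hfiber (i) : p (i, j) ∈ signedCoset H (p (i₀, j)) :=
      (veluX_eq_veluX_iff hG (hp _).1 (hp _).1).1 ((hp (i, j)).2.trans (hp (i₀, j)).2.symm)
    exact card_filter_evalAt_lt (p := (.sectL _ j : _ ↪ Fin (2 * Nat.card H) × Fin m).trans p)
      hQ (hpQ (i₀, j)) hB hcard (hsum _ (hp (i₀, j)).1 (hpQ (i₀, j))) (fun i ↦ hp₀ (i, j))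
      hfiber hf hf₀
  · rw [← Finset.card_map p, mul_assoc]
    refine (card_le_natDegree_norm hx (map_filter_evalAt_subset_zeroLocus hp₀ _)).trans
      (natDegree_norm_le_of_mem_rrSpace (encode_mem_rrSpace Nat.card_pos ht vanishingSpace_le rfl
        (natDegree_veluPencil hH _).le ?_ x))
    exact (Nat.le_succ _).trans_eq natDegree_veluDen_add_one

end FiberCode

theorem existsOptimalLRC_of_odd_card_point {F : Type*} [Field F] [DecidableEq F] {W : Affine F}
    [Finite W.Point] {n t m : ℕ} (hG : Odd (Nat.card W.Point)) (hn : 1 < n)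
    (hdvd : n ∣ Nat.card W.Point) (ht : 1 ≤ t) (htm : t < m)
    (hm : 2 * n * (m + 1) + n ≤ Nat.card W.Point) :
    ExistsOptimalLRC F (2 * n * m) ((2 * n - 2) * t + 1) (2 * n * (m - t)) (2 * n - 2) 3 ∧
      ExistsOptimalLRC F (2 * n * m) (2 * t + 1) (2 * n * (m - t)) 2 (2 * n - 1) := by
  classical
  have := Fintype.ofFinite W.Point
  obtain ⟨H, rfl⟩ := exists_addSubgroup_natCard_eq_of_dvd hdvd
  obtain ⟨⟨a, ha⟩, hne⟩ :=
    H.ne_bot_iff_exists_ne_zero.1 ((AddSubgroup.one_lt_card_iff_ne_bot H).1 hn)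
  have ha₀ : a ≠ 0 := fun h ↦ hne (Subtype.ext h)
  obtain ⟨Q, hQ⟩ : ∃ Q, Q ∉ H := by
    by_contra! hall
    rw [H.eq_top_iff'.2 hall, AddSubgroup.card_top] at hm
    nlinarith [Nat.card_pos (α := W.Point)]
  have hpair : {Q, Q + a} ⊆ signedCoset H Q := Finset.insert_subset self_mem_signedCoset
    (Finset.singleton_subset_iff.2 (add_mem_signedCoset ha))
  have hcard : ({Q, Q + a} : Finset W.Point).card = 2 := Finset.card_pair (by simpa using ha₀)
  constructor
  · convert existsOptimalLRC_of_sum_ne_zero (r := 2 * Nat.card H - 2) hG hQ hpair (by omega)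
      (by omega) (fun _ hP hPQ _ ↦ sum_add_sum_pair_ne_zero hG hP hQ hPQ ha ha₀) ht htm hm
      using 1
    omega
  · convert existsOptimalLRC_of_sum_ne_zero (r := 2) hG hQ Finset.sdiff_subset one_le_two ?_
      (fun _ _ hPQ _ ↦ sum_pair_add_sum_sdiff_ne_zero hG hQ hPQ ha ha₀) ht htm hm using 1
    · omega
    · rw [Finset.card_sdiff_of_subset hpair, card_signedCoset hG hQ, hcard]
      omega

/-! ### The number of points on `y² + y = x³ + c` in characteristic two -/

section PointCount

theorem card_filter_pow_succ_eq_self {R : Type*} [CommRing R] [IsDomain R] [Fintype R]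
    [DecidableEq R] {n : ℕ} {ζ : R} (hn : 0 < n) (hζ : IsPrimitiveRoot ζ n) :
    (Finset.univ.filter fun y : R ↦ y ^ (n + 1) = y).card = n + 1 := by
  have hset : (Finset.univ.filter fun y : R ↦ y ^ (n + 1) = y) =
      insert 0 (Polynomial.nthRootsFinset n 1) := by
    ext y
    rw [Finset.mem_filter_univ, Finset.mem_insert, Polynomial.mem_nthRootsFinset hn, pow_succ',
      mul_right_eq_self₀, or_comm]
  have hzero : (0 : R) ∉ Polynomial.nthRootsFinset n 1 := by
    simp [Polynomial.mem_nthRootsFinset hn, hn.ne']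
  rw [hset, Finset.card_insert_of_notMem hzero, hζ.card_nthRootsFinset]

/-- The additive map `y ↦ y² + y`, that is, `y ↦ y² - y`, in characteristic two. -/
def artinSchreier (F : Type*) [Field F] [CharP F 2] : F →+ F :=
  (frobenius F 2).toAddMonoidHom + .id F

variable {F : Type*} [Field F] [CharP F 2]

theorem artinSchreier_apply (y : F) : artinSchreier F y = y ^ 2 + y := rfl

theorem artinSchreier_eq_artinSchreier_iff {y z : F} :
    artinSchreier F y = artinSchreier F z ↔ y = z ∨ y = z + 1 := by
  rw [artinSchreier_apply, artinSchreier_apply, ← sub_eq_zero (a := y),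
    ← sub_eq_zero (a := y) (b := z + 1), ← mul_eq_zero, ← sub_eq_zero]
  congr! 1
  linear_combination (z * y - z ^ 2 + y - z) * CharTwo.two_eq_zero (R := F)

theorem index_range_artinSchreier [Finite F] : (artinSchreier F).range.index = 2 := by
  have hker : Nat.card (artinSchreier F).ker = 2 := by
    have : ((artinSchreier F).ker : Set F) = {0, 1} := by
      ext y
      simpa using artinSchreier_eq_artinSchreier_iff (y := y) (z := 0)
    rw [← SetLike.coe_sort_coe, this, Nat.card_coe_set_eq, Set.ncard_pair zero_ne_one]
  have hcard := (AddSubgroup.card_mul_index (artinSchreier F).ker).trans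
    (AddSubgroup.card_mul_index (artinSchreier F).range).symm
  rw [AddSubgroup.index_ker, hker, mul_comm] at hcard
  exact (Nat.eq_of_mul_eq_mul_left Nat.card_pos hcard).symm

open Classical in
/-- The nontrivial additive character of a finite field of characteristic two that is trivial on
the elements `y² + y`; it is `u ↦ (-1) ^ Tr u`. -/
noncomputable def quadraticAddChar (F : Type*) [Field F] [CharP F 2] [Finite F] : AddChar F ℤ where
  toFun u := if u ∈ (artinSchreier F).range then 1 else -1
  map_zero_eq_one' := if_pos (zero_mem _)
  map_add_eq_mul' u v := by
    have := AddSubgroup.add_mem_iff_of_index_two (index_range_artinSchreier (F := F))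
      (a := u) (b := v)
    split_ifs <;> simp_all

section Finite

variable [Finite F]

theorem quadraticAddChar_artinSchreier (y : F) : quadraticAddChar F (y ^ 2 + y) = 1 :=
  if_pos ⟨y, rfl⟩

theorem quadraticAddChar_sq (y : F) : quadraticAddChar F (y ^ 2) = quadraticAddChar F y := by
  have hy : quadraticAddChar F y * quadraticAddChar F y = 1 := by
    rw [← AddChar.map_add_eq_mul, CharTwo.add_self_eq_zero, AddChar.map_zero_eq_one]
  rw [← mul_one (quadraticAddChar F (y ^ 2)), ← hy, ← mul_assoc, ← AddChar.map_add_eq_mul,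
    quadraticAddChar_artinSchreier, one_mul]

theorem exists_quadraticAddChar_eq_neg_one : ∃ c, quadraticAddChar F c = -1 := by
  have htop : (artinSchreier F).range ≠ ⊤ := by
    rw [Ne, ← AddSubgroup.index_eq_one, index_range_artinSchreier]
    decide
  obtain ⟨c, -, hc⟩ := SetLike.exists_of_lt htop.lt_top
  exact ⟨c, if_neg hc⟩

theorem quadraticAddChar_pow_three {w y : F} (hw : IsPrimitiveRoot w 3) (hy : y ^ 4 = y) :
    quadraticAddChar F (y ^ 3) = 1 := by
  rcases eq_or_ne y 0 with rfl | hy₀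
  · simp
  · have hone : w ^ 2 + w = 1 := by
      have hsum := hw.geom_sum_eq_zero (by decide)
      simp only [Finset.sum_range_succ, Finset.sum_range_zero, pow_zero, pow_one] at hsum
      linear_combination hsum - CharTwo.two_eq_zero (R := F)
    rw [show y ^ 3 = 1 from mul_left_cancel₀ hy₀ (by rw [← pow_succ', hy, mul_one]), ← hone,
      quadraticAddChar_artinSchreier]

end Finite

/-- The curve `y² + y = x³ + c`, which is supersingular in characteristic two. -/
def supersingularCurve (c : F) : Affine F where
  a₁ := 0
  a₂ := 0
  a₃ := 1
  a₄ := 0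
  a₆ := c

theorem nonsingular_supersingularCurve_iff {c x y : F} :
    (supersingularCurve c).Nonsingular x y ↔ y ^ 2 + y = x ^ 3 + c := by
  rw [nonsingular_iff', equation_iff]
  simp [supersingularCurve, CharTwo.two_eq_zero]

variable [Fintype F]

theorem card_filter_sq_add_self_eq [DecidableEq F] (u : F) :
    ((Finset.univ.filter fun y : F ↦ y ^ 2 + y = u).card : ℤ) = 1 + quadraticAddChar F u := by
  by_cases hu : u ∈ (artinSchreier F).range
  · obtain ⟨z, rfl⟩ := hu
    have hfiber : (Finset.univ.filter fun y : F ↦ y ^ 2 + y = artinSchreier F z) = {z, z + 1} := by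
      ext y
      rw [Finset.mem_filter_univ, ← artinSchreier_apply, artinSchreier_eq_artinSchreier_iff,
        Finset.mem_insert, Finset.mem_singleton]
    rw [hfiber, Finset.card_pair (by simp), artinSchreier_apply, quadraticAddChar_artinSchreier]
    rfl
  · rw [Finset.filter_false_of_mem (p := fun y ↦ y ^ 2 + y = u) fun y _ hy ↦ hu ⟨y, hy⟩,
      Finset.card_empty,
      show quadraticAddChar F u = -1 from if_neg hu]
    rfl

theorem sum_quadraticAddChar_sq_mul [DecidableEq F] (a : F) :
    ∑ x, quadraticAddChar F (x ^ 2 * a) = if a = 0 then (Fintype.card F : ℤ) else 0 := by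
  split_ifs with ha
  · simp [ha]
  · obtain ⟨c, hc⟩ := exists_quadraticAddChar_eq_neg_one (F := F)
    have hne : quadraticAddChar F ≠ 1 := AddChar.ne_one_iff.2 ⟨c, by rw [hc]; decide⟩
    have hbij : Function.Bijective fun x : F ↦ x ^ 2 * a :=
      ((mul_left_injective₀ ha).comp (frobenius_inj F 2)).bijective_of_finite
    rw [hbij.sum_comp (quadraticAddChar F), AddChar.sum_eq_zero_of_ne_one hne]

theorem sum_quadraticAddChar_sq_mul_add_mul_sq [DecidableEq F] (y : F) :
    ∑ x, quadraticAddChar F (x ^ 2 * y + x * y ^ 2) =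
      if y ^ 4 = y then (Fintype.card F : ℤ) else 0 := by
  have hsq (x : F) : quadraticAddChar F (x ^ 2 * y + x * y ^ 2) =
      quadraticAddChar F (x ^ 2 * (y ^ 4 + y)) := by
    rw [AddChar.map_add_eq_mul, ← quadraticAddChar_sq (x * y ^ 2), ← AddChar.map_add_eq_mul]
    ring_nf
  simp_rw [hsq, sum_quadraticAddChar_sq_mul, CharTwo.add_eq_zero]

theorem sq_sum_quadraticAddChar_pow_three (h3 : 3 ∣ Fintype.card F - 1) :
    (∑ x, quadraticAddChar F (x ^ 3)) ^ 2 = 4 * Fintype.card F := by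
  classical
  obtain ⟨u, hu⟩ := exists_prime_orderOf_dvd_card (G := Fˣ) 3 (by rwa [Fintype.card_units])
  have hu : IsPrimitiveRoot (u : F) 3 := IsPrimitiveRoot.coe_units_iff.2 (hu ▸ .orderOf u)
  calc (∑ x, quadraticAddChar F (x ^ 3)) ^ 2
      = ∑ x, ∑ z, quadraticAddChar F (x ^ 3 + z ^ 3) := by
        simp_rw [sq, Finset.sum_mul_sum, AddChar.map_add_eq_mul]
    _ = ∑ x, ∑ y, quadraticAddChar F (y ^ 3) * quadraticAddChar F (x ^ 2 * y + x * y ^ 2) := by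
        refine Finset.sum_congr rfl fun x _ ↦
          ((Equiv.sum_comp (Equiv.addLeft x) _).symm.trans (Finset.sum_congr rfl fun y _ ↦ ?_))
        rw [← AddChar.map_add_eq_mul, Equiv.coe_addLeft]
        congr 1
        linear_combination
          (x ^ 3 + x ^ 2 * y + x * y ^ 2) * CharTwo.two_eq_zero (R := F)
    _ = ∑ y, quadraticAddChar F (y ^ 3) * ∑ x, quadraticAddChar F (x ^ 2 * y + x * y ^ 2) := by
        rw [Finset.sum_comm]
        simp_rw [Finset.mul_sum]
    _ = ∑ y : F, if y ^ 4 = y then (Fintype.card F : ℤ) else 0 := by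
        refine Finset.sum_congr rfl fun y _ ↦ ?_
        rw [sum_quadraticAddChar_sq_mul_add_mul_sq]
        split_ifs with hy
        · rw [quadraticAddChar_pow_three hu hy, one_mul]
        · rw [mul_zero]
    _ = 4 * Fintype.card F := by
        rw [← Finset.sum_filter, Finset.sum_const, card_filter_pow_succ_eq_self three_pos hu,
          nsmul_eq_mul]
        norm_num

theorem natCard_point_supersingularCurve (c : F) :
    (Nat.card (supersingularCurve c).Point : ℤ) =
      Fintype.card F + quadraticAddChar F c * ∑ x, quadraticAddChar F (x ^ 3) + 1 := by
  classical
  have hcount (x : F) : ∑ y : F, (if y ^ 2 + y = x ^ 3 + c then (1 : ℤ) else 0) =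
      1 + quadraticAddChar F c * quadraticAddChar F (x ^ 3) := by
    rw [mul_comm, ← AddChar.map_add_eq_mul, ← card_filter_sq_add_self_eq, Finset.sum_boole]
  rw [Nat.card_congr (nonsingularPointEquiv (supersingularCurve c)), WithZero, Finite.card_option,
    Nat.cast_succ]
  congr 1
  simp_rw [nonsingular_supersingularCurve_iff]
  rw [Nat.card_eq_fintype_card, Fintype.card_subtype, ← Finset.sum_boole,
    ← Finset.univ_product_univ, Finset.sum_product]
  simp_rw [hcount, Finset.sum_add_distrib, ← Finset.mul_sum]
  simp

theorem exists_natCard_point_supersingularCurve {s : ℕ}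
    (hF : Fintype.card F = 2 ^ (2 * s)) :
    ∃ c : F, Nat.card (supersingularCurve c).Point = 2 ^ (2 * s) + 2 ^ (s + 1) + 1 := by
  have h3 : 3 ∣ Fintype.card F - 1 := by
    simpa [hF, pow_mul] using Nat.sub_dvd_pow_sub_pow 4 1 s
  have hsq : (∑ x, quadraticAddChar F (x ^ 3)) ^ 2 = (2 ^ (s + 1)) ^ 2 := by
    rw [sq_sum_quadraticAddChar_pow_three h3, hF]
    push_cast
    ring
  obtain ⟨c, hc⟩ : ∃ c, quadraticAddChar F c * ∑ x, quadraticAddChar F (x ^ 3) = 2 ^ (s + 1) := by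
    rcases sq_eq_sq_iff_eq_or_eq_neg.1 hsq with h | h
    · exact ⟨0, by rw [h, AddChar.map_zero_eq_one, one_mul]⟩
    · obtain ⟨c, hc⟩ := exists_quadraticAddChar_eq_neg_one (F := F)
      exact ⟨c, by rw [h, hc, neg_mul_neg, one_mul]⟩
  refine ⟨c, ?_⟩
  zify
  rw [natCard_point_supersingularCurve, hc, hF]
  norm_cast

end PointCount

end EllipticLRC

/-- For `q = 2^(2s)` and a divisor `h ≥ 3` of `q + 2^(s+1) + 1`,
for all `1 ≤ t < m ≤ (q + 2^(s+1) + 1 - h)/(2h) - 1`, there exist an optimal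
`(2h-2, 3)`-LRC with parameters `[2hm, (2h-2)t + 1, 2h(m-t)]_q` and an optimal
`(2, 2h-1)`-LRC with parameters `[2hm, 2t + 1, 2h(m-t)]_q`. -/
theorem stmt_1 (s : ℕ) (hs : 0 < s) (q : ℕ) (hq : q = 2 ^ (2 * s))
    (h : ℕ) (hh : 3 ≤ h) (hdvd : h ∣ q + 2 ^ (s + 1) + 1)
    (t m : ℕ) (ht : 1 ≤ t) (htm : t < m)
    (hm : (m : ℚ) ≤ ((q : ℚ) + 2 ^ (s + 1) + 1 - (h : ℚ)) / (2 * (h : ℚ)) - 1)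
    (F : Type*) [Field F] [Fintype F] [DecidableEq F] (hF : Fintype.card F = q) :
    ExistsOptimalLRC F (2 * h * m) ((2 * h - 2) * t + 1) (2 * h * (m - t)) (2 * h - 2) 3 ∧
    ExistsOptimalLRC F (2 * h * m) (2 * t + 1) (2 * h * (m - t)) 2 (2 * h - 1) := by
  subst hq
  have : CharP F 2 := charP_of_card_eq_prime_pow hF
  obtain ⟨c, hc⟩ := EllipticLRC.exists_natCard_point_supersingularCurve hF
  have : Finite (EllipticLRC.supersingularCurve c).Point :=
    Nat.finite_of_card_ne_zero (by rw [hc]; exact Nat.succ_ne_zero _)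
  have hodd : Odd (Nat.card (EllipticLRC.supersingularCurve c).Point) := by
    rw [hc]
    exact ((even_two.pow_of_ne_zero (by positivity)).add
      (even_two.pow_of_ne_zero s.succ_ne_zero)).add_one
  have hlen : 2 * h * (m + 1) + h ≤ 2 ^ (2 * s) + 2 ^ (s + 1) + 1 := by
    rw [le_sub_iff_add_le, le_div_iff₀ (by positivity), le_sub_iff_add_le, mul_comm] at hm
    exact_mod_cast hm
  exact EllipticLRC.existsOptimalLRC_of_odd_card_point hodd (by omega) (hc ▸ hdvd) ht htm
    (hc ▸ hlen)
end

section
/- Let s be a positive integer, q = 2^{2s}, let h₀ be a positive divisor of 2^{s} + 1, and set h = h₀². Then for all integers t, m with 1 ≤ t < m ≤ ⌈(q + 2^{s+1} + 1 − 3h)/(3h)⌉, there exists an optimal (3h−2, 3)-LRC over F_q with parameters [3hm, (3h−2)t + 1, 3h(m−t)]_q, and there exists an optimal (2, 3h−1)-LRC over F_q with parameters [3hm, 2t + 1, 3h(m−t)]_q. -/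
/-!
Over `F` with `2 ^ (2 * s)` elements some curve `y² + y = x³ + c` has `(2 ^ s + 1) ^ 2` points,
counting the one at infinity. Its automorphism `ω : (x, y) ↦ (ζ x, y)`, with `ζ` a primitive cube
root of unity, satisfies `1 + ω + ω² = 0`, and every square dividing the number of points is the
order of an `ω`-stable subgroup `H`. The trace `z P = ∑ a ∈ H, y (P + a)` is a function of degree
`3 * |H|` which is invariant under `H` and `ω`, so away from the points with `ω P - P ∈ H` its
fibres are exactly the orbits of `H ⋊ ⟨ω⟩`, of size `3 * |H|`.

Evaluate the functions `∑ j < t, z ^ j * φ (v j) + c * z ^ t`, where `φ` parametrises a space of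
functions containing `1` and with poles bounded by those of `z`. They have at most `3 * |H| * t`
zeros, and on a fibre of `z` they restrict to functions in the image of `φ`, so fibres are repair
groups. For `r = 2` take the polynomials of degree at most one in `x`, because `x` is injective
on a fibre. For `r = 3 * |H| - 2` divide the elements of `L(r ∞)` by the denominator of `z`: if one
of them vanishes at `r` points of a fibre, these add up to zero, as do all the points of the fibre,
so the two points left over are opposite, whereas `z (-P) = z P + 1`.
-/

section EvaluationCode

open Finset Module

variable {F : Type*} [Field F] {X : Type*} {V : Type*} [AddCommGroup V] [Module F V]

/-- The Reed–Solomon-like encoder `(v, c) ↦ ∑ j < t, z ^ j * φ (v j) + c • z ^ t`. On a fibre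
of `z` its words agree with words of `φ`, which makes the fibres of `z` repair groups. -/
def fibrationEncoder (z : X → F) (φ : V →ₗ[F] X → F) (t : ℕ) :
    (Fin t → V) × F →ₗ[F] X → F :=
  (∑ j : Fin t, LinearMap.mulLeft F (z ^ (j : ℕ)) ∘ₗ φ ∘ₗ LinearMap.proj j).coprod
    (LinearMap.toSpanSingleton F _ (z ^ t))

theorem fibrationEncoder_apply (z : X → F) (φ : V →ₗ[F] X → F) {t : ℕ} (a : (Fin t → V) × F)
    (x : X) :
    fibrationEncoder z φ t a x = ∑ j : Fin t, z x ^ (j : ℕ) * φ (a.1 j) x + a.2 * z x ^ t := by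
  simp [fibrationEncoder]

theorem exists_map_eq_sum_pow_mul_add {φ : V →ₗ[F] X → F} {e : V} (he : φ e = 1)
    {t : ℕ} (a : (Fin t → V) × F) (ζ : F) :
    ∃ v, φ v = fun x ↦ ∑ j : Fin t, ζ ^ (j : ℕ) * φ (a.1 j) x + a.2 * ζ ^ t :=
  ⟨∑ j : Fin t, ζ ^ (j : ℕ) • a.1 j + (a.2 * ζ ^ t) • e, by ext; simp [he]⟩

theorem exists_fibrationEncoder_eq_eval (z : X → F) {φ : V →ₗ[F] X → F} {e : V} (he : φ e = 1)
    {p : Polynomial F} (hp : p.Monic) {t : ℕ} (hdeg : p.natDegree = t) :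
    ∃ a, fibrationEncoder z φ t a = fun x ↦ p.eval (z x) := by
  subst hdeg
  refine ⟨(fun j ↦ p.coeff j • e, 1), funext fun x ↦ ?_⟩
  rw [fibrationEncoder_apply, Polynomial.eval_eq_sum_range, sum_range_succ, hp.coeff_natDegree,
    sum_range]
  simp [he, mul_comm]

theorem eq_zero_of_forall_sum_mul_pow_eq_zero {n : ℕ} {a : Fin n → F} {s : Finset F} (hs : n ≤ #s)
    (h : ∀ ζ ∈ s, ∑ i, a i * ζ ^ (i : ℕ) = 0) : a = 0 := by
  let node : Fin n → F := fun i ↦ s.equivFin.symm (i.castLE hs)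
  refine Matrix.eq_zero_of_forall_index_sum_mul_pow_eq_zero (f := node) ?_ fun i ↦ ?_
  · exact Subtype.val_injective.comp (s.equivFin.symm.injective.comp (Fin.castLE_injective hs))
  · exact h _ (coe_mem _)

theorem exists_mem_filtration_map_eq_pow_mul_fibrationEncoder {A : Type*} [CommRing A] [Algebra F A]
    {L : ℕ → Submodule F A} [SetLike.GradedMonoid L] {ev : A →ₐ[F] X → F} {U Z : A} {z : X → F}
    {φ : V →ₗ[F] X → F} {N t : ℕ} (hZ : Z ∈ L N) (hU : U ∈ L N) (hUZ : ev Z = ev U * z)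
    (hφ : ∀ v, ∃ f ∈ L N, ev f = ev U * φ v) (a : (Fin t → V) × F) :
    ∃ f ∈ L (N * t), ev f = ev U ^ t * fibrationEncoder z φ t a := by
  choose g hgL hg using hφ
  refine ⟨∑ j : Fin t, Z ^ (j : ℕ) * U ^ (t - 1 - j) * g (a.1 j) + a.2 • Z ^ t,
    add_mem (sum_mem fun j _ ↦ ?_) (Submodule.smul_mem _ _ ?_), ?_⟩
  · convert SetLike.mul_mem_graded (SetLike.mul_mem_graded (SetLike.pow_mem_graded j hZ)
      (SetLike.pow_mem_graded (t - 1 - j) hU)) (hgL (a.1 j)) using 2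
    simp only [smul_eq_mul, ← add_mul, ← Nat.succ_mul]
    rw [mul_comm N]
    congr 1
    lia
  · simpa [mul_comm] using SetLike.pow_mem_graded t hZ
  · ext x
    simp only [map_add, map_sum, map_mul, map_pow, map_smul, hUZ, hg, Pi.add_apply, Pi.mul_apply,
      Pi.pow_apply, Pi.smul_apply, Finset.sum_apply, smul_eq_mul, fibrationEncoder_apply,
      mul_add, mul_sum]
    congr 1
    · refine sum_congr rfl fun j _ ↦ ?_
      have hpow : ev U x ^ t = ev U x ^ (j : ℕ) * ev U x ^ (t - 1 - j) * ev U x := by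
        rw [← pow_add, ← pow_succ]
        congr 1
        lia
      rw [hpow]
      ring
    · ring

variable [DecidableEq F] [Fintype X]

theorem existsOptimalLRC_of_fintype {n k d r δ : ℕ} (C : Submodule F (X → F))
    (hn : Fintype.card X = n) (hk : finrank F C = k)
    (hd : ∀ v ∈ C, v ≠ 0 → d ≤ hammingNorm v)
    (hdmin : ∃ v ∈ C, v ≠ 0 ∧ hammingNorm v = d)
    (hloc : ∀ i, ∃ R : Finset X, i ∈ R ∧ #R ≤ r + δ - 1 ∧
      ∀ v ∈ C, (∃ j ∈ R, v j ≠ 0) → δ ≤ #{j ∈ R | v j ≠ 0})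
    (hopt : SingletonOptimal n k d r δ) : ExistsOptimalLRC F n k d r δ := by
  obtain ⟨e⟩ : Nonempty (Fin n ≃ X) := Fintype.card_eq.mp (by rw [Fintype.card_fin, hn])
  have hweight (v : X → F) : hammingWt (v ∘ e) = hammingNorm v :=
    card_bij (fun i _ ↦ e i) (by simp) (fun _ _ _ _ h ↦ e.injective h)
      fun x hx ↦ ⟨e.symm x, by simpa using hx, e.apply_symm_apply x⟩
  let reindex := LinearEquiv.funCongrLeft F F e
  refine ⟨C.map reindex.toLinearMap, ?_, ⟨?_, ?_⟩, fun i ↦ ?_, hopt⟩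
  · rw [reindex.finrank_map_eq C, hk]
  · rintro _ ⟨v, hv, rfl⟩ hv0
    exact (hd v hv fun h ↦ hv0 (h ▸ map_zero _)).trans_eq (hweight v).symm
  · obtain ⟨v, hv, hv0, hvd⟩ := hdmin
    exact ⟨_, Submodule.mem_map_of_mem hv, reindex.map_ne_zero_iff.mpr hv0, (hweight v).trans hvd⟩
  · obtain ⟨R, hiR, hR, hdist⟩ := hloc (e i)
    refine ⟨R.map e.symm.toEmbedding, mem_map_equiv.mpr hiR, (card_map _).trans_le hR, ?_⟩
    rintro _ ⟨v, hv, rfl⟩ ⟨j, hj, hvj⟩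
    rw [filter_map, card_map]
    simpa [Function.comp_def, reindex] using hdist v hv ⟨e j, mem_map_equiv.mp hj, hvj⟩

theorem singletonOptimal_fibration {N m r δ t : ℕ} (hr : 0 < r) (hN : N + 1 = r + δ) (ht : t ≤ m) :
    SingletonOptimal (N * m) (r * t + 1) (N * (m - t)) r δ := by
  have hceil : (r * t + 1 + r - 1) / r = t + 1 := by
    rw [show r * t + 1 + r - 1 = r * (t + 1) by lia, Nat.mul_div_cancel_left _ hr]
  have hNδ : (N : ℤ) = r + δ - 1 := by lia
  rw [SingletonOptimal, hceil]
  push_cast [ht, hNδ]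
  ring

theorem card_filter_mem_of_card_fiber {Y : Type*} [DecidableEq Y] {z : X → Y} {N : ℕ}
    (hfib : ∀ ζ ∈ univ.image z, #{x | z x = ζ} = N) {T : Finset Y} (hT : T ⊆ univ.image z) :
    #{x | z x ∈ T} = N * #T := by
  have hmaps : Set.MapsTo z ({x | z x ∈ T} : Finset X) T := fun x hx ↦ by simpa using hx
  rw [card_eq_sum_card_fiberwise hmaps, mul_comm, ← smul_eq_mul, ← sum_const]
  refine sum_congr rfl fun ζ hζ ↦ ?_
  rw [← hfib ζ (hT hζ), filter_filter]
  congr 1 with x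
  simp +contextual [hζ]

variable {z : X → F} {φ : V →ₗ[F] X → F} {e : V} {N m r t : ℕ}

theorem fibrationEncoder_injective (he : φ e = 1) (hr : r ≤ N)
    (hfib : ∀ ζ ∈ univ.image z, #{x | z x = ζ} = N)
    (hφ : ∀ ζ ∈ univ.image z, ∀ v ≠ 0, #{x | z x = ζ ∧ φ v x = 0} < r)
    (ht : t < #(univ.image z)) : Function.Injective (fibrationEncoder z φ t) := by
  have eq_zero_of_fiber (ζ) (hζ : ζ ∈ univ.image z) (v) (hv : ∀ x, z x = ζ → φ v x = 0) :
      v = 0 := by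
    by_contra hv0
    refine (hr.trans_eq (hfib ζ hζ).symm).not_gt (lt_of_eq_of_lt ?_ (hφ ζ hζ v hv0))
    congr 1 with x
    simpa using hv x
  rw [← LinearMap.ker_eq_bot, LinearMap.ker_eq_bot']
  intro a ha
  have hcoeff (x : X) : (Fin.snoc (fun j ↦ φ (a.1 j) x) a.2 : Fin (t + 1) → F) = 0 := by
    refine eq_zero_of_forall_sum_mul_pow_eq_zero ht fun ζ hζ ↦ ?_
    obtain ⟨v, hv⟩ := exists_map_eq_sum_pow_mul_add he a ζ
    have hv0 : v = 0 := eq_zero_of_fiber ζ hζ v fun y hy ↦ by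
      simp [hv, ← hy, ← fibrationEncoder_apply, ha]
    simpa [Fin.sum_univ_castSucc, hv0, mul_comm, eq_comm] using congr_fun hv x
  obtain ⟨ζ, hζ⟩ := card_pos.mp (t.zero_le.trans_lt ht)
  obtain ⟨x, -, _⟩ := mem_image.mp hζ
  refine Prod.ext (funext fun j ↦ eq_zero_of_fiber ζ hζ _ fun y _ ↦ ?_) ?_
  · simpa using congr_fun (hcoeff y) j.castSucc
  · simpa using congr_fun (hcoeff x) (Fin.last t)

theorem exists_hammingNorm_fibrationEncoder_eq (he : φ e = 1)
    (hfib : ∀ ζ ∈ univ.image z, #{x | z x = ζ} = N) (hm : #(univ.image z) = m) (ht : t ≤ m) :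
    ∃ a, hammingNorm (fibrationEncoder z φ t a) = N * (m - t) := by
  obtain ⟨T, hT, hTcard⟩ := exists_subset_card_eq (ht.trans_eq hm.symm)
  obtain ⟨a, ha⟩ := exists_fibrationEncoder_eq_eval z he (Polynomial.monic_prod_X_sub_C id T)
    ((Polynomial.natDegree_finsetProd_X_sub_C_eq_card T id).trans hTcard)
  refine ⟨a, ?_⟩
  rw [← hm, show #(univ.image z) - t = #(univ.image z \ T) by rw [card_sdiff_of_subset hT, hTcard],
    ← card_filter_mem_of_card_fiber hfib sdiff_subset, ha, hammingNorm]
  congr 1 with x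
  simp [Polynomial.eval_prod, prod_eq_zero_iff, sub_eq_zero]

theorem le_card_filter_fibrationEncoder_ne_zero {δ : ℕ} (he : φ e = 1) (hN : N + 1 = r + δ)
    (hfib : ∀ ζ ∈ univ.image z, #{x | z x = ζ} = N)
    (hφ : ∀ ζ ∈ univ.image z, ∀ v ≠ 0, #{x | z x = ζ ∧ φ v x = 0} < r) (a : (Fin t → V) × F)
    {ζ : F} (ha : ∃ x, z x = ζ ∧ fibrationEncoder z φ t a x ≠ 0) :
    δ ≤ #{x | z x = ζ ∧ fibrationEncoder z φ t a x ≠ 0} := by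
  obtain ⟨x, rfl, hax⟩ := ha
  have hζ : z x ∈ univ.image z := mem_image_of_mem z (mem_univ x)
  obtain ⟨v, hv⟩ := exists_map_eq_sum_pow_mul_add he a (z x)
  have hword (y) (hy : z y = z x) : fibrationEncoder z φ t a y = φ v y := by
    rw [fibrationEncoder_apply, hv, hy]
  have hv0 : v ≠ 0 := by
    rintro rfl
    simp [hword] at hax
  have hsplit := card_filter_add_card_filter_not (s := {y | z y = z x})
    fun y ↦ fibrationEncoder z φ t a y = 0
  rw [hfib _ hζ, filter_filter, filter_filter] at hsplit
  have hzeros : #{y | z y = z x ∧ fibrationEncoder z φ t a y = 0} < r := by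
    refine (congr_arg card (filter_congr fun y _ ↦ ?_)).trans_lt (hφ _ hζ v hv0)
    exact and_congr_right fun hy ↦ by rw [hword y hy]
  lia

theorem existsOptimalLRC_of_fibration {δ : ℕ} (he : φ e = 1) (hV : finrank F V = r) (hr : r ≤ N)
    (hN : N + 1 = r + δ) (hfib : ∀ ζ ∈ univ.image z, #{x | z x = ζ} = N)
    (hφ : ∀ ζ ∈ univ.image z, ∀ v ≠ 0, #{x | z x = ζ ∧ φ v x = 0} < r)
    (hm : #(univ.image z) = m) (ht : t < m)
    (hzeros : ∀ a, fibrationEncoder z φ t a ≠ 0 → #{x | fibrationEncoder z φ t a x = 0} ≤ N * t) :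
    ExistsOptimalLRC F (N * m) (r * t + 1) (N * (m - t)) r δ := by
  obtain ⟨x₀, -⟩ := image_nonempty.mp (card_pos.mp (hm ▸ pos_of_gt ht))
  have he0 : e ≠ 0 := by
    rintro rfl
    simpa using congr_fun he x₀
  have hr0 : 0 < r := pos_of_gt (hφ (z x₀) (mem_image_of_mem z (mem_univ x₀)) e he0)
  have hcard : Fintype.card X = N * m := by
    rw [← card_univ, ← hm, ← card_filter_mem_of_card_fiber hfib subset_rfl]
    simp
  refine existsOptimalLRC_of_fintype (fibrationEncoder z φ t).range hcard ?_ ?_ ?_ (fun x ↦ ?_)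
    (singletonOptimal_fibration hr0 hN ht.le)
  · have : Module.Finite F V := finite_of_finrank_pos (hV ▸ hr0)
    rw [LinearMap.finrank_range_of_inj (fibrationEncoder_injective he hr hfib hφ (hm ▸ ht))]
    simp [finrank_pi_fintype, hV, mul_comm]
  · rintro _ ⟨a, rfl⟩ ha
    have hsplit := card_filter_add_card_filter_not (s := univ)
      fun x ↦ fibrationEncoder z φ t a x = 0
    rw [card_univ, hcard] at hsplit
    rw [hammingNorm, Nat.mul_sub]
    have := hzeros a ha
    lia
  · obtain ⟨a, ha⟩ := exists_hammingNorm_fibrationEncoder_eq he hfib hm ht.le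
    have hpos : 0 < N * (m - t) := Nat.mul_pos (hr0.trans_le hr) (Nat.sub_pos_of_lt ht)
    exact ⟨_, LinearMap.mem_range_self _ a, hammingNorm_pos_iff.mp (ha ▸ hpos), ha⟩
  · refine ⟨({y | z y = z x} : Finset X), by simp,
      by rw [hfib _ (mem_image_of_mem z (mem_univ x))]; lia, ?_⟩
    rintro _ ⟨a, rfl⟩ ha
    rw [filter_filter]
    exact le_card_filter_fibrationEncoder_ne_zero he hN hfib hφ a (by simpa using ha)

theorem existsOptimalLRC_of_filtration {A : Type*} [CommRing A] [Algebra F A]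
    {L : ℕ → Submodule F A} [SetLike.GradedMonoid L] {ev : A →ₐ[F] X → F} {U Z : A} {δ : ℕ}
    (hZ : Z ∈ L N) (hU : U ∈ L N)
    (hUZ : ev Z = ev U * z) (hU0 : ∀ x, ev U x ≠ 0)
    (hφL : ∀ v, ∃ f ∈ L N, ev f = ev U * φ v)
    (hL : ∀ n, ∀ f ∈ L n, ev f ≠ 0 → #{x | ev f x = 0} ≤ n)
    (he : φ e = 1) (hV : finrank F V = r) (hr : r ≤ N)
    (hN : N + 1 = r + δ) (hfib : ∀ ζ ∈ univ.image z, #{x | z x = ζ} = N)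
    (hφ : ∀ ζ ∈ univ.image z, ∀ v ≠ 0, #{x | z x = ζ ∧ φ v x = 0} < r)
    (hm : #(univ.image z) = m) (ht : t < m) :
    ExistsOptimalLRC F (N * m) (r * t + 1) (N * (m - t)) r δ := by
  refine existsOptimalLRC_of_fibration he hV hr hN hfib hφ hm ht fun a ha ↦ ?_
  obtain ⟨f, hfL, hf⟩ := exists_mem_filtration_map_eq_pow_mul_fibrationEncoder hZ hU hUZ hφL a
  have hzero (x) : ev f x = 0 ↔ fibrationEncoder z φ t a x = 0 := by simp [hf, hU0]
  have hf0 : ev f ≠ 0 := fun h ↦ ha (funext fun x ↦ (hzero x).mp (congr_fun h x))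
  simpa only [hzero] using hL _ f hfL hf0

end EvaluationCode

section StableSubgroups

open AddSubgroup

variable {A : Type*} [AddCommGroup A]

theorem natCard_preimage_quotientMk (B : AddSubgroup A) (S : Set (A ⧸ B)) :
    Nat.card ((QuotientAddGroup.mk : A → A ⧸ B) ⁻¹' S) = Nat.card B * Nat.card S :=
  (Nat.card_congr (QuotientAddGroup.preimageMkEquivAddSubgroupProdSet B S)).trans
    (Nat.card_prod _ _)

theorem natCard_comap_le {G G' : Type*} [AddGroup G] [AddGroup G'] (f : G →+ G')
    (H : AddSubgroup G') [Finite H] : Nat.card (H.comap f) ≤ Nat.card f.ker * Nat.card H := by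
  have hker : f.ker ≤ H.comap f := comap_mono bot_le
  rw [← relIndex_bot_left, ← relIndex_bot_left (H := f.ker),
    ← relIndex_mul_relIndex _ _ _ bot_le hker, relIndex_ker]
  exact Nat.mul_le_mul_left _ (card_le_of_le (map_comap_le f H))

theorem exists_stable_natCard_mul {ω : A →+ A} {B : AddSubgroup A} (hB : B ≤ B.comap ω)
    {K : AddSubgroup (A ⧸ B)} (hK : K ≤ K.comap (QuotientAddGroup.map B B ω hB)) :
    ∃ H : AddSubgroup A, H ≤ H.comap ω ∧ Nat.card H = Nat.card B * Nat.card K :=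
  ⟨K.comap (QuotientAddGroup.mk' B), fun a ha ↦ hK (x := (a : A ⧸ B)) ha,
    natCard_preimage_quotientMk B K⟩

theorem dvd_natCard_quotient [Finite A] {B : AddSubgroup A} {d : ℕ}
    (h : Nat.card B * d ∣ Nat.card A) : d ∣ Nat.card (A ⧸ B) := by
  rw [B.card_eq_card_quotient_mul_card_addSubgroup, mul_comm (Nat.card (A ⧸ B))] at h
  exact Nat.dvd_of_mul_dvd_mul_left Nat.card_pos h

variable {ω : A →+ A} (hω : ∀ a, a + ω a + ω (ω a) = 0)

include hω

theorem map_map_map_of_add_map_add_map_map_eq_zero (a : A) : ω (ω (ω a)) = a := by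
  linear_combination (norm := module) hω (ω a) - hω a

theorem card_orbit_eq_three [DecidableEq A] {a : A} (ha : ω a ≠ a) :
    ({a, ω a, ω (ω a)} : Finset A).card = 3 := by
  have hω3 := map_map_map_of_add_map_add_map_map_eq_zero hω
  have hinj : Function.Injective ω := Function.LeftInverse.injective (g := ω ∘ ω) hω3
  refine Finset.card_eq_three.mpr ⟨_, _, _, ha.symm, fun h ↦ ha ?_, fun h ↦ ha (hinj h).symm, rfl⟩
  rw [h, hω3, ← h]

theorem quotient_add_map_add_map_map_eq_zero {B : AddSubgroup A} (hB : B ≤ B.comap ω) (x : A ⧸ B) :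
    x + QuotientAddGroup.map B B ω hB x +
      QuotientAddGroup.map B B ω hB (QuotientAddGroup.map B B ω hB x) = 0 := by
  obtain ⟨a, rfl⟩ := QuotientAddGroup.mk_surjective x
  exact congr_arg (QuotientAddGroup.mk : A → A ⧸ B) (hω a)

variable [Finite A]

theorem exists_stable_natCard_prime {p : ℕ} [Fact p.Prime] {l : ℤ} (hl : (p : ℤ) ∣ l ^ 2 + l + 1)
    (hp : p ∣ Nat.card A) : ∃ H : AddSubgroup A, H ≤ H.comap ω ∧ Nat.card H = p := by
  suffices ∃ a, addOrderOf a = p ∧ ω a ∈ zmultiples a by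
    obtain ⟨a, ha, hωa⟩ := this
    exact ⟨zmultiples a, zmultiples_le.mpr hωa, by rw [Nat.card_zmultiples, ha]⟩
  obtain ⟨a, ha⟩ := exists_prime_addOrderOf_dvd_card' p hp
  by_cases hla : ω a = l • a
  · exact ⟨a, ha, l, hla.symm⟩
  -- Modulo `p`, `X² + X + 1 = (X - l) (X + l + 1)`.
  refine ⟨ω a - l • a, addOrderOf_eq_prime ?_ (sub_ne_zero.mpr hla), -(l + 1), ?_⟩
  · rw [smul_sub, ← map_nsmul, smul_comm, ← ha, addOrderOf_nsmul_eq_zero]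
    simp
  · have hkill : (l ^ 2 + l + 1) • a = 0 := addOrderOf_dvd_iff_zsmul_eq_zero.mp (ha ▸ hl)
    change -(l + 1) • (ω a - l • a) = ω (ω a - l • a)
    rw [map_sub, map_zsmul]
    linear_combination (norm := module) hkill - hω a

theorem exists_stable_natCard_prime_sq {p : ℕ} [Fact p.Prime] (hp : p ^ 2 ∣ Nat.card A) :
    ∃ H : AddSubgroup A, H ≤ H.comap ω ∧ Nat.card H = p ^ 2 := by
  obtain ⟨a, ha⟩ := exists_prime_addOrderOf_dvd_card' p ((dvd_pow_self p two_ne_zero).trans hp)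
  have hcard : Nat.card (zmultiples a) = p := by rw [Nat.card_zmultiples, ha]
  by_cases hωa : ω a ∈ zmultiples a
  · obtain ⟨l, hl⟩ := id hωa
    have hdvd : (p : ℤ) ∣ l ^ 2 + l + 1 := by
      rw [← ha, addOrderOf_dvd_iff_zsmul_eq_zero, ← hω a, ← hl, map_zsmul, ← hl]
      module
    have hstable : zmultiples a ≤ (zmultiples a).comap ω := zmultiples_le.mpr hωa
    obtain ⟨K, hK, hKcard⟩ := exists_stable_natCard_prime
      (quotient_add_map_add_map_map_eq_zero hω hstable) hdvd
      (dvd_natCard_quotient (by rwa [hcard, ← sq]))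
    simpa only [hcard, hKcard, ← sq] using exists_stable_natCard_mul hstable hK
  · let K := zmultiples (ω a : A ⧸ zmultiples a)
    have hK : Nat.card K = p := by
      rw [Nat.card_zmultiples]
      refine addOrderOf_eq_prime ?_ (mt (QuotientAddGroup.eq_zero_iff _).mp hωa)
      rw [← QuotientAddGroup.mk_nsmul, ← map_nsmul, ← ha, addOrderOf_nsmul_eq_zero, map_zero]
      rfl
    have hsup : K.comap (QuotientAddGroup.mk' _) = zmultiples a ⊔ zmultiples (ω a) := by
      rw [← QuotientAddGroup.comap_map_mk', AddMonoidHom.map_zmultiples]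
      rfl
    refine ⟨K.comap (QuotientAddGroup.mk' _), ?_, ?_⟩
    · have hωωa : ω (ω a) = -(a + ω a) := (neg_eq_of_add_eq_zero_right (hω a)).symm
      rw [hsup, sup_le_iff, zmultiples_le, zmultiples_le, mem_comap, mem_comap, hωωa]
      have ha : a ∈ zmultiples a ⊔ zmultiples (ω a) := mem_sup_left (mem_zmultiples a)
      have hωa : ω a ∈ zmultiples a ⊔ zmultiples (ω a) := mem_sup_right (mem_zmultiples (ω a))
      exact ⟨hωa, neg_mem (add_mem ha hωa)⟩
    · calc
        _ = Nat.card (zmultiples a) * Nat.card K := natCard_preimage_quotientMk _ _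
        _ = p ^ 2 := by rw [hcard, hK, sq]

theorem exists_stable_natCard_sq {n : ℕ} (hn : n ^ 2 ∣ Nat.card A) :
    ∃ H : AddSubgroup A, H ≤ H.comap ω ∧ Nat.card H = n ^ 2 := by
  induction n using Nat.recOnMul generalizing A with
  | zero => simp [Nat.card_pos.ne'] at hn
  | one => exact ⟨⊥, bot_le, by simp⟩
  | prime p hp =>
    have := Fact.mk hp
    exact exists_stable_natCard_prime_sq hω hn
  | mul m n ihm ihn =>
    rw [mul_pow] at hn ⊢
    obtain ⟨B, hB, hBcard⟩ := ihm hω (dvd_of_mul_right_dvd hn)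
    obtain ⟨K, hK, hKcard⟩ := ihn (quotient_add_map_add_map_map_eq_zero hω hB)
      (dvd_natCard_quotient (by rwa [hBcard]))
    simpa only [hBcard, hKcard] using exists_stable_natCard_mul hB hK

end StableSubgroups

section PointCount

open Finset

variable {F : Type*} [Field F]

theorem exists_sq_add_self_add_one_eq_zero [Fintype F] {s : ℕ}
    (hF : Fintype.card F = 2 ^ (2 * s)) : ∃ ζ : F, ζ ^ 2 + ζ + 1 = 0 := by
  classical
  have h3 : 3 ∣ Fintype.card Fˣ := by
    rw [Fintype.card_units, hF, pow_mul]
    have hdvd := Nat.sub_dvd_pow_sub_pow (2 ^ 2) 1 s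
    rwa [one_pow] at hdvd
  obtain ⟨g, hg⟩ := exists_prime_orderOf_dvd_card 3 h3
  have hcube : (g : F) ^ 3 = 1 := by
    rw [← Units.val_pow_eq_pow_val, ← hg, pow_orderOf_eq_one, Units.val_one]
  have hne : (g : F) - 1 ≠ 0 := by
    rw [sub_ne_zero, Ne, Units.val_eq_one, ← orderOf_eq_one_iff, hg]
    norm_num
  refine ⟨g, (mul_eq_zero.mp ?_).resolve_left hne⟩
  linear_combination hcube

variable [CharP F 2]

/-- The additive map `y ↦ y² + y` in characteristic two, whose fibres over `x³ + c` are the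
points of the curve `y² + y = x³ + c` above `x`. -/
@[simps]
def artinSchreierMap (F : Type*) [Field F] [CharP F 2] : F →+ F where
  toFun y := y ^ 2 + y
  map_zero' := by simp
  map_add' a b := by rw [CharTwo.add_sq]; ring

theorem artinSchreierMap_eq_iff {x y : F} :
    artinSchreierMap F x = artinSchreierMap F y ↔ x = y ∨ x = y + 1 := by
  rw [← sub_eq_zero, ← sub_eq_zero (a := x), ← sub_eq_zero (a := x), ← mul_eq_zero]
  refine Eq.congr_left ?_
  rw [artinSchreierMap_apply, artinSchreierMap_apply]
  linear_combination (norm := (ring_nf; reduce_mod_char!))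

section Finite

variable [Finite F]

theorem index_range_artinSchreierMap : (artinSchreierMap F).range.index = 2 := by
  have hker : ((artinSchreierMap F).ker : Set F) = {0, 1} := by
    ext y
    simpa using artinSchreierMap_eq_iff (x := y) (y := 0)
  have hcard : Nat.card (artinSchreierMap F).ker = 2 := by
    rw [← SetLike.coe_sort_coe, hker, Nat.card_coe_set_eq, Set.ncard_pair zero_ne_one]
  have hrange := (artinSchreierMap F).range.card_mul_index
  rw [← (artinSchreierMap F).ker.card_mul_index, AddSubgroup.index_ker, hcard, mul_comm 2] at hrange
  exact Nat.eq_of_mul_eq_mul_left Nat.card_pos hrange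

open Classical in
/-- The quadratic additive character of a finite field of characteristic two: `1` at the values
of `y ↦ y² + y` and `-1` elsewhere, that is `(-1) ^ Tr a`. -/
noncomputable def artinSchreierChar (F : Type*) [Field F] [CharP F 2] [Finite F] :
    AddChar F ℤ where
  toFun a := if a ∈ (artinSchreierMap F).range then 1 else -1
  map_zero_eq_one' := if_pos (zero_mem _)
  map_add_eq_mul' a b := by
    simp only [AddSubgroup.add_mem_iff_of_index_two index_range_artinSchreierMap]
    by_cases ha : a ∈ (artinSchreierMap F).range <;>
      by_cases hb : b ∈ (artinSchreierMap F).range <;> simp [ha, hb]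

theorem artinSchreierChar_of_mem {a : F} (ha : a ∈ (artinSchreierMap F).range) :
    artinSchreierChar F a = 1 :=
  if_pos ha

theorem artinSchreierChar_of_notMem {a : F} (ha : a ∉ (artinSchreierMap F).range) :
    artinSchreierChar F a = -1 :=
  if_neg ha

theorem exists_artinSchreierChar_eq_neg_one : ∃ a : F, artinSchreierChar F a = -1 := by
  by_contra! hne
  have htop : (artinSchreierMap F).range = ⊤ :=
    (AddSubgroup.eq_top_iff' _).mpr fun a ↦
      by_contra fun ha ↦ hne a (artinSchreierChar_of_notMem ha)
  simpa [htop] using index_range_artinSchreierMap (F := F)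

theorem artinSchreierChar_sq (y : F) : artinSchreierChar F (y ^ 2) = artinSchreierChar F y := by
  rw [← mul_one (artinSchreierChar F _), ← artinSchreierChar_of_mem (a := y ^ 2 + y) ⟨y, rfl⟩,
    ← AddChar.map_add_eq_mul, ← add_assoc, CharTwo.add_self_eq_zero, zero_add]

end Finite

variable [Fintype F] [DecidableEq F]

theorem card_filter_sq_add_self_eq (a : F) :
    (#{y : F | y ^ 2 + y = a} : ℤ) = 1 + artinSchreierChar F a := by
  by_cases ha : a ∈ (artinSchreierMap F).range
  · rw [artinSchreierChar_of_mem ha]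
    obtain ⟨y, rfl⟩ := ha
    have hfiber : ({x | x ^ 2 + x = artinSchreierMap F y} : Finset F) = {y, y + 1} := by
      ext x
      simpa using artinSchreierMap_eq_iff (x := x) (y := y)
    rw [hfiber, card_pair (by simp)]
    norm_num
  · have hempty : ({y | y ^ 2 + y = a} : Finset F) = ∅ :=
      filter_false_of_mem fun y _ hy ↦ ha ⟨y, hy⟩
    rw [hempty, artinSchreierChar_of_notMem ha]
    simp

theorem sum_artinSchreierChar_sq_mul (v : F) :
    ∑ x, artinSchreierChar F (x ^ 2 * v) = if v = 0 then (Fintype.card F : ℤ) else 0 := by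
  have hprim : (artinSchreierChar F).IsPrimitive := by
    refine AddChar.IsPrimitive.of_ne_one fun h ↦ ?_
    obtain ⟨a, ha⟩ := exists_artinSchreierChar_eq_neg_one (F := F)
    norm_num [h] at ha
  have hfrob : Function.Bijective (frobenius F 2) := bijective_frobenius F 2
  have hsum := AddChar.sum_mulShift v hprim
  rw [Nat.cast_ite, Nat.cast_zero] at hsum
  rw [← hsum]
  exact hfrob.sum_comp fun x ↦ artinSchreierChar F (x * v)

theorem card_filter_add_pow_four_eq_zero {ζ : F} (hζ : ζ ^ 2 + ζ + 1 = 0) :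
    #{u : F | u + u ^ 4 = 0} = 4 := by
  have hroots : ({u | u + u ^ 4 = 0} : Finset F) = {0, 1, ζ, ζ + 1} := by
    ext u
    simp only [mem_filter_univ, mem_insert, mem_singleton, ← sub_eq_zero (a := u), ← mul_eq_zero]
    refine Eq.congr_left ?_
    linear_combination (norm := (ring_nf; reduce_mod_char!)) (-u * (u - 1)) * hζ
  have hζ0 : ζ ≠ 0 := by rintro rfl; simp at hζ
  have hζ1 : ζ ≠ 1 := by
    rintro rfl
    simp [CharTwo.add_self_eq_zero] at hζ
  have hζ1' : ζ + 1 ≠ 0 := by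
    rwa [← CharTwo.sub_eq_add, sub_ne_zero]
  rw [hroots, card_insert_of_notMem, card_insert_of_notMem, card_pair] <;>
    simp [hζ0, hζ0.symm, hζ1.symm, hζ1'.symm]

omit [DecidableEq F] in
theorem sum_artinSchreierChar_cube_sq {ζ : F} (hζ : ζ ^ 2 + ζ + 1 = 0) :
    (∑ x : F, artinSchreierChar F (x ^ 3)) ^ 2 = 4 * Fintype.card F := by
  classical
  set χ := artinSchreierChar F
  have hχ1 : χ 1 = 1 := artinSchreierChar_of_mem ⟨ζ, by
    rw [artinSchreierMap_apply, ← sub_eq_zero, CharTwo.sub_eq_add, hζ]⟩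
  have hshift (u x : F) : χ (x ^ 3) * χ ((x + u) ^ 3) = χ (u ^ 3) * χ (x ^ 2 * (u + u ^ 4)) := by
    have hexpand : x ^ 3 + (x + u) ^ 3 = u ^ 3 + x ^ 2 * u + x * u ^ 2 := by
      linear_combination (norm := (ring_nf; reduce_mod_char!))
    rw [← AddChar.map_add_eq_mul, hexpand, mul_add, AddChar.map_add_eq_mul, AddChar.map_add_eq_mul,
      AddChar.map_add_eq_mul, ← artinSchreierChar_sq (x * u ^ 2), mul_pow, ← pow_mul, mul_assoc]
  have hroot (u : F) (hu : u + u ^ 4 = 0) : χ (u ^ 3) = 1 := by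
    have : u * (u ^ 3 + 1) = 0 := by rw [← hu]; ring
    rcases mul_eq_zero.mp this with rfl | h
    · simp
    · rwa [CharTwo.add_eq_zero.mp h]
  calc (∑ x, χ (x ^ 3)) ^ 2
      = ∑ x, ∑ u, χ (x ^ 3) * χ ((x + u) ^ 3) := by
        rw [sq, sum_mul]
        refine sum_congr rfl fun x _ ↦ ?_
        rw [← mul_sum]
        exact congrArg _ (Equiv.sum_comp (Equiv.addLeft x) fun u ↦ χ (u ^ 3)).symm
    _ = ∑ u, χ (u ^ 3) * ∑ x, χ (x ^ 2 * (u + u ^ 4)) := by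
        rw [sum_comm]
        simp only [hshift, mul_sum]
    _ = ∑ u : F, if u + u ^ 4 = 0 then (Fintype.card F : ℤ) else 0 := by
        refine sum_congr rfl fun u _ ↦ ?_
        rw [sum_artinSchreierChar_sq_mul]
        split_ifs with hu
        · rw [hroot u hu, one_mul]
        · rw [mul_zero]
    _ = 4 * Fintype.card F := by
        rw [← sum_filter, sum_const, card_filter_add_pow_four_eq_zero hζ]
        simp

theorem card_filter_sq_add_self_eq_cube_add (c : F) :
    (#{P : F × F | P.2 ^ 2 + P.2 = P.1 ^ 3 + c} : ℤ) =
      Fintype.card F + artinSchreierChar F c * ∑ x : F, artinSchreierChar F (x ^ 3) := by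
  calc (#{P : F × F | P.2 ^ 2 + P.2 = P.1 ^ 3 + c} : ℤ)
      = ∑ x : F, (#{y : F | y ^ 2 + y = x ^ 3 + c} : ℤ) := by
        simp only [card_filter, Nat.cast_sum, ← univ_product_univ, sum_product]
    _ = Fintype.card F + artinSchreierChar F c * ∑ x : F, artinSchreierChar F (x ^ 3) := by
        simp [card_filter_sq_add_self_eq, AddChar.map_add_eq_mul, sum_add_distrib, mul_sum,
          mul_comm]

theorem exists_card_filter_sq_add_self_eq_cube_add {s : ℕ} (hF : Fintype.card F = 2 ^ (2 * s)) :
    ∃ c : F, #{P : F × F | P.2 ^ 2 + P.2 = P.1 ^ 3 + c} + 1 = (2 ^ s + 1) ^ 2 := by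
  obtain ⟨ζ, hζ⟩ := exists_sq_add_self_add_one_eq_zero hF
  suffices ∃ c : F, artinSchreierChar F c * ∑ x : F, artinSchreierChar F (x ^ 3) = 2 ^ (s + 1) by
    obtain ⟨c, hc⟩ := this
    refine ⟨c, ?_⟩
    zify
    rw [card_filter_sq_add_self_eq_cube_add, hc, hF]
    push_cast
    ring
  have hsum : ∑ x : F, artinSchreierChar F (x ^ 3) = 2 ^ (s + 1) ∨
      ∑ x : F, artinSchreierChar F (x ^ 3) = -2 ^ (s + 1) := by
    rw [← sq_eq_sq_iff_eq_or_eq_neg, sum_artinSchreierChar_cube_sq hζ, hF]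
    push_cast
    ring
  rcases hsum with h | h
  · exact ⟨0, by rw [h, AddChar.map_zero_eq_one, one_mul]⟩
  · obtain ⟨c, hc⟩ := exists_artinSchreierChar_eq_neg_one (F := F)
    exact ⟨c, by rw [h, hc]; ring⟩

end PointCount

section CommonZeros

variable {F A ι : Type*} [Field F] [CommRing A] [Algebra F A] {φ : ι → A →ₐ[F] F}

theorem isCoprime_ker_of_ne {φ ψ : A →ₐ[F] F} (h : φ ≠ ψ) :
    IsCoprime (RingHom.ker φ) (RingHom.ker ψ) := by
  obtain ⟨a, ha⟩ := DFunLike.ne_iff.mp h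
  rw [Ideal.isCoprime_iff_exists]
  set c := algebraMap F A (ψ a - φ a)⁻¹
  refine ⟨c * (a - algebraMap F A (φ a)), ?_, c * (algebraMap F A (ψ a) - a), ?_, ?_⟩
  · simp [RingHom.mem_ker]
  · simp [RingHom.mem_ker]
  · rw [← mul_add, sub_add_sub_cancel', ← map_sub, ← map_mul,
      inv_mul_cancel₀ (sub_ne_zero.mpr ha.symm), map_one]

theorem exists_forall_algHom_apply_eq [Finite ι] (hφ : Function.Injective φ) (v : ι → F) :
    ∃ a : A, ∀ i, φ i a = v i := by
  obtain ⟨a, ha⟩ := Ideal.exists_forall_sub_mem_ideal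
    (fun i j hij ↦ isCoprime_ker_of_ne (hφ.ne hij)) (fun i ↦ algebraMap F A (v i))
  refine ⟨a, fun i ↦ ?_⟩
  simpa [RingHom.mem_ker, sub_eq_zero] using ha i

theorem mem_prod_ker_iff (hφ : Function.Injective φ) (s : Finset ι) (a : A) :
    a ∈ ∏ i ∈ s, RingHom.ker (φ i) ↔ ∀ i ∈ s, φ i a = 0 := by
  classical
  induction s using Finset.induction_on with
  | empty => simp
  | insert i s hi ih =>
    have hcop : IsCoprime (RingHom.ker (φ i)) (∏ j ∈ s, RingHom.ker (φ j)) :=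
      IsCoprime.prod_right fun j hj ↦ isCoprime_ker_of_ne (hφ.ne (ne_of_mem_of_not_mem hj hi).symm)
    rw [Finset.prod_insert hi, Ideal.mul_eq_inf_of_isCoprime hcop, Submodule.mem_inf, ih,
      Finset.forall_mem_insert, RingHom.mem_ker]

variable {I : Ideal A} {s : Finset ι}

/-- Simultaneous evaluation of classes modulo `I` at finitely many common zeros of `I`. -/
def quotientEval (I : Ideal A) (φ : ι → A →ₐ[F] F) (s : Finset ι)
    (hs : ∀ i ∈ s, I ≤ RingHom.ker (φ i)) : (A ⧸ I) →ₗ[F] s → F :=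
  LinearMap.pi fun i ↦ (Ideal.Quotient.liftₐ I (φ i) (hs i i.2)).toLinearMap

theorem quotientEval_surjective (hφ : Function.Injective φ)
    (hs : ∀ i ∈ s, I ≤ RingHom.ker (φ i)) : Function.Surjective (quotientEval I φ s hs) := by
  intro v
  obtain ⟨a, ha⟩ := exists_forall_algHom_apply_eq (hφ.comp (Subtype.val_injective (p := (· ∈ s)))) v
  exact ⟨Ideal.Quotient.mk I a, funext ha⟩

variable [Module.Finite F (A ⧸ I)]

theorem card_le_finrank_quotient (hφ : Function.Injective φ)
    (hs : ∀ i ∈ s, I ≤ RingHom.ker (φ i)) : s.card ≤ Module.finrank F (A ⧸ I) := by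
  simpa using LinearMap.finrank_le_finrank_of_surjective (quotientEval_surjective hφ hs)

theorem prod_ker_eq_of_finrank_quotient_le (hφ : Function.Injective φ)
    (hs : ∀ i ∈ s, I ≤ RingHom.ker (φ i)) (hcard : Module.finrank F (A ⧸ I) ≤ s.card) :
    ∏ i ∈ s, RingHom.ker (φ i) = I := by
  have hinj : Function.Injective (quotientEval I φ s hs) := by
    refine (LinearMap.injective_iff_surjective_of_finrank_eq_finrank ?_).mpr
      (quotientEval_surjective hφ hs)
    simpa using hcard.antisymm (card_le_finrank_quotient hφ hs)
  ext a
  rw [mem_prod_ker_iff hφ]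
  refine ⟨fun ha ↦ ?_, fun ha i hi ↦ hs i hi ha⟩
  rw [← Ideal.Quotient.eq_zero_iff_mem]
  refine hinj (Eq.trans (funext fun i ↦ ?_) (map_zero _).symm)
  exact ha i i.2

end CommonZeros

section AffinePoints

open Polynomial WeierstrassCurve.Affine

open scoped Polynomial.Bivariate nonZeroDivisors

variable {F : Type*} [Field F] {W : WeierstrassCurve.Affine F}

/-- The first coordinate of a point, with junk value `0` at infinity. -/
def xCoord : W.Point → F
  | .zero => 0
  | .some x _ _ => x

/-- The second coordinate of a point, with junk value `0` at infinity. -/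
def yCoord : W.Point → F
  | .zero => 0
  | .some _ y _ => y

theorem point_ext {P Q : W.Point} (hP : P ≠ 0) (hQ : Q ≠ 0) (hx : xCoord P = xCoord Q)
    (hy : yCoord P = yCoord Q) : P = Q := by
  rcases P with _ | ⟨x, y, h⟩
  · exact absurd rfl hP
  rcases Q with _ | ⟨x', y', h'⟩
  · exact absurd rfl hQ
  cases hx
  cases hy
  rfl

theorem equation_xCoord_yCoord {P : W.Point} (hP : P ≠ 0) :
    W.Equation (xCoord P) (yCoord P) := by
  rcases P with _ | ⟨x, y, h⟩
  · exact absurd rfl hP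
  · exact h.1

instance finite_point [Finite F] : Finite W.Point :=
  (nonsingularPointEquiv W).finite_iff.mpr (inferInstanceAs (Finite (Option _)))

theorem xCoord_neg (P : W.Point) : xCoord (-P) = xCoord P := by
  cases P <;> rfl

theorem eq_or_add_eq_zero_of_xCoord_eq [DecidableEq F] {P Q : W.Point} (hP : P ≠ 0)
    (hQ : Q ≠ 0) (h : xCoord P = xCoord Q) : P = Q ∨ P + Q = 0 := by
  rcases P with _ | ⟨x, y, hxy⟩
  · exact absurd rfl hP
  rcases Q with _ | ⟨x', y', hxy'⟩
  · exact absurd rfl hQ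
  exact (Point.X_eq_iff.mp h).imp_right add_eq_zero_iff_eq_neg.mpr

/-- The points other than the point at infinity. -/
abbrev AffinePoint (W : WeierstrassCurve.Affine F) : Type _ :=
  {P : W.Point // P ≠ 0}

namespace AffinePoint

/-- The value of a regular function at an affine point. -/
noncomputable def evalAlgHom (P : AffinePoint W) : W.CoordinateRing →ₐ[F] F where
  __ := AdjoinRoot.evalEval (p := W.polynomial) (equation_xCoord_yCoord P.2)
  commutes' r := by
    change AdjoinRoot.evalEval (p := W.polynomial) _ (AdjoinRoot.mk _ (C (C r))) = r
    exact (AdjoinRoot.evalEval_mk _ _).trans (by rw [evalEval_C, eval_C])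

variable (P : AffinePoint W)

theorem evalAlgHom_mk (p : F[X][Y]) :
    P.evalAlgHom (CoordinateRing.mk W p) = p.evalEval (xCoord P.1) (yCoord P.1) :=
  AdjoinRoot.evalEval_mk (equation_xCoord_yCoord P.2) p

theorem evalAlgHom_smul (p : F[X]) (f : W.CoordinateRing) :
    P.evalAlgHom (p • f) = p.eval (xCoord P.1) * P.evalAlgHom f := by
  rw [CoordinateRing.smul, map_mul, evalAlgHom_mk, evalEval_C]

theorem evalAlgHom_injective :
    Function.Injective (evalAlgHom : AffinePoint W → W.CoordinateRing →ₐ[F] F) := by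
  intro P Q h
  refine Subtype.ext (point_ext P.2 Q.2 ?_ ?_)
  · simpa only [evalAlgHom_mk, evalEval_C, eval_X] using
      DFunLike.congr_fun h (CoordinateRing.mk W (C X))
  · simpa only [evalAlgHom_mk, evalEval_X] using DFunLike.congr_fun h (CoordinateRing.mk W Y)

/-- The maximal ideal of an affine point, in the form used by Mathlib's class group map. -/
noncomputable def ideal (P : AffinePoint W) : Ideal W.CoordinateRing :=
  CoordinateRing.XYIdeal W (xCoord P.1) (C (yCoord P.1))

theorem ideal_eq_ker : P.ideal = RingHom.ker P.evalAlgHom := by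
  have hmax : P.ideal.IsMaximal :=
    Ideal.Quotient.maximal_of_isField _ <| MulEquiv.isField (Field.toIsField F)
      (CoordinateRing.quotientXYIdealEquiv (equation_xCoord_yCoord P.2)).toMulEquiv
  refine hmax.eq_of_le (RingHom.ker_ne_top _) ?_
  rw [ideal, CoordinateRing.XYIdeal, Ideal.span_le]
  rintro g (rfl | rfl)
  · exact (P.evalAlgHom_mk _).trans (by simp [evalEval_C])
  · exact (P.evalAlgHom_mk _).trans (by simp)

theorem exists_toClass_eq_mk_ideal [DecidableEq F] :
    ∃ I : (FractionalIdeal W.CoordinateRing⁰ W.FunctionField)ˣ,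
      (I : FractionalIdeal W.CoordinateRing⁰ W.FunctionField) = P.ideal ∧
        Point.toClass P.1 = Additive.ofMul (ClassGroup.mk W.FunctionField I) := by
  obtain ⟨_ | ⟨x, y, h⟩, hP⟩ := P
  · exact absurd rfl hP
  · exact ⟨CoordinateRing.XYIdeal' h, rfl, rfl⟩

theorem sum_eq_zero_of_prod_ideal_eq_span [DecidableEq F] {s : Finset (AffinePoint W)}
    {f : W.CoordinateRing} (hf : f ≠ 0) (h : ∏ P ∈ s, P.ideal = Ideal.span {f}) :
    ∑ P ∈ s, (P : W.Point) = 0 := by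
  choose I hI hclass using exists_toClass_eq_mk_ideal (W := W)
  rw [← Point.toClass_eq_zero, map_sum, Finset.sum_congr rfl fun P _ ↦ hclass P, ← ofMul_prod,
    ← map_prod, ofMul_eq_zero]
  refine (ClassGroup.mk_eq_one_of_coe_ideal (I' := ∏ P ∈ s, P.ideal) ?_).mpr ⟨f, hf, h⟩
  simp only [Units.coe_prod, hI]
  exact (map_prod (FractionalIdeal.coeIdealHom W.CoordinateRing⁰ W.FunctionField) _ s).symm

end AffinePoint

end AffinePoints

section PoleFiltration

open Polynomial WeierstrassCurve.Affine

open scoped Polynomial.Bivariate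

variable {F : Type*} [Field F] {W : WeierstrassCurve.Affine F}

theorem degree_norm_smul_basis_le_iff (p q : F[X]) (n : ℕ) :
    (Algebra.norm F[X] (p • (1 : W.CoordinateRing) + q • CoordinateRing.mk W Y)).degree ≤ n ↔
      p ∈ degreeLT F (n / 2 + 1) ∧ q ∈ degreeLT F ((n - 1) / 2) := by
  rw [CoordinateRing.degree_norm_smul_basis, max_le_iff, mem_degreeLT, mem_degreeLT]
  refine and_congr ?_ ?_
  · rcases eq_or_ne p 0 with rfl | hp
    · simp
    · rw [degree_eq_natDegree hp, two_nsmul]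
      norm_cast
      omega
  · rcases eq_or_ne q 0 with rfl | hq
    · simp
    · rw [degree_eq_natDegree hq, two_nsmul]
      norm_cast
      omega

/-- The regular functions on `W` with a pole of order at most `n` at infinity: the pole order of
a function is the degree of its norm to `F[X]`. -/
def poleFiltration (W : WeierstrassCurve.Affine F) (n : ℕ) : Submodule F W.CoordinateRing where
  carrier := {f | (Algebra.norm F[X] f).degree ≤ n}
  zero_mem' := by
    have hzero := (degree_norm_smul_basis_le_iff (W := W) 0 0 n).mpr ⟨zero_mem _, zero_mem _⟩
    rwa [zero_smul, zero_smul, add_zero] at hzero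
  add_mem' {f g} hf hg := by
    obtain ⟨p, q, rfl⟩ := CoordinateRing.exists_smul_basis_eq f
    obtain ⟨p', q', rfl⟩ := CoordinateRing.exists_smul_basis_eq g
    rw [Set.mem_ofPred_eq, degree_norm_smul_basis_le_iff] at hf hg
    rw [Set.mem_ofPred_eq, add_add_add_comm, ← add_smul, ← add_smul, degree_norm_smul_basis_le_iff]
    exact ⟨add_mem hf.1 hg.1, add_mem hf.2 hg.2⟩
  smul_mem' c f hf := by
    obtain ⟨p, q, rfl⟩ := CoordinateRing.exists_smul_basis_eq f
    rw [Set.mem_ofPred_eq, degree_norm_smul_basis_le_iff] at hf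
    rw [Set.mem_ofPred_eq, smul_add, ← smul_assoc, ← smul_assoc, degree_norm_smul_basis_le_iff]
    exact ⟨Submodule.smul_mem _ c hf.1, Submodule.smul_mem _ c hf.2⟩

theorem mem_poleFiltration {n : ℕ} {f : W.CoordinateRing} :
    f ∈ poleFiltration W n ↔ (Algebra.norm F[X] f).degree ≤ n :=
  Iff.rfl

theorem poleFiltration_mono : Monotone (poleFiltration W) :=
  fun _ _ hmn _ hf ↦ mem_poleFiltration.mp hf |>.trans (Nat.cast_le.mpr hmn)

instance : SetLike.GradedMonoid (poleFiltration W) where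
  one_mem := by simp [mem_poleFiltration]
  mul_mem m n f g hf hg := by
    rw [mem_poleFiltration, map_mul, degree_mul, Nat.cast_add]
    exact add_le_add hf hg

theorem smul_one_mem_poleFiltration {p : F[X]} {n : ℕ} :
    p • (1 : W.CoordinateRing) ∈ poleFiltration W n ↔ p ∈ degreeLT F (n / 2 + 1) := by
  simpa [mem_poleFiltration] using degree_norm_smul_basis_le_iff (W := W) p 0 n

theorem smul_mk_Y_mem_poleFiltration {q : F[X]} {n : ℕ} :
    q • CoordinateRing.mk W Y ∈ poleFiltration W n ↔ q ∈ degreeLT F ((n - 1) / 2) := by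
  simpa [mem_poleFiltration] using degree_norm_smul_basis_le_iff (W := W) 0 q n

theorem smul_mem_poleFiltration {p : F[X]} {f : W.CoordinateRing}
    {m n : ℕ} (hp : p.natDegree ≤ m) (hf : f ∈ poleFiltration W n) :
    p • f ∈ poleFiltration W (2 * m + n) := by
  rw [← smul_one_mul]
  refine SetLike.mul_mem_graded (smul_one_mem_poleFiltration.mpr (mem_degreeLT.mpr ?_)) hf
  refine (degree_le_of_natDegree_le hp).trans_lt (Nat.cast_lt.mpr ?_)
  omega

theorem mk_Y_mem_poleFiltration :
    CoordinateRing.mk W Y ∈ poleFiltration W 3 := by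
  rw [← one_smul F[X] (CoordinateRing.mk W Y), smul_mk_Y_mem_poleFiltration, mem_degreeLT]
  simp

theorem finrank_poleFiltration {n : ℕ} (hn : 0 < n) :
    Module.finrank F (poleFiltration W n) = n := by
  let e : degreeLT F (n / 2 + 1) × degreeLT F ((n - 1) / 2) →ₗ[F] W.CoordinateRing :=
    ((LinearMap.toSpanSingleton F[X] W.CoordinateRing 1).restrictScalars F ∘ₗ
      Submodule.subtype _).coprod
    ((LinearMap.toSpanSingleton F[X] _ (CoordinateRing.mk W Y)).restrictScalars F ∘ₗ
      Submodule.subtype _)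
  have he : Function.Injective e := by
    rw [injective_iff_map_eq_zero]
    rintro ⟨⟨p, hp⟩, ⟨q, hq⟩⟩ h
    obtain ⟨rfl, rfl⟩ := CoordinateRing.smul_basis_eq_zero h
    rfl
  have hrange : poleFiltration W n = LinearMap.range e := by
    ext f
    constructor
    · intro hf
      obtain ⟨p, q, rfl⟩ := CoordinateRing.exists_smul_basis_eq f
      obtain ⟨hp, hq⟩ := (degree_norm_smul_basis_le_iff p q n).mp hf
      exact ⟨(⟨p, hp⟩, ⟨q, hq⟩), rfl⟩
    · rintro ⟨⟨⟨p, hp⟩, ⟨q, hq⟩⟩, rfl⟩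
      exact (degree_norm_smul_basis_le_iff p q n).mpr ⟨hp, hq⟩
  rw [hrange, LinearMap.finrank_range_of_inj he, Module.finrank_prod,
    (degreeLTEquiv F _).finrank_eq, (degreeLTEquiv F _).finrank_eq, Module.finrank_fin_fun,
    Module.finrank_fin_fun]
  omega

open AffinePoint

variable {f : W.CoordinateRing} {n : ℕ} {s : Finset (AffinePoint W)}

theorem finrank_quotient_span_le_of_mem_poleFiltration (hf : f ≠ 0) (hn : f ∈ poleFiltration W n) :
    Module.finrank F (W.CoordinateRing ⧸ Ideal.span {f}) ≤ n := by
  rw [finrank_quotient_span_eq_natDegree_norm (CoordinateRing.basis W) hf]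
  exact natDegree_le_of_degree_le hn

theorem finite_quotient_span (hf : f ≠ 0) :
    Module.Finite F (W.CoordinateRing ⧸ Ideal.span {f}) :=
  Module.Finite.equiv (Ideal.quotientEquivDirectSum F (CoordinateRing.basis W)
    (Ideal.span_singleton_eq_bot.not.mpr hf)).symm

theorem span_le_ker_of_evalAlgHom_eq_zero (hs : ∀ P ∈ s, P.evalAlgHom f = 0) :
    ∀ P ∈ s, Ideal.span {f} ≤ RingHom.ker P.evalAlgHom :=
  fun P hP ↦ (Ideal.span_singleton_le_iff_mem _).mpr (hs P hP)

theorem card_zeros_le_of_mem_poleFiltration (hf : f ≠ 0) (hn : f ∈ poleFiltration W n)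
    (hs : ∀ P ∈ s, P.evalAlgHom f = 0) : s.card ≤ n :=
  have := finite_quotient_span hf
  (card_le_finrank_quotient evalAlgHom_injective (span_le_ker_of_evalAlgHom_eq_zero hs)).trans
    (finrank_quotient_span_le_of_mem_poleFiltration hf hn)

theorem sum_zeros_eq_zero_of_mem_poleFiltration [DecidableEq F] (hf : f ≠ 0)
    (hn : f ∈ poleFiltration W n) (hs : ∀ P ∈ s, P.evalAlgHom f = 0) (hcard : n ≤ s.card) :
    ∑ P ∈ s, (P : W.Point) = 0 := by
  have := finite_quotient_span hf
  refine sum_eq_zero_of_prod_ideal_eq_span hf ?_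
  simp only [ideal_eq_ker]
  exact prod_ker_eq_of_finrank_quotient_le evalAlgHom_injective
    (span_le_ker_of_evalAlgHom_eq_zero hs)
    ((finrank_quotient_span_le_of_mem_poleFiltration hf hn).trans hcard)

end PoleFiltration

section ArtinSchreierCurve

open WeierstrassCurve.Affine

/-- The Weierstrass curve `y² + y = x³ + c`, which is supersingular in characteristic two. -/
def artinSchreierCurve {F : Type*} [Field F] (c : F) : WeierstrassCurve.Affine F :=
  ⟨0, 0, 1, 0, c⟩

variable {F : Type*} [Field F] [CharP F 2] {c : F}

theorem negY_artinSchreierCurve (x y : F) : (artinSchreierCurve c).negY x y = y + 1 := by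
  simp only [negY, artinSchreierCurve]
  ring_nf
  reduce_mod_char!

theorem addX_artinSchreierCurve (x₁ x₂ l : F) :
    (artinSchreierCurve c).addX x₁ x₂ l = l ^ 2 + x₁ + x₂ := by
  simp only [addX, artinSchreierCurve]
  linear_combination (norm := (ring_nf; reduce_mod_char!))

theorem addY_artinSchreierCurve (x₁ x₂ y₁ l : F) :
    (artinSchreierCurve c).addY x₁ x₂ y₁ l = l ^ 3 + l * x₂ + y₁ + 1 := by
  rw [addY, negY_artinSchreierCurve, negAddY, addX_artinSchreierCurve]
  ring

theorem nonsingular_artinSchreierCurve_iff {x y : F} :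
    (artinSchreierCurve c).Nonsingular x y ↔ y ^ 2 + y = x ^ 3 + c := by
  rw [nonsingular_iff', equation_iff]
  simp [artinSchreierCurve, CharTwo.two_eq_zero]

theorem natCard_point_artinSchreierCurve [Fintype F] [DecidableEq F] :
    Nat.card (artinSchreierCurve c).Point =
      (Finset.univ.filter fun P : F × F ↦ P.2 ^ 2 + P.2 = P.1 ^ 3 + c).card + 1 := by
  have e : (artinSchreierCurve c).Point ≃ Option {P : F × F // P.2 ^ 2 + P.2 = P.1 ^ 3 + c} :=
    (nonsingularPointEquiv _).trans <|
      Equiv.optionCongr (Equiv.subtypeEquivRight fun _ ↦ nonsingular_artinSchreierCurve_iff)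
  rw [Nat.card_congr e, Nat.card_eq_fintype_card, Fintype.card_option, Fintype.card_subtype]

theorem yCoord_neg {P : (artinSchreierCurve c).Point} (hP : P ≠ 0) :
    yCoord (-P) = yCoord P + 1 := by
  rcases P with _ | ⟨x, y, h⟩
  · exact absurd rfl hP
  · exact negY_artinSchreierCurve x y

theorem neg_ne_self_of_ne_zero {P : (artinSchreierCurve c).Point} (hP : P ≠ 0) : -P ≠ P := by
  intro h
  simpa [h] using yCoord_neg hP

variable [DecidableEq F]

theorem yCoord_add_mul {P Q : (artinSchreierCurve c).Point} (hP : P ≠ 0) (hQ : Q ≠ 0)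
    (hx : xCoord P ≠ xCoord Q) :
    yCoord (P + Q) * (xCoord P - xCoord Q) ^ 3 =
      (yCoord P + yCoord Q) * (yCoord P + yCoord Q + xCoord Q ^ 2 * (xCoord P + xCoord Q)) +
        (yCoord Q + 1) * (xCoord P + xCoord Q) ^ 3 := by
  rcases P with _ | ⟨x, y, h⟩
  · exact absurd rfl hP
  rcases Q with _ | ⟨a, b, h'⟩
  · exact absurd rfl hQ
  change x ≠ a at hx
  have hslope : (y - b) / (x - a) * (x - a) = y - b := div_mul_cancel₀ _ (sub_ne_zero.mpr hx)
  rw [nonsingular_artinSchreierCurve_iff] at h h'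
  simp only [Point.add_of_X_ne hx, xCoord, yCoord, slope_of_X_ne hx, addY_artinSchreierCurve]
  set l := (y - b) / (x - a)
  linear_combination (norm := (ring_nf; reduce_mod_char!))
    ((l * (x - a)) ^ 2 + (l * (x - a)) * (y - b) + (y - b) ^ 2 + a * (x - a) ^ 2) * hslope
      + (y + b) * (h + h')

variable {ζ : F} (hζ : ζ ^ 2 + ζ + 1 = 0)

include hζ in
theorem slope_mul_left_artinSchreierCurve (x₁ x₂ y₁ y₂ : F) :
    (artinSchreierCurve c).slope (ζ * x₁) (ζ * x₂) y₁ y₂ =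
      ζ ^ 2 * (artinSchreierCurve c).slope x₁ x₂ y₁ y₂ := by
  have hζ0 : ζ ≠ 0 := by rintro rfl; simp at hζ
  by_cases hx : x₁ = x₂
  · subst hx
    by_cases hy : y₁ = y₂ + 1
    · rw [slope_of_Y_eq rfl (by rwa [negY_artinSchreierCurve]),
        slope_of_Y_eq rfl (by rwa [negY_artinSchreierCurve]), mul_zero]
    · rw [slope_of_Y_ne rfl (by rwa [negY_artinSchreierCurve]),
        slope_of_Y_ne rfl (by rwa [negY_artinSchreierCurve])]
      rw [negY_artinSchreierCurve, negY_artinSchreierCurve]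
      simp only [artinSchreierCurve]
      ring
  · rw [slope_of_X_ne hx, slope_of_X_ne (by simpa [hζ0] using hx), ← mul_sub]
    have hsub : x₁ - x₂ ≠ 0 := sub_ne_zero.mpr hx
    field_simp
    linear_combination (1 - ζ) * (y₁ - y₂) * hζ

/-- Multiplication of the first coordinate by the cube root of unity `ζ`. -/
def rotatePoint : (artinSchreierCurve c).Point → (artinSchreierCurve c).Point
  | .zero => .zero
  | .some x y h => .some (ζ * x) y (by
      rw [nonsingular_artinSchreierCurve_iff] at h ⊢
      linear_combination h - x ^ 3 * (ζ - 1) * hζ)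

theorem rotatePoint_add (P Q : (artinSchreierCurve c).Point) :
    rotatePoint hζ (P + Q) = rotatePoint hζ P + rotatePoint hζ Q := by
  have hζ0 : ζ ≠ 0 := by rintro rfl; simp at hζ
  rcases P with _ | ⟨x, y, h⟩
  · exact (congrArg _ (zero_add Q)).trans (zero_add _).symm
  rcases Q with _ | ⟨a, b, h'⟩
  · exact (congrArg _ (add_zero _)).trans (add_zero _).symm
  by_cases hxy : x = a ∧ y = b + 1
  · obtain ⟨rfl, rfl⟩ := hxy
    rw [Point.add_of_Y_eq rfl (by rw [negY_artinSchreierCurve])]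
    exact (Point.add_of_Y_eq rfl (by rw [negY_artinSchreierCurve])).symm
  · have hsum : ¬(ζ * x = ζ * a ∧ y = (artinSchreierCurve c).negY (ζ * a) b) := by
      simpa only [negY_artinSchreierCurve, mul_right_inj' hζ0] using hxy
    rw [Point.add_some (by rwa [negY_artinSchreierCurve])]
    simp only [rotatePoint]
    rw [Point.add_some hsum, Point.some.injEq, slope_mul_left_artinSchreierCurve hζ]
    simp only [addX_artinSchreierCurve, addY_artinSchreierCurve]
    set l := (artinSchreierCurve c).slope x a y b
    constructor
    · linear_combination ζ * (1 - ζ) * l ^ 2 * hζ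
    · linear_combination ((1 - ζ) * (ζ ^ 3 + 1) * l ^ 3 + (1 - ζ) * l * a) * hζ

/-- The automorphism `(x, y) ↦ (ζ x, y)` of the curve `y² + y = x³ + c`, where `ζ` is a primitive
cube root of unity. -/
def rotationHom : (artinSchreierCurve c).Point →+ (artinSchreierCurve c).Point where
  toFun := rotatePoint hζ
  map_zero' := rfl
  map_add' := rotatePoint_add hζ

@[simp]
theorem xCoord_rotationHom (P : (artinSchreierCurve c).Point) :
    xCoord (rotationHom hζ P) = ζ * xCoord P := by
  rcases P with _ | ⟨x, y, h⟩
  · exact (mul_zero ζ).symm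
  · rfl

@[simp]
theorem yCoord_rotationHom (P : (artinSchreierCurve c).Point) :
    yCoord (rotationHom hζ P) = yCoord P := by
  cases P <;> rfl

theorem add_rotationHom_add_rotationHom_eq_zero (P : (artinSchreierCurve c).Point) :
    P + rotationHom hζ P + rotationHom hζ (rotationHom hζ P) = 0 := by
  rcases P with _ | ⟨x, y, h⟩
  · exact (congrArg₂ _ (add_zero _) rfl).trans (add_zero _)
  have hζ1 : ζ ≠ 1 := by
    rintro rfl
    simp [CharTwo.add_self_eq_zero] at hζ
  have hslope : (artinSchreierCurve c).slope x (ζ * x) y y = 0 := by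
    rcases eq_or_ne x 0 with rfl | hx
    · rw [slope_of_Y_ne (mul_zero ζ).symm (by rw [negY_artinSchreierCurve]; simp)]
      simp [artinSchreierCurve]
    · rw [slope_of_X_ne (by simpa [hx, eq_comm] using hζ1), sub_self, zero_div]
  rw [add_eq_zero_iff_eq_neg]
  change Point.some x y h + Point.some (ζ * x) y _ = -Point.some (ζ * (ζ * x)) y _
  rw [Point.add_some (by rw [negY_artinSchreierCurve]; simp), Point.neg_some, Point.some.injEq,
    hslope]
  simp only [addX_artinSchreierCurve, addY_artinSchreierCurve, negY_artinSchreierCurve]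
  constructor
  · linear_combination (norm := (ring_nf; reduce_mod_char!)) x * hζ
  · ring

end ArtinSchreierCurve

section KernelTrace

open Polynomial WeierstrassCurve.Affine

open scoped Polynomial.Bivariate

variable {F : Type*} [Field F] {c : F}

/-- The numerator of the function `P ↦ yCoord (P + a)`, whose denominator is
`(xCoord P - xCoord a) ^ 3`. -/
noncomputable def translateNumerator (a : (artinSchreierCurve c).Point) :
    (artinSchreierCurve c).CoordinateRing :=
  CoordinateRing.mk _ ((Y + C (C (yCoord a))) *
    (Y + C (C (yCoord a) + C (xCoord a) ^ 2 * (X + C (xCoord a)))) +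
      C (C (yCoord a + 1) * (X + C (xCoord a)) ^ 3))

theorem translateNumerator_mem_poleFiltration (a : (artinSchreierCurve c).Point) :
    translateNumerator a ∈ poleFiltration (artinSchreierCurve c) 6 := by
  have hpoly (p : F[X]) (m : ℕ) (hp : p.natDegree ≤ m) :
      CoordinateRing.mk (artinSchreierCurve c) (C p) ∈
        poleFiltration (artinSchreierCurve c) (2 * m) := by
    have h1 : (1 : (artinSchreierCurve c).CoordinateRing) ∈ poleFiltration _ 0 :=
      SetLike.GradedOne.one_mem
    simpa [CoordinateRing.smul] using smul_mem_poleFiltration hp h1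
  have hYadd (p : F[X]) (hp : p.natDegree ≤ 1) :
      CoordinateRing.mk (artinSchreierCurve c) (Y + C p) ∈
        poleFiltration (artinSchreierCurve c) 3 := by
    rw [map_add]
    exact add_mem mk_Y_mem_poleFiltration (poleFiltration_mono (by norm_num) (hpoly p 1 hp))
  rw [translateNumerator, map_add, map_mul]
  refine add_mem (SetLike.mul_mem_graded (i := 3) (j := 3) (hYadd _ ?_) (hYadd _ ?_))
    (hpoly _ 3 ?_)
  · simp
  · compute_degree
  · compute_degree

theorem natDegree_prod_X_sub_C_pow_three (S : Finset F) :
    ((∏ ξ ∈ S, (X - C ξ)) ^ 3).natDegree = 3 * S.card := by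
  rw [natDegree_pow, natDegree_finsetProd_X_sub_C_eq_card]

variable [DecidableEq F]

/-- The trace of the `y`-coordinate along the isogeny with kernel `H`: the sum of the
`y`-coordinates of the translates of a point by `H`. -/
def kernelTrace (H : AddSubgroup (artinSchreierCurve c).Point) [Fintype H]
    (P : (artinSchreierCurve c).Point) : F :=
  ∑ a : H, yCoord (P + a.1)

/-- The `x`-coordinates of the affine points of `H`. -/
def kernelXCoords (H : AddSubgroup (artinSchreierCurve c).Point) [Fintype H] : Finset F :=
  (Finset.univ.erase (0 : H)).image fun a : H ↦ xCoord a.1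

/-- The common denominator of the functions `P ↦ yCoord (P + a)` for `a` in `H`. -/
noncomputable def traceDenominator (H : AddSubgroup (artinSchreierCurve c).Point) [Fintype H] :
    (artinSchreierCurve c).CoordinateRing :=
  (∏ ξ ∈ kernelXCoords H, (X - C ξ)) ^ 3 • 1

/-- The numerator of the trace of the `y`-coordinate over `traceDenominator H`. -/
noncomputable def traceNumerator (H : AddSubgroup (artinSchreierCurve c).Point) [Fintype H] :
    (artinSchreierCurve c).CoordinateRing :=
  (∏ ξ ∈ kernelXCoords H, (X - C ξ)) ^ 3 • CoordinateRing.mk _ Y +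
    ∑ a ∈ Finset.univ.erase (0 : H),
      (∏ ξ ∈ (kernelXCoords H).erase (xCoord a.1), (X - C ξ)) ^ 3 •
        translateNumerator a.1

section

variable (H : AddSubgroup (artinSchreierCurve c).Point) [Fintype H]

theorem traceDenominator_mem_poleFiltration :
    traceDenominator H ∈ poleFiltration _ (6 * (kernelXCoords H).card) := by
  rw [traceDenominator, smul_one_mem_poleFiltration, mem_degreeLT]
  refine degree_le_natDegree.trans_lt ?_
  rw [natDegree_prod_X_sub_C_pow_three, Nat.cast_lt]
  omega

theorem traceNumerator_sub_mem_poleFiltration :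
    traceNumerator H -
        (∏ ξ ∈ kernelXCoords H, (X - C ξ)) ^ 3 • CoordinateRing.mk (artinSchreierCurve c) Y ∈
      poleFiltration _ (6 * (kernelXCoords H).card) := by
  rw [traceNumerator, add_sub_cancel_left]
  refine sum_mem fun a ha ↦ ?_
  have hmem : xCoord a.1 ∈ kernelXCoords H :=
    Finset.mem_image_of_mem _ ha
  have hcard := Finset.card_erase_add_one hmem
  refine poleFiltration_mono ?_ (smul_mem_poleFiltration
    (natDegree_prod_X_sub_C_pow_three _).le (translateNumerator_mem_poleFiltration _))
  omega

theorem traceNumerator_mem_poleFiltration :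
    traceNumerator H ∈ poleFiltration _ (6 * (kernelXCoords H).card + 3) := by
  rw [← sub_add_cancel (traceNumerator H)
    ((∏ ξ ∈ kernelXCoords H, (X - C ξ)) ^ 3 • CoordinateRing.mk (artinSchreierCurve c) Y)]
  refine add_mem (poleFiltration_mono (by omega) (traceNumerator_sub_mem_poleFiltration H))
    (poleFiltration_mono ?_ (smul_mem_poleFiltration
      (natDegree_prod_X_sub_C_pow_three _).le mk_Y_mem_poleFiltration))
  omega

theorem traceNumerator_sub_smul_ne_zero (r : F) :
    traceNumerator H - r • traceDenominator H ≠ 0 := by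
  intro h
  have hU := Submodule.smul_mem _ r (traceDenominator_mem_poleFiltration H)
  have hY := sub_mem hU (traceNumerator_sub_mem_poleFiltration H)
  rw [← sub_eq_zero.mp h, sub_sub_cancel, smul_mk_Y_mem_poleFiltration, mem_degreeLT,
    degree_eq_natDegree (pow_ne_zero _ (Finset.prod_ne_zero_iff.mpr fun ξ _ ↦ X_sub_C_ne_zero ξ)),
    natDegree_prod_X_sub_C_pow_three, Nat.cast_lt] at hY
  omega

theorem kernelTrace_add_coe (P : (artinSchreierCurve c).Point) (b : H) :
    kernelTrace H (P + b.1) = kernelTrace H P := by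
  refine (Fintype.sum_equiv (Equiv.addLeft b) _ _ fun a ↦ ?_)
  rw [Equiv.coe_addLeft, AddSubgroup.coe_add, add_assoc]

end

variable {H : AddSubgroup (artinSchreierCurve c).Point} [Fintype H]

theorem xCoord_ne_of_notMem {P : AffinePoint (artinSchreierCurve c)} (hP : P.1 ∉ H)
    {ξ : F} (hξ : ξ ∈ kernelXCoords H) : xCoord P.1 ≠ ξ := by
  obtain ⟨a, ha, rfl⟩ := Finset.mem_image.mp hξ
  have ha0 : a.1 ≠ 0 := by simpa using ha
  intro hx
  rcases eq_or_add_eq_zero_of_xCoord_eq P.2 ha0 hx with h | h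
  · exact hP (h ▸ a.2)
  · exact hP (eq_neg_of_add_eq_zero_left h ▸ neg_mem a.2)

theorem evalAlgHom_traceDenominator_ne_zero {P : AffinePoint (artinSchreierCurve c)}
    (hP : P.1 ∉ H) : P.evalAlgHom (traceDenominator H) ≠ 0 := by
  rw [traceDenominator, AffinePoint.evalAlgHom_smul, map_one, mul_one, eval_pow, eval_prod]
  refine pow_ne_zero _ (Finset.prod_ne_zero_iff.mpr fun ξ hξ ↦ ?_)
  simpa [sub_eq_zero] using xCoord_ne_of_notMem hP hξ

theorem kernelTrace_eq_of_mk_eq {P Q : (artinSchreierCurve c).Point}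
    (h : (P : (artinSchreierCurve c).Point ⧸ H) = Q) : kernelTrace H P = kernelTrace H Q := by
  rw [← kernelTrace_add_coe H P ⟨-P + Q, QuotientAddGroup.eq.mp h⟩, add_neg_cancel_left]

variable [CharP F 2]

theorem evalAlgHom_translateNumerator {P : AffinePoint (artinSchreierCurve c)}
    {a : (artinSchreierCurve c).Point} (ha : a ≠ 0) (hx : xCoord P.1 ≠ xCoord a) :
    P.evalAlgHom (translateNumerator a) = yCoord (P.1 + a) * (xCoord P.1 - xCoord a) ^ 3 := by
  rw [translateNumerator, AffinePoint.evalAlgHom_mk, yCoord_add_mul P.2 ha hx]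
  simp only [evalEval, eval_add, eval_mul, eval_pow, eval_X, eval_C]
  ring

theorem evalAlgHom_traceNumerator {P : AffinePoint (artinSchreierCurve c)} (hP : P.1 ∉ H) :
    P.evalAlgHom (traceNumerator H) = P.evalAlgHom (traceDenominator H) * kernelTrace H P.1 := by
  rw [traceDenominator, AffinePoint.evalAlgHom_smul, map_one, mul_one, kernelTrace,
    ← Finset.add_sum_erase _ _ (Finset.mem_univ (0 : H)), AddSubgroup.coe_zero, add_zero, mul_add,
    traceNumerator, map_add, map_sum, AffinePoint.evalAlgHom_smul, AffinePoint.evalAlgHom_mk,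
    evalEval, eval_X, eval_C, Finset.mul_sum]
  congr 1
  refine Finset.sum_congr rfl fun a ha ↦ ?_
  have ha0 : a.1 ≠ 0 := by simpa using ha
  have hmem : xCoord a.1 ∈ kernelXCoords H :=
    Finset.mem_image_of_mem _ ha
  rw [AffinePoint.evalAlgHom_smul,
    evalAlgHom_translateNumerator ha0 (xCoord_ne_of_notMem hP hmem),
    ← Finset.mul_prod_erase _ (fun ξ ↦ X - C ξ) hmem]
  simp only [eval_pow, eval_mul, eval_sub, eval_X, eval_C]
  ring

theorem two_mul_card_kernelXCoords_lt : 2 * (kernelXCoords H).card < Fintype.card H := by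
  rw [← Finset.card_univ, ← Finset.card_erase_add_one (Finset.mem_univ (0 : H)), Nat.lt_succ_iff]
  refine Finset.mul_card_image_le_card _ _ fun ξ hξ ↦ ?_
  obtain ⟨a, ha, rfl⟩ := Finset.mem_image.mp hξ
  have ha0 : a ≠ 0 := Finset.ne_of_mem_erase ha
  have hneg : -a ≠ a := fun h ↦
    neg_ne_self_of_ne_zero (by simpa using ha0) (congrArg Subtype.val h)
  rw [← Finset.card_pair hneg]
  refine Finset.card_le_card ?_
  rw [Finset.insert_subset_iff, Finset.singleton_subset_iff]
  constructor <;> simp [ha0, xCoord_neg]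

theorem traceDenominator_mem_poleFiltration_three_mul :
    traceDenominator H ∈ poleFiltration _ (3 * Fintype.card H - 3) :=
  poleFiltration_mono (by have := two_mul_card_kernelXCoords_lt (H := H); omega)
    (traceDenominator_mem_poleFiltration H)

theorem traceNumerator_mem_poleFiltration_three_mul :
    traceNumerator H ∈ poleFiltration _ (3 * Fintype.card H) :=
  poleFiltration_mono (by have := two_mul_card_kernelXCoords_lt (H := H); omega)
    (traceNumerator_mem_poleFiltration H)

theorem traceNumerator_sub_smul_mem_poleFiltration (τ : F) :
    traceNumerator H - τ • traceDenominator H ∈ poleFiltration _ (3 * Fintype.card H) :=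
  sub_mem (traceNumerator_mem_poleFiltration_three_mul) <| Submodule.smul_mem _ _ <|
    poleFiltration_mono (Nat.sub_le _ _) traceDenominator_mem_poleFiltration_three_mul

theorem kernelTrace_rotationHom {ζ : F} (hζ : ζ ^ 2 + ζ + 1 = 0)
    (hH : H ≤ H.comap (rotationHom hζ)) (P : (artinSchreierCurve c).Point) :
    kernelTrace H (rotationHom hζ P) = kernelTrace H P := by
  have hω := map_map_map_of_add_map_add_map_map_eq_zero
    (add_rotationHom_add_rotationHom_eq_zero (c := c) hζ)
  let e : H ≃ H :=
    { toFun := fun a ↦ ⟨rotationHom hζ a, hH a.2⟩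
      invFun := fun a ↦ ⟨rotationHom hζ (rotationHom hζ a), hH (hH a.2)⟩
      left_inv := fun a ↦ Subtype.ext (hω a)
      right_inv := fun a ↦ Subtype.ext (hω a) }
  refine (Fintype.sum_equiv e _ _ fun a ↦ ?_).symm
  change yCoord (P + a.1) =
    yCoord (rotationHom hζ P + rotationHom hζ a)
  rw [← map_add, yCoord_rotationHom]

theorem odd_card_addSubgroup : Odd (Fintype.card H) := by
  rw [← Nat.not_even_iff_odd, even_iff_two_dvd]
  intro h2
  obtain ⟨a, ha⟩ := exists_prime_addOrderOf_dvd_card 2 h2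
  have ha0 : a ≠ 0 := by
    rintro rfl
    simp at ha
  refine neg_ne_self_of_ne_zero (P := a.1) (by simpa using ha0) ?_
  rw [neg_eq_iff_add_eq_zero, ← AddSubgroup.coe_add, ← two_nsmul, ← ha, addOrderOf_nsmul_eq_zero,
    AddSubgroup.coe_zero]

theorem kernelTrace_neg {P : (artinSchreierCurve c).Point} (hP : P ∉ H) :
    kernelTrace H (-P) = kernelTrace H P + 1 := by
  have hsum (a : H) : P + a.1 ≠ 0 := fun h ↦
    hP (eq_neg_of_add_eq_zero_left h ▸ neg_mem a.2)
  have hterm (a : H) : yCoord (-P + (-a).1) =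
      yCoord (P + a.1) + 1 := by
    rw [← yCoord_neg (hsum a), AddSubgroup.coe_neg, neg_add]
  rw [kernelTrace, ← Equiv.sum_comp (Equiv.neg H)]
  simp only [Equiv.neg_apply, hterm, Finset.sum_add_distrib, Finset.sum_const, Finset.card_univ,
    nsmul_one, natCast_eq_one_of_odd_of_two_eq_zero odd_card_addSubgroup CharTwo.two_eq_zero,
    kernelTrace]

end KernelTrace

section TraceFibers

open WeierstrassCurve.Affine

variable {F : Type*} [Field F] [CharP F 2] [DecidableEq F] {c ζ : F} (hζ : ζ ^ 2 + ζ + 1 = 0)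
  {H : AddSubgroup (artinSchreierCurve c).Point}

theorem natCard_ker_id_sub_rotationHom_le :
    Nat.card (AddMonoidHom.id (artinSchreierCurve c).Point - rotationHom hζ).ker ≤ 3 := by
  set K := (AddMonoidHom.id (artinSchreierCurve c).Point - rotationHom hζ).ker
  have hζ1 : ζ ≠ 1 := by
    rintro rfl
    simp [CharTwo.add_self_eq_zero] at hζ
  have hx {P : (artinSchreierCurve c).Point} (hP : P ∈ K) : xCoord P = 0 := by
    have hfix : xCoord P = ζ * xCoord P := by
      rw [← xCoord_rotationHom hζ, ← sub_eq_zero.mp hP, AddMonoidHom.id_apply]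
    by_contra h0
    exact hζ1 ((right_eq_mul₀ h0).mp hfix)
  rcases K.bot_or_exists_ne_zero with hK | ⟨Q, hQ, hQ0⟩
  · simp [hK]
  have hsub : (K : Set (artinSchreierCurve c).Point) ⊆
      ({0, Q, -Q} : Finset (artinSchreierCurve c).Point) := by
    intro P hP
    rcases eq_or_ne P 0 with rfl | hP0
    · simp
    · have := eq_or_add_eq_zero_of_xCoord_eq hP0 hQ0 ((hx hP).trans (hx hQ).symm)
      simpa [hP0, add_eq_zero_iff_eq_neg] using this
  exact (Nat.card_mono (Finset.finite_toSet _) hsub).trans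
    ((Nat.card_eq_card_toFinset _).trans_le (by simpa using Finset.card_le_three))

variable [Finite F]

noncomputable instance AffinePoint.fintype {W : WeierstrassCurve.Affine F} :
    Fintype (AffinePoint W) :=
  Fintype.ofFinite _

open Classical in
/-- The affine points whose class modulo `H` is not fixed by the rotation. -/
noncomputable def nonfixedPoints (H : AddSubgroup (artinSchreierCurve c).Point) :
    Finset (AffinePoint (artinSchreierCurve c)) :=
  {P | P.1 - rotationHom hζ P.1 ∉ H}

variable {hζ}

theorem mem_nonfixedPoints {P : AffinePoint (artinSchreierCurve c)} :
    P ∈ nonfixedPoints hζ H ↔ P.1 - rotationHom hζ P.1 ∉ H := by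
  simp [nonfixedPoints]

theorem notMem_of_mem_nonfixedPoints (hH : H ≤ H.comap (rotationHom hζ))
    {P : AffinePoint (artinSchreierCurve c)}
    (hP : P ∈ nonfixedPoints hζ H) : P.1 ∉ H :=
  fun h ↦ mem_nonfixedPoints.mp hP (sub_mem h (hH h))

theorem mem_nonfixedPoints_iff_map_ne (hH : H ≤ H.comap (rotationHom hζ))
    {P : AffinePoint (artinSchreierCurve c)} :
    P ∈ nonfixedPoints hζ H ↔ QuotientAddGroup.map H H (rotationHom hζ) hH P.1 ≠ P.1 := by
  rw [mem_nonfixedPoints, sub_eq_neg_add, Ne, QuotientAddGroup.map_mk, QuotientAddGroup.eq]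

variable (hζ H) [Fintype H]

/-- The nonfixed points at which the trace along `H` takes the value `τ`. -/
noncomputable def traceFiber (τ : F) : Finset (AffinePoint (artinSchreierCurve c)) :=
  {P ∈ nonfixedPoints hζ H | kernelTrace H P.1 = τ}

variable {hζ H}

theorem mem_traceFiber {τ : F} {P : AffinePoint (artinSchreierCurve c)} :
    P ∈ traceFiber hζ H τ ↔ P ∈ nonfixedPoints hζ H ∧ kernelTrace H P.1 = τ :=
  Finset.mem_filter

variable (hH : H ≤ H.comap (rotationHom hζ))
include hH

theorem evalAlgHom_traceNumerator_sub_smul {τ : F} {P : AffinePoint (artinSchreierCurve c)}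
    (hP : P ∈ traceFiber hζ H τ) :
    P.evalAlgHom (traceNumerator H - τ • traceDenominator H) = 0 := by
  obtain ⟨hP', rfl⟩ := mem_traceFiber.mp hP
  rw [map_sub, map_smul, evalAlgHom_traceNumerator (notMem_of_mem_nonfixedPoints hH hP'),
    smul_eq_mul, mul_comm, sub_self]

theorem card_traceFiber_le (τ : F) : (traceFiber hζ H τ).card ≤ 3 * Fintype.card H :=
  card_zeros_le_of_mem_poleFiltration (traceNumerator_sub_smul_ne_zero H τ)
    (traceNumerator_sub_smul_mem_poleFiltration τ)
    fun _ hP ↦ evalAlgHom_traceNumerator_sub_smul hH hP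

theorem mem_image_traceFiber_of_mk_mem_orbit {P : AffinePoint (artinSchreierCurve c)}
    (hP : P ∈ nonfixedPoints hζ H) {Q : (artinSchreierCurve c).Point}
    (hQ : (Q : (artinSchreierCurve c).Point ⧸ H) ∈
      ({↑P.1, ↑(rotationHom hζ P.1), ↑(rotationHom hζ (rotationHom hζ P.1))} : Set _)) :
    Q ∈ Subtype.val '' (traceFiber hζ H (kernelTrace H P.1) : Set (AffinePoint _)) := by
  set ω := QuotientAddGroup.map H H (rotationHom hζ) hH
  have hinj : Function.Injective ω := Function.LeftInverse.injective (g := ω ∘ ω) <|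
    map_map_map_of_add_map_add_map_map_eq_zero <|
      quotient_add_map_add_map_map_eq_zero (add_rotationHom_add_rotationHom_eq_zero hζ) hH
  have hP' : ω P.1 ≠ P.1 := (mem_nonfixedPoints_iff_map_ne hH).mp hP
  obtain ⟨hne, htr⟩ : ω Q ≠ Q ∧ kernelTrace H Q = kernelTrace H P.1 := by
    rcases hQ with hQ | hQ | hQ <;> rw [kernelTrace_eq_of_mk_eq hQ, hQ]
    · exact ⟨hP', rfl⟩
    · exact ⟨hinj.ne hP', kernelTrace_rotationHom hζ hH _⟩
    · exact ⟨hinj.ne (hinj.ne hP'), by simp only [kernelTrace_rotationHom hζ hH]⟩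
  have hQ0 : Q ≠ 0 := by
    rintro rfl
    exact hne (map_zero ω)
  exact ⟨⟨Q, hQ0⟩, mem_traceFiber.mpr ⟨(mem_nonfixedPoints_iff_map_ne hH).mpr hne, htr⟩, rfl⟩

theorem le_card_traceFiber {P : AffinePoint (artinSchreierCurve c)}
    (hP : P ∈ nonfixedPoints hζ H) :
    3 * Fintype.card H ≤ (traceFiber hζ H (kernelTrace H P.1)).card := by
  classical
  let S : Finset ((artinSchreierCurve c).Point ⧸ H) :=
    {↑P.1, ↑(rotationHom hζ P.1), ↑(rotationHom hζ (rotationHom hζ P.1))}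
  have hS : S.card = 3 := card_orbit_eq_three
    (quotient_add_map_add_map_map_eq_zero (add_rotationHom_add_rotationHom_eq_zero hζ) hH)
    ((mem_nonfixedPoints_iff_map_ne hH).mp hP)
  have hpre : QuotientAddGroup.mk ⁻¹' (S : Set ((artinSchreierCurve c).Point ⧸ H)) ⊆
      Subtype.val '' (traceFiber hζ H (kernelTrace H P.1) : Set (AffinePoint _)) :=
    fun Q hQ ↦ mem_image_traceFiber_of_mk_mem_orbit hH hP (by simpa [S] using hQ)
  calc 3 * Fintype.card H
      = (QuotientAddGroup.mk ⁻¹' (S : Set ((artinSchreierCurve c).Point ⧸ H))).ncard := by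
        rw [← Nat.card_coe_set_eq, natCard_preimage_quotientMk, Nat.card_eq_fintype_card,
          Nat.card_eq_card_toFinset, Finset.toFinset_coe, hS, mul_comm]
    _ ≤ _ := (Set.ncard_le_ncard hpre).trans
        ((Set.ncard_image_le).trans_eq (Set.ncard_coe_finset _))

theorem sum_traceFiber_eq_zero {P : AffinePoint (artinSchreierCurve c)}
    (hP : P ∈ nonfixedPoints hζ H) :
    ∑ Q ∈ traceFiber hζ H (kernelTrace H P.1), Q.1 = 0 :=
  sum_zeros_eq_zero_of_mem_poleFiltration (traceNumerator_sub_smul_ne_zero H _)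
    (traceNumerator_sub_smul_mem_poleFiltration _)
    (fun _ hQ ↦ evalAlgHom_traceNumerator_sub_smul hH hQ) (le_card_traceFiber hH hP)

theorem add_ne_zero_of_mem_traceFiber {τ : F} {P Q : AffinePoint (artinSchreierCurve c)}
    (hP : P ∈ traceFiber hζ H τ) (hQ : Q ∈ traceFiber hζ H τ) : P.1 + Q.1 ≠ 0 := by
  obtain ⟨hP, hPτ⟩ := mem_traceFiber.mp hP
  intro h
  have hneg := kernelTrace_neg (notMem_of_mem_nonfixedPoints hH hP)
  rw [neg_eq_of_add_eq_zero_right h, hPτ, (mem_traceFiber.mp hQ).2] at hneg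
  simp at hneg

theorem injOn_xCoord_traceFiber (τ : F) :
    Set.InjOn (fun P : AffinePoint (artinSchreierCurve c) ↦ xCoord P.1) (traceFiber hζ H τ) :=
  fun P hP Q hQ hx ↦ Subtype.ext <| (eq_or_add_eq_zero_of_xCoord_eq P.2 Q.2 hx).resolve_right
    (add_ne_zero_of_mem_traceFiber hH hP hQ)

theorem natCard_point_le_mul_card_image_kernelTrace :
    Nat.card (artinSchreierCurve c).Point ≤ 3 * Fintype.card H +
      3 * Fintype.card H * ((nonfixedPoints hζ H).image fun P ↦ kernelTrace H P.1).card := by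
  set K := H.comap (AddMonoidHom.id _ - rotationHom hζ)
  have hK : Nat.card K ≤ 3 * Fintype.card H := by
    rw [← Nat.card_eq_fintype_card]
    exact (natCard_comap_le _ H).trans
      (Nat.mul_le_mul_right _ (natCard_ker_id_sub_rotationHom_le hζ))
  have hcompl : (K : Set (artinSchreierCurve c).Point)ᶜ ⊆
      Subtype.val '' (nonfixedPoints hζ H : Set (AffinePoint (artinSchreierCurve c))) :=
    fun P hP ↦ ⟨⟨P, fun h ↦ hP (h ▸ zero_mem K)⟩, mem_nonfixedPoints.mpr hP, rfl⟩
  have hcard : (K : Set (artinSchreierCurve c).Point)ᶜ.ncard ≤ (nonfixedPoints hζ H).card :=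
    (Set.ncard_le_ncard hcompl).trans ((Set.ncard_image_le).trans_eq (Set.ncard_coe_finset _))
  have hfib : (nonfixedPoints hζ H).card ≤
      3 * Fintype.card H * ((nonfixedPoints hζ H).image fun P ↦ kernelTrace H P.1).card :=
    Finset.card_le_mul_card_image _ _ fun τ _ ↦ card_traceFiber_le hH τ
  rw [← Set.ncard_add_ncard_compl (K : Set (artinSchreierCurve c).Point)]
  exact add_le_add hK (hcard.trans hfib)

end TraceFibers

section TraceFiberCodes

open Polynomial Finset WeierstrassCurve.Affine

variable {F : Type*} [Field F] [CharP F 2] [DecidableEq F] [Finite F] {c ζ : F}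
  {hζ : ζ ^ 2 + ζ + 1 = 0} {H : AddSubgroup (artinSchreierCurve c).Point} [Fintype H]

variable (hζ H) in
/-- The evaluation points of the codes: the union of the trace fibres over `T`. -/
noncomputable def traceFibersOver (T : Finset F) : Finset (AffinePoint (artinSchreierCurve c)) :=
  {P ∈ nonfixedPoints hζ H | kernelTrace H P.1 ∈ T}

theorem mem_traceFibersOver {T : Finset F} {P : AffinePoint (artinSchreierCurve c)} :
    P ∈ traceFibersOver hζ H T ↔ P ∈ nonfixedPoints hζ H ∧ kernelTrace H P.1 ∈ T :=
  mem_filter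

theorem image_kernelTrace_traceFibersOver {T : Finset F}
    (hT : T ⊆ (nonfixedPoints hζ H).image fun P ↦ kernelTrace H P.1) :
    univ.image (fun P : traceFibersOver hζ H T ↦ kernelTrace H P.1.1) = T := by
  refine (image_subset_iff.mpr fun P _ ↦ (mem_traceFibersOver.mp P.2).2).antisymm fun τ hτ ↦ ?_
  obtain ⟨P, hP, rfl⟩ := mem_image.mp (hT hτ)
  exact mem_image.mpr ⟨⟨P, mem_traceFibersOver.mpr ⟨hP, hτ⟩⟩, mem_univ _, rfl⟩

theorem card_filter_kernelTrace_eq {T : Finset F} {τ : F} (hτ : τ ∈ T)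
    (p : AffinePoint (artinSchreierCurve c) → Prop) [DecidablePred p] :
    #{P : traceFibersOver hζ H T | kernelTrace H P.1.1 = τ ∧ p P} =
      #{P ∈ traceFiber hζ H τ | p P} := by
  rw [← card_map (Function.Embedding.subtype _)]
  congr 1
  ext P
  constructor
  · intro hP
    obtain ⟨Q, hQ, rfl⟩ := mem_map.mp hP
    have hQX := mem_traceFibersOver.mp Q.2
    simp_all [mem_traceFiber]
  · intro hP
    obtain ⟨⟨hP, hPτ⟩, hpP⟩ := And.imp_left mem_traceFiber.mp (mem_filter.mp hP)
    exact mem_map.mpr ⟨⟨P, mem_traceFibersOver.mpr ⟨hP, hPτ ▸ hτ⟩⟩, by simp [hPτ, hpP], rfl⟩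

variable (hH : H ≤ H.comap (rotationHom hζ))
include hH

-- With as many zeros as its pole order, `f` would have zeros summing to `0`; the remaining two
-- points of the fibre, whose points also sum to `0`, would then be opposite.
theorem card_zeros_traceFiber_lt {P : AffinePoint (artinSchreierCurve c)}
    (hP : P ∈ nonfixedPoints hζ H) {f : (artinSchreierCurve c).CoordinateRing} (hf0 : f ≠ 0)
    (hf : f ∈ poleFiltration _ (3 * Fintype.card H - 2)) :
    #{Q ∈ traceFiber hζ H (kernelTrace H P.1) | Q.evalAlgHom f = 0} < 3 * Fintype.card H - 2 := by
  set S := traceFiber hζ H (kernelTrace H P.1)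
  set Z := {Q ∈ S | Q.evalAlgHom f = 0}
  by_contra! hcard
  have hzero : ∀ Q ∈ Z, Q.evalAlgHom f = 0 := fun Q hQ ↦ (mem_filter.mp hQ).2
  have hZ : ∑ Q ∈ Z, Q.1 = 0 := sum_zeros_eq_zero_of_mem_poleFiltration hf0 hf hzero hcard
  have hcompl : #(S \ Z) = 2 := by
    have hS : #S = 3 * Fintype.card H :=
      (card_traceFiber_le hH _).antisymm (le_card_traceFiber hH hP)
    have := card_sdiff_add_card_eq_card (filter_subset _ _ : Z ⊆ S)
    have := card_zeros_le_of_mem_poleFiltration hf0 hf hzero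
    have : 0 < Fintype.card H := Fintype.card_pos
    lia
  obtain ⟨Q, R, hQR, hpair⟩ := card_eq_two.mp hcompl
  have hmem : ∀ Q' ∈ ({Q, R} : Finset _), Q' ∈ S := hpair ▸ fun Q' hQ' ↦ sdiff_subset hQ'
  refine add_ne_zero_of_mem_traceFiber hH (hmem Q (by simp)) (hmem R (by simp)) ?_
  have hsum : ∑ Q ∈ S, Q.1 = 0 := sum_traceFiber_eq_zero hH hP
  rwa [← sum_sdiff (filter_subset _ _ : Z ⊆ S), hZ, add_zero, hpair, sum_pair hQR] at hsum

theorem card_roots_traceFiber_lt (τ : F) {n : ℕ} {p : F[X]} (hp0 : p ≠ 0) (hp : p ∈ degreeLT F n) :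
    #{Q ∈ traceFiber hζ H τ | p.eval (xCoord Q.1) = 0} < n := by
  have hinj := (injOn_xCoord_traceFiber (hζ := hζ) hH τ).mono (filter_subset
    (fun Q ↦ p.eval (xCoord Q.1) = 0) _)
  rw [← card_image_of_injOn hinj]
  by_contra! hcard
  refine hp0 (eq_zero_of_degree_lt_of_eval_finset_eq_zero _
    ((mem_degreeLT.mp hp).trans_le (Nat.cast_le.mpr hcard)) fun x hx ↦ ?_)
  obtain ⟨Q, hQ, rfl⟩ := mem_image.mp hx
  exact (mem_filter.mp hQ).2

variable {m t : ℕ} (ht : t < m)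
  (hm : m ≤ #((nonfixedPoints hζ H).image fun P ↦ kernelTrace H P.1))
include ht hm

theorem existsOptimalLRC_of_traceFiber {V : Type*} [AddCommGroup V] [Module F V] {r δ : ℕ}
    (φ : V →ₗ[F] AffinePoint (artinSchreierCurve c) → F) {e : V}
    (hφL : ∀ v, ∃ f ∈ poleFiltration (artinSchreierCurve c) (3 * Fintype.card H),
      ∀ P : AffinePoint (artinSchreierCurve c), P.1 ∉ H →
        P.evalAlgHom f = P.evalAlgHom (traceDenominator H) * φ v P)
    (he : ∀ P : AffinePoint (artinSchreierCurve c), P.1 ∉ H → φ e P = 1)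
    (hV : Module.finrank F V = r) (hr : r ≤ 3 * Fintype.card H)
    (hδ : 3 * Fintype.card H + 1 = r + δ)
    (hφ : ∀ P ∈ nonfixedPoints hζ H, ∀ v ≠ 0,
      #{Q ∈ traceFiber hζ H (kernelTrace H P.1) | φ v Q = 0} < r) :
    ExistsOptimalLRC F (3 * Fintype.card H * m) (r * t + 1) (3 * Fintype.card H * (m - t)) r δ := by
  obtain ⟨T, hT, hTm⟩ := exists_subset_card_eq hm
  have hz := image_kernelTrace_traceFibersOver hT
  have hXH (P : traceFibersOver hζ H T) : P.1.1 ∉ H :=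
    notMem_of_mem_nonfixedPoints hH (mem_traceFibersOver.mp P.2).1
  refine existsOptimalLRC_of_filtration (X := traceFibersOver hζ H T)
    (z := fun P ↦ kernelTrace H P.1.1) (e := e)
    (φ := LinearMap.funLeft F F (fun P : traceFibersOver hζ H T ↦ P.1) ∘ₗ φ)
    (L := poleFiltration _) (ev := AlgHom.pi fun P ↦ P.1.evalAlgHom)
    (Z := traceNumerator H) (U := traceDenominator H)
    traceNumerator_mem_poleFiltration_three_mul
    (poleFiltration_mono (Nat.sub_le _ _) traceDenominator_mem_poleFiltration_three_mul)
    (funext fun P ↦ evalAlgHom_traceNumerator (hXH P))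
    (fun P ↦ evalAlgHom_traceDenominator_ne_zero (hXH P)) (fun v ↦ ?_) (fun n f hf hf0 ↦ ?_)
    (funext fun P ↦ he P.1 (hXH P)) hV hr hδ ?_ ?_ (by rw [hz, hTm]) ht
  · obtain ⟨f, hf, hfv⟩ := hφL v
    exact ⟨f, hf, funext fun P ↦ hfv P.1 (hXH P)⟩
  · rw [← card_map (Function.Embedding.subtype _)]
    refine card_zeros_le_of_mem_poleFiltration (f := f) ?_ hf ?_
    · rintro rfl
      exact hf0 (map_zero _)
    · simp +contextual
  all_goals
    rw [hz]
    intro τ hτ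
    obtain ⟨P, hP, rfl⟩ := mem_image.mp (hT hτ)
  · have := card_filter_kernelTrace_eq (hζ := hζ) (H := H) hτ fun _ ↦ True
    simp only [and_true, filter_true] at this
    rw [this]
    exact (card_traceFiber_le hH _).antisymm (le_card_traceFiber hH hP)
  · intro v hv
    exact (card_filter_kernelTrace_eq hτ fun P ↦ φ v P = 0).trans_lt (hφ P hP v hv)

theorem existsOptimalLRC_three_mul_sub_two :
    ExistsOptimalLRC F (3 * Fintype.card H * m) ((3 * Fintype.card H - 2) * t + 1)
      (3 * Fintype.card H * (m - t)) (3 * Fintype.card H - 2) 3 := by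
  set n := Fintype.card H
  have hn : 0 < n := Fintype.card_pos
  let φ : poleFiltration (artinSchreierCurve c) (3 * n - 2) →ₗ[F] AffinePoint _ → F :=
    LinearMap.pi fun P ↦ (P.evalAlgHom (traceDenominator H))⁻¹ •
      P.evalAlgHom.toLinearMap ∘ₗ Submodule.subtype _
  have hφ (f) (P : AffinePoint (artinSchreierCurve c)) :
      φ f P = (P.evalAlgHom (traceDenominator H))⁻¹ * P.evalAlgHom f.1 := rfl
  refine existsOptimalLRC_of_traceFiber hH ht hm φ
    (e := ⟨traceDenominator H, poleFiltration_mono (by lia)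
      traceDenominator_mem_poleFiltration_three_mul⟩)
    (fun f ↦ ⟨f.1, poleFiltration_mono (Nat.sub_le _ _) f.2, fun P hP ↦ ?_⟩)
    (fun P hP ↦ inv_mul_cancel₀ (evalAlgHom_traceDenominator_ne_zero hP))
    (finrank_poleFiltration (by lia)) (Nat.sub_le _ _) (by lia) fun P hP f hf ↦ ?_
  · rw [hφ, mul_inv_cancel_left₀ (evalAlgHom_traceDenominator_ne_zero hP)]
  · refine (congr_arg card (filter_congr fun Q hQ ↦ ?_)).trans_lt
      (card_zeros_traceFiber_lt hH hP (by simpa using hf) f.2)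
    have hQ' := notMem_of_mem_nonfixedPoints hH (mem_traceFiber.mp hQ).1
    simp [hφ, evalAlgHom_traceDenominator_ne_zero hQ']

theorem existsOptimalLRC_two :
    ExistsOptimalLRC F (3 * Fintype.card H * m) (2 * t + 1)
      (3 * Fintype.card H * (m - t)) 2 (3 * Fintype.card H - 1) := by
  set n := Fintype.card H
  have hn : 0 < n := Fintype.card_pos
  let φ : degreeLT F 2 →ₗ[F] AffinePoint (artinSchreierCurve c) → F :=
    LinearMap.pi fun P ↦ leval (xCoord P.1) ∘ₗ Submodule.subtype _
  have h1 : (1 : F[X]) ∈ degreeLT F 2 := by simp [mem_degreeLT]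
  refine existsOptimalLRC_of_traceFiber hH ht hm φ (e := ⟨1, h1⟩)
    (fun p ↦ ⟨p.1 • traceDenominator H, ?_, fun P _ ↦ ?_⟩)
    (fun P _ ↦ eval_one) ?_ (by lia) (by lia) fun P _ p hp ↦ ?_
  · have hdeg : p.1.natDegree ≤ 1 :=
      natDegree_le_of_degree_le (Order.lt_succ_iff.mp (mem_degreeLT.mp p.2))
    exact poleFiltration_mono (by lia)
      (smul_mem_poleFiltration hdeg traceDenominator_mem_poleFiltration_three_mul)
  · rw [AffinePoint.evalAlgHom_smul, mul_comm]
    rfl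
  · rw [(degreeLTEquiv F 2).finrank_eq, Module.finrank_fin_fun]
  · exact card_roots_traceFiber_lt hH _ (by simpa using hp) p.2

end TraceFiberCodes

theorem charP_two_of_card_eq_two_pow {F : Type*} [Field F] [Fintype F] {n : ℕ}
    (hF : Fintype.card F = 2 ^ n) : CharP F 2 := by
  obtain ⟨p, hp⟩ := CharP.exists F
  obtain ⟨k, hpp, hk⟩ := FiniteField.card F p
  have hdvd : p ∣ 2 ^ n := hF ▸ hk ▸ dvd_pow_self p k.ne_zero
  rwa [(Nat.prime_dvd_prime_iff_eq hpp Nat.prime_two).mp (hpp.dvd_of_dvd_pow hdvd)] at hp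

theorem le_of_le_ceil_div_of_le_add_mul {a b m k : ℕ} (hb : 0 < b) (ha : a ≤ b + b * k)
    (hm : (m : ℤ) ≤ ⌈((a : ℚ) - b) / b⌉) : m ≤ k := by
  suffices ((a : ℚ) - b) / b ≤ (k : ℤ) from Nat.cast_le.mp (hm.trans (Int.ceil_le.mpr this))
  rw [div_le_iff₀ (Nat.cast_pos.mpr hb), sub_le_iff_le_add', Int.cast_natCast, mul_comm]
  exact_mod_cast ha

/-- For `q = 2^(2s)`, `h₀` a positive divisor of `2^s + 1`, and
`h = h₀²`, for all `1 ≤ t < m ≤ ⌈(q + 2^(s+1) + 1 - 3h)/(3h)⌉`, there exist an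
optimal `(3h-2, 3)`-LRC with parameters `[3hm, (3h-2)t + 1, 3h(m-t)]_q` and an
optimal `(2, 3h-1)`-LRC with parameters `[3hm, 2t + 1, 3h(m-t)]_q`. -/
theorem stmt_3 (s : ℕ) (hs : 0 < s) (q : ℕ) (hq : q = 2 ^ (2 * s))
    (h₀ : ℕ) (hh₀ : 0 < h₀) (hdvd : h₀ ∣ 2 ^ s + 1) (h : ℕ) (hh : h = h₀ ^ 2)
    (t m : ℕ) (ht : 1 ≤ t) (htm : t < m)
    (hm : (m : ℤ) ≤ ⌈((q : ℚ) + 2 ^ (s + 1) + 1 - 3 * (h : ℚ)) / (3 * (h : ℚ))⌉)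
    (F : Type*) [Field F] [Fintype F] [DecidableEq F] (hF : Fintype.card F = q) :
    ExistsOptimalLRC F (3 * h * m) ((3 * h - 2) * t + 1) (3 * h * (m - t)) (3 * h - 2) 3 ∧
    ExistsOptimalLRC F (3 * h * m) (2 * t + 1) (3 * h * (m - t)) 2 (3 * h - 1) := by
  have hF' : Fintype.card F = 2 ^ (2 * s) := hF.trans hq
  have := charP_two_of_card_eq_two_pow hF'
  obtain ⟨ζ, hζ⟩ := exists_sq_add_self_add_one_eq_zero hF'
  obtain ⟨c, hc⟩ := exists_card_filter_sq_add_self_eq_cube_add hF'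
  have hcard : Nat.card (artinSchreierCurve c).Point = (2 ^ s + 1) ^ 2 := by
    rw [natCard_point_artinSchreierCurve, hc]
  obtain ⟨H, hH, hHcard⟩ := exists_stable_natCard_sq
    (add_rotationHom_add_rotationHom_eq_zero (c := c) hζ) (hcard ▸ pow_dvd_pow_of_dvd hdvd 2)
  have : Fintype H := Fintype.ofFinite H
  obtain rfl : Fintype.card H = h := by rw [hh, ← hHcard, Nat.card_eq_fintype_card]
  have hle : m ≤ ((nonfixedPoints hζ H).image fun P ↦ kernelTrace H P.1).card := by
    refine le_of_le_ceil_div_of_le_add_mul (Nat.mul_pos three_pos Fintype.card_pos)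
      (hcard ▸ natCard_point_le_mul_card_image_kernelTrace hH) ?_
    convert hm using 4
    · push_cast [hq]
      ring
    all_goals push_cast; rfl
  exact ⟨existsOptimalLRC_three_mul_sub_two hH htm hle, existsOptimalLRC_two hH htm hle⟩
end
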